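/- arXiv:2306.09146 — 2 statements merged into one kernel-verified Lean document; each statement's English description precedes it below -/
import Mathlib

section
/- Let G be a basic CUH graph that omits D and in which at least one color class does not form an independent set, and assume ω_R ≥ 2 and α_B = ℵ₀. Let J ⊆ R be a finite independent set of red vertices, let v be a blue vertex, and let S_v be the set of all blue vertices b whose set of neighbors in J equals the set of neighbors of v in J. Then S_v contains an infinite independent set. -/
open SimpleGraph

/-- A partial colored isomorphism of the 2-colored graph `(G, red)`, defined on the set `S`:
an injective map preserving colors and adjacency on `S`. -/
def IsPartialIso {V : Type} (G : SimpleGraph V) (red : V → Prop) (S : Set V) (f : V → V) :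
    Prop :=
  Set.InjOn f S ∧ (∀ v ∈ S, (red (f v) ↔ red v)) ∧
    ∀ u ∈ S, ∀ v ∈ S, (G.Adj (f u) (f v) ↔ G.Adj u v)

/-- A 2-colored graph is ultrahomogeneous if every isomorphism between two finite induced
colored subgraphs extends to a color-preserving automorphism. -/
def Ultrahomogeneous {V : Type} (G : SimpleGraph V) (red : V → Prop) : Prop :=
  ∀ S : Set V, S.Finite → ∀ f : V → V, IsPartialIso G red S f →
    ∃ ψ : G ≃g G, (∀ v, red (ψ v) ↔ red v) ∧ ∀ v ∈ S, ψ v = f v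

/-- The set `P` induces a disjoint union of cliques in `G` (no induced monochromatic `P₃`). -/
def IsUnionOfCliques {V : Type} (G : SimpleGraph V) (P : Set V) : Prop :=
  ∀ u ∈ P, ∀ v ∈ P, ∀ w ∈ P, G.Adj u v → G.Adj v w → u ≠ w → G.Adj u w

/-- `M` is an inclusion-wise maximal clique of the subgraph of `G` induced on `P`. -/
def IsMaxCliqueIn {V : Type} (G : SimpleGraph V) (P : Set V) (M : Set V) : Prop :=
  M ⊆ P ∧ G.IsClique M ∧ ∀ M' : Set V, M' ⊆ P → G.IsClique M' → M ⊆ M' → M = M'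

/-- `S` is an independent set in `G`. -/
def IsIndepIn {V : Type} (G : SimpleGraph V) (S : Set V) : Prop :=
  ∀ u ∈ S, ∀ v ∈ S, ¬ G.Adj u v

/-- The 2-colored graph `(H, redH)` is realized in `(G, red)`, i.e. isomorphic to an
induced colored subgraph of `G`. -/
def Realizes {V : Type} (G : SimpleGraph V) (red : V → Prop) {W : Type} (H : SimpleGraph W)
    (redH : W → Prop) : Prop :=
  ∃ f : W → V, Function.Injective f ∧ (∀ w, red (f w) ↔ redH w) ∧
    ∀ u w : W, G.Adj (f u) (f w) ↔ H.Adj u w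

/-- `(H, redH)` is minimally omitted in `(G, red)`: it is omitted, but every proper induced
subgraph of it is realized. -/
def MinOmitted {V : Type} (G : SimpleGraph V) (red : V → Prop) {W : Type} (H : SimpleGraph W)
    (redH : W → Prop) : Prop :=
  ¬ Realizes G red H redH ∧
    ∀ S : Set W, S ≠ Set.univ → Realizes G red (H.induce S) (fun x => redH x.1)

/-- Isomorphism of 2-colored graphs. -/
def ColoredIso {V : Type} (G : SimpleGraph V) (red : V → Prop) {W : Type} (H : SimpleGraph W)
    (redH : W → Prop) : Prop :=
  ∃ e : G ≃g H, ∀ v, red v ↔ redH (e v)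

/-- The graph obtained from `G` by complementing the cross edges while keeping the
edges inside each color class. -/
def crossComp {V : Type} (G : SimpleGraph V) (red : V → Prop) : SimpleGraph V :=
  SimpleGraph.fromRel (fun u v =>
    ((red u ↔ red v) ∧ G.Adj u v) ∨ (¬ (red u ↔ red v) ∧ ¬ G.Adj u v))

/-- The blow-up of the 2-colored graph `(H, redH)` (whose red class should be independent),
replacing every red vertex by a copy of `I` forming a clique, joined to the neighbors of the
original vertex. -/
def blowUp {V : Type} (H : SimpleGraph V) (redH : V → Prop) (I : Type) :
    SimpleGraph ({v : V // redH v} × I ⊕ {v : V // ¬ redH v}) :=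
  SimpleGraph.fromRel (fun x y =>
    match x, y with
    | Sum.inl (u, i), Sum.inl (u', i') => H.Adj u.1 u'.1 ∨ (u = u' ∧ i ≠ i')
    | Sum.inl (u, _), Sum.inr b => H.Adj u.1 b.1
    | Sum.inr b, Sum.inl (u, _) => H.Adj b.1 u.1
    | Sum.inr b, Sum.inr b' => H.Adj b.1 b'.1)

/-- The coloring of the blow-up: all vertices replacing red vertices are red. -/
def blowUpRed (V : Type) (redH : V → Prop) (I : Type) :
    ({v : V // redH v} × I ⊕ {v : V // ¬ redH v}) → Prop :=
  Sum.elim (fun _ => True) (fun _ => False)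

/-- `(G, red)` is a blow-up with the red class blown up: it is isomorphic (as a colored graph)
to the blow-up of some `(H, redH)` with independent red class by an `i`-clique, `2 ≤ i ≤ ℵ₀`. -/
def IsBlowUpOf {V : Type} (G : SimpleGraph V) (red : V → Prop) : Prop :=
  ∃ (U : Type) (H : SimpleGraph U) (redH : U → Prop) (I : Type),
    (∀ u v : U, redH u → redH v → ¬ H.Adj u v) ∧
    2 ≤ Cardinal.mk I ∧ Cardinal.mk I ≤ Cardinal.aleph0 ∧
    ∃ e : G ≃g blowUp H redH I, ∀ v, red v ↔ blowUpRed U redH I (e v)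

/-- `(G, red)` is a blow-up (of one of its two color classes). -/
def IsBlowUp {V : Type} (G : SimpleGraph V) (red : V → Prop) : Prop :=
  IsBlowUpOf G red ∨ IsBlowUpOf G (fun v => ¬ red v)

/-- A CUH graph: a countably infinite ultrahomogeneous 2-colored graph in which both
color classes induce disjoint unions of cliques. -/
def IsCUH {V : Type} (G : SimpleGraph V) (red : V → Prop) : Prop :=
  Countable V ∧ Infinite V ∧ Ultrahomogeneous G red ∧
    IsUnionOfCliques G {v | red v} ∧ IsUnionOfCliques G {v | ¬ red v}

/-- A basic CUH graph: a CUH graph which is not a blow-up and where both independence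
numbers are at least 2. -/
def IsBasicCUH {V : Type} (G : SimpleGraph V) (red : V → Prop) : Prop :=
  IsCUH G red ∧ ¬ IsBlowUp G red ∧
    (∃ u v, red u ∧ red v ∧ u ≠ v ∧ ¬ G.Adj u v) ∧
    (∃ u v, ¬ red u ∧ ¬ red v ∧ u ≠ v ∧ ¬ G.Adj u v)

/-- The graph `D`: red vertices `0, 1`, blue vertices `2, 3`, edges
`{01, 23, 02, 03, 12}` (a 2-colored diamond). -/
def Dgraph : SimpleGraph (Fin 4) :=
  SimpleGraph.fromRel (fun x y =>
    (x = 0 ∧ y = 1) ∨ (x = 2 ∧ y = 3) ∨ (x = 0 ∧ y = 2) ∨ (x = 0 ∧ y = 3) ∨ (x = 1 ∧ y = 2))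

/-- The coloring of `D` and `D̃`: `0, 1` are red, `2, 3` are blue. -/
def Dred : Fin 4 → Prop := fun x => x = 0 ∨ x = 1

/-- The graph `D̃`, the cross-edge complement of `D`: the path `0 – 1 – 3 – 2`. -/
def Dtilde : SimpleGraph (Fin 4) :=
  SimpleGraph.fromRel (fun x y => (x = 0 ∧ y = 1) ∨ (x = 1 ∧ y = 3) ∨ (x = 3 ∧ y = 2))

/-- `T_r`: the triangle with two red vertices and one blue vertex. -/
def Tr : SimpleGraph (Fin 3) := ⊤

/-- The coloring of `T_r` and `T̃_r`: `0, 1` red, `2` blue. -/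
def TrRed : Fin 3 → Prop := fun x => x = 0 ∨ x = 1

/-- `T̃_r`: a red edge together with an isolated blue vertex. -/
def TrTilde : SimpleGraph (Fin 3) := SimpleGraph.fromRel (fun x y => x = 0 ∧ y = 1)

/-- `T_b`: the triangle with one red vertex and two blue vertices. -/
def Tb : SimpleGraph (Fin 3) := ⊤

/-- The coloring of `T_b` and `T̃_b`: `0` red, `1, 2` blue. -/
def TbRed : Fin 3 → Prop := fun x => x = 0

/-- `T̃_b`: a blue edge together with an isolated red vertex. -/
def TbTilde : SimpleGraph (Fin 3) := SimpleGraph.fromRel (fun x y => x = 1 ∧ y = 2)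

/-- A family of nonempty finite subsets of `Ω`, indexed by a set `A` carrying a relation `RA`,
that is homogeneous: finite partial injections of `Ω` act on pairs of members, and disjointness
of two members depends only on the type of the pair of indices. -/
structure IsHomogeneousFamily {A Ω : Type} (RA : A → A → Prop) (T : A → Set Ω) : Prop where
  finite : ∀ a, (T a).Finite
  nonempty : ∀ a, (T a).Nonempty
  move : ∀ a a' (f : Ω → Ω), Set.InjOn f (T a ∪ T a') →
    ∃ c c', (c = c' ↔ a = a') ∧ (RA c c' ↔ RA a a') ∧ T c = f '' T a ∧ T c' = f '' T a'
  disjoint_of_same_type : ∀ a a' c c', (a = a' ↔ c = c') → (RA a a' ↔ RA c c') →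
    Disjoint (T a) (T a') → Disjoint (T c) (T c')

lemma exists_injective_avoiding {Ω : Type} [Infinite Ω] {F : Set Ω} (hF : F.Finite) :
    ∃ f : Ω → Ω, Function.Injective f ∧ ∀ x, f x ∉ F := by
  have h : Cardinal.mk (Fᶜ : Set Ω) = Cardinal.mk Ω :=
    Cardinal.mk_compl_of_infinite F (hF.lt_aleph0.trans_le (Cardinal.aleph0_le_mk Ω))
  obtain ⟨e⟩ := Cardinal.eq.1 h
  exact ⟨fun x => (e.symm x).1, Subtype.val_injective.comp e.symm.injective,
    fun x => (e.symm x).2⟩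

namespace IsHomogeneousFamily

variable {A Ω : Type} [Infinite Ω] {RA : A → A → Prop} {T : A → Set Ω}

lemma exists_disjoint (h : IsHomogeneousFamily RA T) (a : A) {F : Set Ω} (hF : F.Finite) :
    ∃ c, Disjoint (T c) F := by
  obtain ⟨f, hf, hfF⟩ := exists_injective_avoiding hF
  obtain ⟨c, -, -, -, hc, -⟩ := h.move a a f hf.injOn
  refine ⟨c, Set.disjoint_left.2 fun x hx => ?_⟩
  rw [hc] at hx
  obtain ⟨y, -, rfl⟩ := hx
  exact hfF y

lemma exists_inter_subset (h : IsHomogeneousFamily RA T) {a : A} {p : Ω} (hp : p ∈ T a)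
    {F : Set Ω} (hF : F.Finite) :
    ∃ c, p ∈ T c ∧ T c ∩ F ⊆ {p} ∧ ∀ q ∈ T a, q ≠ p → ∃ q' ∈ T c, q' ∉ F := by
  classical
  obtain ⟨f, hf, hfF⟩ := exists_injective_avoiding (hF.insert p)
  have hfp : ∀ x, f x ≠ p := fun x hx => hfF x (by simp [hx])
  have hinj : Function.Injective (Function.update f p p) := by
    intro x y hxy
    by_cases hx : x = p <;> by_cases hy : y = p
    · rw [hx, hy]
    · subst hx
      rw [Function.update_self, Function.update_of_ne hy] at hxy
      exact absurd hxy.symm (hfp y)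
    · subst hy
      rw [Function.update_self, Function.update_of_ne hx] at hxy
      exact absurd hxy (hfp x)
    · rw [Function.update_of_ne hx, Function.update_of_ne hy] at hxy
      exact hf hxy
  obtain ⟨c, -, -, -, hc, -⟩ := h.move a a _ hinj.injOn
  refine ⟨c, ?_, ?_, ?_⟩
  · rw [hc]
    exact ⟨p, hp, Function.update_self ..⟩
  · rintro x ⟨hx, hxF⟩
    rw [hc] at hx
    obtain ⟨y, -, rfl⟩ := hx
    by_cases hy : y = p
    · subst hy
      simp
    · rw [Function.update_of_ne hy] at hxF
      exact absurd (Set.mem_insert_of_mem _ hxF) (hfF y)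
  · intro q hq hqp
    refine ⟨f q, ?_, fun hqF => hfF q (Set.mem_insert_of_mem _ hqF)⟩
    rw [hc]
    exact ⟨q, hq, Function.update_of_ne hqp ..⟩

/-- If `RA` is an equivalence relation with at least two classes, then the members of a
homogeneous family are constant on its classes. -/
lemma eq_of_rel (h : IsHomogeneousFamily RA T) (hRA : Equivalence RA)
    (hne : ∃ a a', ¬ RA a a') {a a' : A} (haa : RA a a') : T a = T a' := by
  classical
  have not_self : ∀ c, ¬ Disjoint (T c) (T c) := fun c hc =>
    (h.nonempty c).ne_empty (disjoint_self.1 hc)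
  obtain ⟨u, w, huw⟩ := hne
  have ne_of_not : ∀ {c d}, ¬ RA c d → c ≠ d := fun hcd e => hcd (e ▸ hRA.refl _)
  have disj : ∀ c d, ¬ RA c d → Disjoint (T c) (T d) := by
    obtain ⟨s, hs⟩ := h.exists_disjoint u ((h.finite u).union (h.finite w))
    have hsu : Disjoint (T s) (T u) := hs.mono_right Set.subset_union_left
    have hsw : Disjoint (T s) (T w) := hs.mono_right Set.subset_union_right
    intro c d hcd
    by_cases hu : RA s u
    · have hw : ¬ RA s w := fun hw => huw (hRA.trans (hRA.symm hu) hw)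
      exact h.disjoint_of_same_type s w c d (by simp [ne_of_not hw, ne_of_not hcd])
        (by simp [hw, hcd]) hsw
    · exact h.disjoint_of_same_type s u c d (by simp [ne_of_not hu, ne_of_not hcd])
        (by simp [hu, hcd]) hsu
  have meet : ∀ c d, RA c d → ¬ Disjoint (T c) (T d) := by
    intro c d hcd hdis
    have hne : c ≠ d := fun e => not_self d (e ▸ hdis)
    have all : ∀ s t, s ≠ t → Disjoint (T s) (T t) := by
      intro s t hst
      by_cases hr : RA s t
      · exact h.disjoint_of_same_type c d s t (by simp [hne, hst]) (by simp [hr, hcd]) hdis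
      · exact disj s t hr
    obtain ⟨e, he⟩ : ∃ e, ¬ RA c e := by
      by_contra! hall
      exact huw (hRA.trans (hRA.symm (hall u)) (hall w))
    have hde : d ≠ e := fun hde => he (hde ▸ hcd)
    obtain ⟨p, hp⟩ := h.nonempty c
    obtain ⟨q, hq⟩ := h.nonempty d
    obtain ⟨s, hs⟩ := h.nonempty e
    have hpq : p ≠ q := fun hpq => Set.disjoint_left.1 hdis hp (hpq ▸ hq)
    have hps : p ≠ s := fun hps => Set.disjoint_left.1 (disj c e he) hp (hps ▸ hs)
    obtain ⟨c', d', -, hr, hc', hd'⟩ := h.move c d (Equiv.swap q s)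
      (Equiv.injective _).injOn
    have h1 : c' = c := by
      by_contra hcc
      refine Set.disjoint_left.1 (all c' c hcc) ?_ hp
      rw [hc']
      exact ⟨p, hp, Equiv.swap_apply_of_ne_of_ne hpq hps⟩
    have h2 : d' = e := by
      by_contra hcc
      refine Set.disjoint_left.1 (all d' e hcc) ?_ hs
      rw [hd']
      exact ⟨q, hq, Equiv.swap_apply_left _ _⟩
    subst h1 h2
    exact he (hr.2 hcd)
  have sub : ∀ c d, RA c d → T c ⊆ T d := by
    intro c d hcd p hp
    by_contra hpd
    obtain ⟨e, hpe, hsub, -⟩ := h.exists_inter_subset hp (h.finite d)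
    have hec : RA e c := by
      by_contra hec
      exact Set.disjoint_left.1 (disj e c hec) hpe hp
    refine meet e d (hRA.trans hec hcd) (Set.disjoint_left.2 fun x hx hxd => ?_)
    have hxp : x = p := hsub ⟨hx, hxd⟩
    exact hpd (hxp ▸ hxd)
  exact (sub a a' haa).antisymm (sub a' a (hRA.symm haa))

/-- If `RA` is total, then the members of a homogeneous family form a partition of `Ω`
into singletons. -/
lemma partition_of_total (h : IsHomogeneousFamily RA T) [Nonempty A] (hRA : ∀ a a', RA a a') :
    (∀ x, ∃ a, x ∈ T a) ∧ (∀ x a a', x ∈ T a → x ∈ T a' → a = a') ∧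
      ∀ a x y, x ∈ T a → y ∈ T a → x = y := by
  classical
  obtain ⟨a₀⟩ := ‹Nonempty A›
  have all : ∀ s t, s ≠ t → Disjoint (T s) (T t) := by
    intro s t hst
    obtain ⟨c, hc⟩ := h.exists_disjoint a₀ (h.finite a₀)
    have hca : c ≠ a₀ := by
      rintro rfl
      exact (h.nonempty c).ne_empty (disjoint_self.1 hc)
    exact h.disjoint_of_same_type c a₀ s t (by simp [hca, hst]) (by simp [hRA]) hc
  have uniq : ∀ x a a', x ∈ T a → x ∈ T a' → a = a' := by
    intro x a a' hx hx'
    by_contra hne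
    exact Set.disjoint_left.1 (all a a' hne) hx hx'
  have single : ∀ a x y, x ∈ T a → y ∈ T a → x = y := by
    intro a x y hx hy
    by_contra hxy
    obtain ⟨c, hxc, -, hq⟩ := h.exists_inter_subset hx (h.finite a)
    obtain rfl := uniq x c a hxc hx
    obtain ⟨q, hq1, hq2⟩ := hq y hy (Ne.symm hxy)
    exact hq2 hq1
  refine ⟨fun x => ?_, uniq, single⟩
  obtain ⟨p, hp⟩ := h.nonempty a₀
  obtain ⟨c, -, -, -, hc, -⟩ := h.move a₀ a₀ (fun _ => x) (by
    rintro y hy z hz -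
    exact single a₀ y z (by simpa using hy) (by simpa using hz))
  exact ⟨c, hc ▸ ⟨p, hp, rfl⟩⟩

end IsHomogeneousFamily

section FixingAutomorphisms

variable {V : Type} {G : SimpleGraph V} {red : V → Prop} {J : Finset V} {v : V}

/-- Two vertices are equal or adjacent; on a single color class of a CUH graph, this means
lying in the same clique. -/
def SameClique (G : SimpleGraph V) (u w : V) : Prop := u = w ∨ G.Adj u w

/-- The red vertices outside of the cliques of the vertices in `J`. -/
def freeRed (G : SimpleGraph V) (red : V → Prop) (J : Finset V) : Set V :=
  {r | red r ∧ ∀ j ∈ J, ¬ SameClique G j r}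

/-- The blue vertices having the same neighbors in `J` as `v`. -/
def blueType (G : SimpleGraph V) (red : V → Prop) (J : Finset V) (v : V) : Set V :=
  {b | ¬ red b ∧ ∀ r ∈ J, (G.Adj b r ↔ G.Adj v r)}

/-- `ψ` preserves colors and fixes `J` pointwise. -/
def IsFixing (red : V → Prop) (J : Finset V) (ψ : G ≃g G) : Prop :=
  (∀ v, red (ψ v) ↔ red v) ∧ ∀ j ∈ J, ψ j = j

lemma sameClique_iso (ψ : G ≃g G) {u w : V} :
    SameClique G (ψ u) (ψ w) ↔ SameClique G u w := by
  simp [SameClique, ψ.map_adj_iff]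

lemma SameClique.symm {u w : V} (h : SameClique G u w) : SameClique G w u :=
  h.elim (fun e => Or.inl e.symm) fun e => Or.inr e.symm

lemma SameClique.trans {P : Set V} (hP : IsUnionOfCliques G P) {u w x : V} (hu : u ∈ P)
    (hw : w ∈ P) (hx : x ∈ P) (h : SameClique G u w) (h' : SameClique G w x) :
    SameClique G u x := by
  rcases h with rfl | h
  · exact h'
  rcases h' with rfl | h'
  · exact Or.inr h
  by_cases hux : u = x
  · exact Or.inl hux
  · exact Or.inr (hP u hu w hw x hx h h' hux)

lemma IsFixing.symm {ψ : G ≃g G} (h : IsFixing red J ψ) : IsFixing red J ψ.symm := by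
  refine ⟨fun w => ?_, fun j hj => ?_⟩
  · rw [← h.1, RelIso.apply_symm_apply]
  · rw [RelIso.symm_apply_eq, h.2 j hj]

lemma IsFixing.mem_freeRed {ψ : G ≃g G} (h : IsFixing red J ψ) {r : V}
    (hr : r ∈ freeRed G red J) : ψ r ∈ freeRed G red J := by
  refine ⟨(h.1 r).2 hr.1, fun j hj => ?_⟩
  rw [← h.2 j hj, sameClique_iso]
  exact hr.2 j hj

lemma IsFixing.mem_blueType {ψ : G ≃g G} (h : IsFixing red J ψ) {b : V}
    (hb : b ∈ blueType G red J v) : ψ b ∈ blueType G red J v := by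
  refine ⟨fun hr => hb.1 ((h.1 b).1 hr), fun j hj => ?_⟩
  rw [← hb.2 j hj, ← h.2 j hj, ψ.map_adj_iff, h.2 j hj]

lemma exists_fixing (hU : Ultrahomogeneous G red) (hJ : ∀ j ∈ J, red j) {X : Set V}
    (hX : X.Finite) (f : V → V)
    (hf : ∀ x ∈ X, (x ∈ freeRed G red J ∧ f x ∈ freeRed G red J) ∨
      (x ∈ blueType G red J v ∧ f x ∈ blueType G red J v))
    (hinj : Set.InjOn f X) (hadj : ∀ x ∈ X, ∀ y ∈ X, (G.Adj (f x) (f y) ↔ G.Adj x y)) :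
    ∃ ψ : G ≃g G, IsFixing red J ψ ∧ ∀ x ∈ X, ψ x = f x := by
  classical
  have free_not : ∀ x ∈ freeRed G red J, x ∉ J := fun x hx hxJ => hx.2 x hxJ (Or.inl rfl)
  have blue_not : ∀ x ∈ blueType G red J v, x ∉ J := fun x hx hxJ => hx.1 (hJ x hxJ)
  have X_not : ∀ x ∈ X, x ∉ J := fun x hx =>
    (hf x hx).elim (fun h => free_not _ h.1) fun h => blue_not _ h.1
  have fX_not : ∀ x ∈ X, f x ∉ J := fun x hx =>
    (hf x hx).elim (fun h => free_not _ h.2) fun h => blue_not _ h.2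
  have cross : ∀ x ∈ X, ∀ j ∈ J, (G.Adj (f x) j ↔ G.Adj x j) := by
    intro x hx j hj
    rcases hf x hx with h | h
    · exact iff_of_false (fun e => h.2.2 j hj (Or.inr e.symm))
        fun e => h.1.2 j hj (Or.inr e.symm)
    · rw [h.1.2 j hj, h.2.2 j hj]
  let g : V → V := fun x => if x ∈ J then x else f x
  have gJ : ∀ j ∈ J, g j = j := fun j hj => if_pos hj
  have gX : ∀ x ∈ X, g x = f x := fun x hx => if_neg (X_not x hx)
  obtain ⟨ψ, hψ, hψg⟩ := hU (↑J ∪ X) (J.finite_toSet.union hX) g (by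
    refine ⟨?_, ?_, ?_⟩
    · rintro x (hx | hx) y (hy | hy) hxy
      · rwa [gJ x hx, gJ y hy] at hxy
      · rw [gJ x hx, gX y hy] at hxy
        exact absurd (hxy ▸ hx) (fX_not y hy)
      · rw [gX x hx, gJ y hy] at hxy
        exact absurd (hxy ▸ hy) (fX_not x hx)
      · rw [gX x hx, gX y hy] at hxy
        exact hinj hx hy hxy
    · rintro x (hx | hx)
      · rw [gJ x hx]
      · rw [gX x hx]
        rcases hf x hx with h | h
        · exact iff_of_true h.2.1 h.1.1
        · exact iff_of_false h.2.1 h.1.1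
    · rintro x (hx | hx) y (hy | hy)
      · rw [gJ x hx, gJ y hy]
      · rw [gJ x hx, gX y hy, G.adj_comm, cross y hy x hx, G.adj_comm]
      · rw [gX x hx, gJ y hy, cross x hx y hy]
      · rw [gX x hx, gX y hy, hadj x hx y hy])
  exact ⟨ψ, ⟨hψ, fun j hj => by rw [hψg j (Or.inl hj), gJ j hj]⟩,
    fun x hx => by rw [hψg x (Or.inr hx), gX x hx]⟩

lemma exists_fixing_pair (hU : Ultrahomogeneous G red) (hJ : ∀ j ∈ J, red j) {x y x' y' : V}
    (hx : (x ∈ freeRed G red J ∧ x' ∈ freeRed G red J) ∨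
      (x ∈ blueType G red J v ∧ x' ∈ blueType G red J v))
    (hy : (y ∈ freeRed G red J ∧ y' ∈ freeRed G red J) ∨
      (y ∈ blueType G red J v ∧ y' ∈ blueType G red J v))
    (heq : x = y ↔ x' = y') (hadj : G.Adj x y ↔ G.Adj x' y') :
    ∃ ψ : G ≃g G, IsFixing red J ψ ∧ ψ x = x' ∧ ψ y = y' := by
  classical
  let f : V → V := fun z => if z = x then x' else y'
  have fx : f x = x' := if_pos rfl
  have fy : f y = y' := by
    by_cases h : y = x
    · rw [h, fx, ← heq.1 h.symm]
    · exact if_neg h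
  obtain ⟨ψ, hψ, hψf⟩ := exists_fixing (v := v) (X := {x, y}) hU hJ (by simp) f
    (by rintro z (rfl | rfl) <;> simpa [fx, fy])
    (by
      rintro z (rfl | rfl) w (rfl | rfl) hzw
      · rfl
      · rw [fx, fy] at hzw
        exact heq.2 hzw
      · rw [fx, fy] at hzw
        exact (heq.2 hzw.symm).symm
      · rfl)
    (by
      rintro z (rfl | rfl) w (rfl | rfl)
      · simp
      · rw [fx, fy, hadj]
      · rw [fx, fy, G.adj_comm, ← hadj, G.adj_comm]
      · simp)
  exact ⟨ψ, hψ, by rw [hψf x (by simp), fx], by rw [hψf y (by simp), fy]⟩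

/-- Lying in the same clique, as an equivalence relation on a set `Q` of vertices. -/
def cliqueSetoid {P Q : Set V} (hP : IsUnionOfCliques G P) (hQ : Q ⊆ P) : Setoid Q where
  r b c := SameClique G b.1 c.1
  iseqv := ⟨fun _ => Or.inl rfl, fun h => h.symm,
    fun {a b c} h h' => h.trans hP (hQ a.2) (hQ b.2) (hQ c.2) h'⟩

end FixingAutomorphisms

section Trace

variable {V : Type} {G : SimpleGraph V} {red : V → Prop} {J : Finset V} {v : V} {p : Prop}

/-- The quotient of the blue vertices of a given type over `J` by the clique relation. -/
abbrev BlueCliques (hB : IsUnionOfCliques G {v | ¬ red v}) (J : Finset V) (v : V) : Type :=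
  Quotient (cliqueSetoid (Q := blueType G red J v) hB fun _ h => h.1)

/-- The blue cliques containing a vertex `b` of the given type over `J` whose adjacency to `r`
has truth value `p`. -/
def trace (hB : IsUnionOfCliques G {v | ¬ red v}) (J : Finset V) (v : V) (p : Prop) (r : V) :
    Set (BlueCliques hB J v) :=
  {x | ∃ b : blueType G red J v, Quotient.mk _ b = x ∧ (G.Adj b r ↔ p)}

variable (hB : IsUnionOfCliques G {v | ¬ red v})

lemma infinite_blueCliques (hinf : ∃ S ⊆ blueType G red J v, IsIndepIn G S ∧ S.Infinite) :
    Infinite (BlueCliques hB J v) := by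
  obtain ⟨S, hS, hind, hSinf⟩ := hinf
  have := hSinf.to_subtype
  refine Infinite.of_injective
    (fun s : S => (Quotient.mk _ ⟨s.1, hS s.2⟩ : BlueCliques hB J v)) fun s t hst => ?_
  rcases Quotient.exact hst with h | h
  · exact Subtype.ext h
  · exact absurd h (hind _ s.2 _ t.2)

lemma finite_trace {j : V} (hfin : ¬ ∃ S ⊆ {b | b ∈ blueType G red J v ∧ (G.Adj b j ↔ p)},
    IsIndepIn G S ∧ S.Infinite) : (trace hB J v p j).Finite := by
  by_contra hT
  have : Nonempty (blueType G red J v) := (Set.Infinite.nonempty hT).elim fun _ hx => ⟨hx.choose⟩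
  choose! f hf hfp using fun x (hx : x ∈ trace hB J v p j) => hx
  have finj : Set.InjOn (fun x => (f x).1) (trace hB J v p j) := by
    intro x hx y hy hxy
    rw [← hf x hx, ← hf y hy, Subtype.ext hxy]
  refine hfin ⟨(fun x => (f x).1) '' trace hB J v p j, ?_, ?_, Set.Infinite.image finj hT⟩
  · rintro _ ⟨x, hx, rfl⟩
    exact ⟨(f x).2, hfp x hx⟩
  · rintro _ ⟨x, hx, rfl⟩ _ ⟨y, hy, rfl⟩ hadj
    have hxy : x = y := by
      rw [← hf x hx, ← hf y hy]
      exact Quotient.sound (Or.inr hadj)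
    exact G.loopless.irrefl _ (hxy ▸ hadj)

/-- The action of a color-preserving automorphism fixing `J` on the blue cliques. -/
def cliqueMap {ψ : G ≃g G} (hψ : IsFixing red J ψ) : BlueCliques hB J v → BlueCliques hB J v :=
  Quotient.map' (fun b => ⟨ψ b.1, hψ.mem_blueType b.2⟩) fun _ _ h => (sameClique_iso ψ).2 h

lemma cliqueMap_injective {ψ : G ≃g G} (hψ : IsFixing red J ψ) :
    Function.Injective (cliqueMap (v := v) hB hψ) := by
  rintro ⟨b⟩ ⟨c⟩ hbc
  exact Quotient.sound ((sameClique_iso ψ).1 (Quotient.exact hbc))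

lemma trace_iso {ψ : G ≃g G} (hψ : IsFixing red J ψ) (r : V) :
    trace hB J v p (ψ r) = cliqueMap hB hψ '' trace hB J v p r := by
  ext x
  constructor
  · rintro ⟨b, rfl, hb⟩
    refine ⟨Quotient.mk _ ⟨ψ.symm b, hψ.symm.mem_blueType b.2⟩, ⟨_, rfl, ?_⟩, ?_⟩
    · rw [← hb, ← ψ.map_adj_iff]
      simp
    · refine Quotient.sound (Or.inl ?_)
      simp
  · rintro ⟨_, ⟨b, rfl, hb⟩, rfl⟩
    exact ⟨_, rfl, by rw [← hb]; exact ψ.map_adj_iff⟩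

lemma exists_fixing_red (hU : Ultrahomogeneous G red) (hJ : ∀ j ∈ J, red j)
    {r s r' s' : V} (hr : r ∈ freeRed G red J) (hs : s ∈ freeRed G red J)
    (hr' : r' ∈ freeRed G red J) (hs' : s' ∈ freeRed G red J) (heq : r = s ↔ r' = s')
    (hsame : SameClique G r s ↔ SameClique G r' s') :
    ∃ ψ : G ≃g G, IsFixing red J ψ ∧ ψ r = r' ∧ ψ s = s' := by
  refine exists_fixing_pair (v := r) hU hJ (Or.inl ⟨hr, hr'⟩) (Or.inl ⟨hs, hs'⟩) heq ?_
  by_cases h : r = s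
  · simp [h, ← heq.1 h]
  · simpa [SameClique, h, mt heq.2 h] using hsame

lemma adj_iff_of_sameClique (hU : Ultrahomogeneous G red) (hJ : ∀ j ∈ J, red j)
    [Infinite (BlueCliques hB J v)] {r : V} (hr : r ∈ freeRed G red J)
    (hfin : (trace hB J v p r).Finite) {b c : V} (hb : b ∈ blueType G red J v)
    (hc : c ∈ blueType G red J v) (hbc : SameClique G b c) (hbr : G.Adj b r ↔ p) :
    G.Adj c r ↔ p := by
  by_contra hcr
  obtain ⟨⟨d⟩, hd⟩ := hfin.exists_notMem
  have hdr : ¬ (G.Adj d r ↔ p) := fun h => hd ⟨d, rfl, h⟩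
  have hdr' : G.Adj c r ↔ G.Adj d r := by tauto
  have ne : ∀ x ∈ blueType G red J v, x ≠ r := fun x hx e => hx.1 (e ▸ hr.1)
  obtain ⟨ψ, hψ, hcd, hrr⟩ := exists_fixing_pair (v := v) hU hJ (Or.inr ⟨hc, d.2⟩)
    (Or.inl ⟨hr, hr⟩) (by simp [ne c hc, ne d d.2]) hdr'
  refine hd ⟨⟨ψ b, hψ.mem_blueType hb⟩, Quotient.sound ?_, ?_⟩
  · change SameClique G (ψ b) d
    rw [← hcd, sameClique_iso]
    exact hbc
  · rw [← hbr, ← ψ.map_adj_iff (v := b), hrr]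

lemma isHomogeneousFamily_trace (hU : Ultrahomogeneous G red) (hJ : ∀ j ∈ J, red j)
    (hv : ¬ red v) {j : V} (hj : j ∈ freeRed G red J)
    (hjv : G.Adj v j ↔ p) (hfin : (trace hB J v p j).Finite) :
    IsHomogeneousFamily (fun r s : freeRed G red J => SameClique G r.1 s.1)
      fun r => trace hB J v p r.1 := by
  have transport : ∀ r : freeRed G red J, ∃ ψ : G ≃g G, IsFixing red J ψ ∧ ψ j = r := by
    intro r
    obtain ⟨ψ, hψ, h, -⟩ := exists_fixing_red hU hJ hj hj r.2 r.2 (by simp) (by simp [SameClique])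
    exact ⟨ψ, hψ, h⟩
  refine ⟨fun r => ?_, fun r => ?_, ?_, ?_⟩
  · obtain ⟨ψ, hψ, h⟩ := transport r
    rw [← h, trace_iso hB hψ]
    exact hfin.image _
  · obtain ⟨ψ, hψ, h⟩ := transport r
    rw [← h, trace_iso hB hψ]
    exact ⟨_, _, ⟨⟨v, hv, fun _ _ => Iff.rfl⟩, rfl, hjv⟩, rfl⟩
  · intro r s f hf
    set X := trace hB J v p r.1 ∪ trace hB J v p s.1 with hX
    have hXfin : X.Finite := by
      refine Set.Finite.union ?_ ?_
      · obtain ⟨ψ, hψ, h⟩ := transport r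
        rw [← h, trace_iso hB hψ]
        exact hfin.image _
      · obtain ⟨ψ, hψ, h⟩ := transport s
        rw [← h, trace_iso hB hψ]
        exact hfin.image _
    have out_rel : ∀ x y : BlueCliques hB J v, SameClique G x.out.1 y.out.1 → x = y := by
      intro x y h
      rw [← x.out_eq, ← y.out_eq]
      exact Quotient.sound h
    classical
    let g : V → V := fun b =>
      if hb : b ∈ blueType G red J v then (f (Quotient.mk _ ⟨b, hb⟩)).out.1 else b
    have hg : ∀ x : BlueCliques hB J v, g x.out.1 = (f x).out.1 := by
      intro x
      simp only [g, x.out.2, dif_pos, Subtype.coe_eta, Quotient.out_eq]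
    obtain ⟨ψ, hψ, hψg⟩ := exists_fixing (v := v) hU hJ
      (X := (fun x : BlueCliques hB J v => x.out.1) '' X) (hXfin.image _) g
      (by
        rintro _ ⟨x, hx, rfl⟩
        right
        exact ⟨x.out.2, by simp only [hg]; exact (f x).out.2⟩)
      (by
        rintro _ ⟨x, hx, rfl⟩ _ ⟨y, hy, rfl⟩ hxy
        simp only [hg] at hxy
        rw [hf hx hy (out_rel _ _ (Or.inl hxy))])
      (by
        rintro _ ⟨x, hx, rfl⟩ _ ⟨y, hy, rfl⟩
        simp only [hg]
        constructor
        · intro h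
          rw [hf hx hy (out_rel _ _ (Or.inr h))] at h
          exact absurd h (G.loopless.irrefl _)
        · intro h
          rw [out_rel _ _ (Or.inr h)] at h
          exact absurd h (G.loopless.irrefl _))
    have hmap : ∀ x ∈ X, cliqueMap hB hψ x = f x := by
      intro x hx
      have h1 : cliqueMap hB hψ (Quotient.mk _ x.out) = Quotient.mk _ (f x).out := by
        refine Quotient.sound (Or.inl ?_)
        change ψ x.out.1 = _
        rw [hψg _ ⟨x, hx, rfl⟩, hg]
      rwa [Quotient.out_eq, Quotient.out_eq] at h1
    refine ⟨⟨ψ r, hψ.mem_freeRed r.2⟩, ⟨ψ s, hψ.mem_freeRed s.2⟩, ?_, sameClique_iso ψ, ?_, ?_⟩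
    · simp [Subtype.ext_iff]
    · rw [trace_iso hB hψ]
      exact Set.image_congr fun x hx => hmap x (Or.inl hx)
    · rw [trace_iso hB hψ]
      exact Set.image_congr fun x hx => hmap x (Or.inr hx)
  · rintro r s r' s' heq hsame hdis
    obtain ⟨ψ, hψ, hr, hs⟩ := exists_fixing_red hU hJ r.2 s.2 r'.2 s'.2
      (by simpa [Subtype.ext_iff] using heq) hsame
    rw [← hr, ← hs, trace_iso hB hψ, trace_iso hB hψ]
    exact (Set.disjoint_image_iff (cliqueMap_injective hB hψ)).2 hdis

end Trace

section BlowUp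

variable {V : Type} {G : SimpleGraph V} {red : V → Prop}

lemma isMaxCliqueIn_sameClique {P : Set V} (hP : IsUnionOfCliques G P) {r : V} (hr : r ∈ P) :
    IsMaxCliqueIn G P {w | w ∈ P ∧ SameClique G r w} := by
  refine ⟨fun w hw => hw.1, ?_, ?_⟩
  · intro x hx y hy hxy
    exact (hx.2.symm.trans hP hx.1 hr hy.1 hy.2).resolve_left hxy
  · intro M hMP hM hsub
    refine hsub.antisymm fun w hw => ⟨hMP hw, ?_⟩
    by_cases h : r = w
    · exact Or.inl h
    · exact Or.inr (hM (hsub ⟨hr, Or.inl rfl⟩) hw h)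

lemma exists_clique_representative {P : Set V} (hP : IsUnionOfCliques G P) :
    ∃ rep : V → V, (∀ x ∈ P, rep x ∈ P ∧ SameClique G x (rep x)) ∧
      ∀ x ∈ P, ∀ y ∈ P, SameClique G x y → rep x = rep y := by
  classical
  let s : Setoid P := cliqueSetoid hP subset_rfl
  refine ⟨fun x => if h : x ∈ P then (Quotient.mk s ⟨x, h⟩).out.1 else x, ?_, ?_⟩
  · intro x hx
    simp only [hx, dif_pos]
    exact ⟨Subtype.property _,
      SameClique.symm (Quotient.exact (Quotient.out_eq (Quotient.mk s ⟨x, hx⟩)))⟩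
  · intro x hx y hy hxy
    simp only [hx, hy, dif_pos]
    have : Quotient.mk s ⟨x, hx⟩ = Quotient.mk s ⟨y, hy⟩ := Quotient.sound hxy
    rw [this]

/-- If adjacent red vertices always have the same blue neighbors, then the graph is a blow-up. -/
lemma isBlowUpOf_of_twins [Countable V] (hU : Ultrahomogeneous G red)
    (hR : IsUnionOfCliques G {v | red v})
    (hωR : ∀ M : Set V, IsMaxCliqueIn G {v | red v} M → 2 ≤ Cardinal.mk M)
    {r₀ : V} (hr₀ : red r₀)
    (htwin : ∀ b r s, ¬ red b → red r → red s → SameClique G r s → (G.Adj b r ↔ G.Adj b s)) :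
    IsBlowUpOf G red := by
  classical
  obtain ⟨rep, hrep, hrep_eq⟩ := exists_clique_representative hR
  have rep_rep : ∀ x, red x → rep (rep x) = rep x := fun x hx =>
    hrep_eq _ (hrep x hx).1 _ hx (hrep x hx).2.symm
  have hmove : ∀ r, ∃ ψ : G ≃g G, red r → (∀ w, red (ψ w) ↔ red w) ∧ ψ r₀ = r := by
    intro r
    by_cases hr : red r
    · obtain ⟨ψ, hψ, h⟩ := hU {r₀} (Set.finite_singleton _) (fun _ => r)
        ⟨by simp, by simp [hr, hr₀], by simp⟩
      exact ⟨ψ, fun _ => ⟨hψ, h r₀ rfl⟩⟩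
    · exact ⟨RelIso.refl _, fun h => absurd h hr⟩
  choose φ hφ using hmove
  let U : Type := {x : V // red x → rep x = x}
  let redU : U → Prop := fun x => red x.1
  let I : Type := {w : V | w ∈ {v | red v} ∧ SameClique G r₀ w}
  have index_mem : ∀ x, red x →
      (φ (rep x)).symm x ∈ {w : V | w ∈ {v | red v} ∧ SameClique G r₀ w} := by
    intro x hx
    obtain ⟨h1, h2⟩ := hφ (rep x) (hrep x hx).1
    refine ⟨?_, ?_⟩
    · change red _
      rw [← h1, RelIso.apply_symm_apply]
      exact hx
    · rw [← sameClique_iso (φ (rep x)), h2, RelIso.apply_symm_apply]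
      exact (hrep x hx).2.symm
  let F : V → {x : U // redU x} × I ⊕ {x : U // ¬ redU x} := fun x =>
    if hx : red x then
      Sum.inl (⟨⟨rep x, fun _ => rep_rep x hx⟩, (hrep x hx).1⟩,
        ⟨(φ (rep x)).symm x, index_mem x hx⟩)
    else Sum.inr ⟨⟨x, fun h => absurd h hx⟩, hx⟩
  have F_red : ∀ x (hx : red x), F x =
      Sum.inl (⟨⟨rep x, fun _ => rep_rep x hx⟩, (hrep x hx).1⟩,
        ⟨(φ (rep x)).symm x, index_mem x hx⟩) := fun x hx => dif_pos hx
  have F_blue : ∀ x (hx : ¬ red x), F x = Sum.inr ⟨⟨x, fun h => absurd h hx⟩, hx⟩ :=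
    fun x hx => dif_neg hx
  have F_inj : Function.Injective F := by
    intro x y hxy
    by_cases hx : red x <;> by_cases hy : red y
    · rw [F_red x hx, F_red y hy] at hxy
      simp only [Sum.inl.injEq, Prod.mk.injEq, Subtype.mk.injEq] at hxy
      have h1 : rep x = rep y := congrArg Subtype.val hxy.1
      have h2 : (φ (rep x)).symm x = (φ (rep y)).symm y := congrArg Subtype.val hxy.2
      rw [h1] at h2
      exact (φ (rep y)).symm.injective h2
    · rw [F_red x hx, F_blue y hy] at hxy
      simp at hxy
    · rw [F_blue x hx, F_red y hy] at hxy
      simp at hxy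
    · rw [F_blue x hx, F_blue y hy] at hxy
      exact congrArg (fun z => z.1.1) (Sum.inr_injective hxy)
  have F_surj : Function.Surjective F := by
    rintro (⟨⟨⟨u, hu⟩, hur⟩, ⟨i, hir, hi⟩⟩ | ⟨⟨u, hu⟩, hub⟩)
    · replace hur : red u := hur
      obtain ⟨h1, h2⟩ := hφ u hur
      have hx : red (φ u i) := (h1 i).2 hir
      have hux : SameClique G (φ u i) u := by
        nth_rewrite 2 [← h2]
        rw [sameClique_iso]
        exact hi.symm
      have hrepx : rep (φ u i) = u := (hrep_eq _ hx _ hur hux).trans (hu hur)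
      refine ⟨φ u i, ?_⟩
      rw [F_red _ hx]
      simp only [Sum.inl.injEq, Prod.mk.injEq, hrepx, true_and]
      exact Subtype.ext <| (φ u).symm_apply_apply i
    · exact ⟨u, F_blue u hub⟩
  have cross : ∀ x y, red x → ¬ red y → (G.Adj (rep x) y ↔ G.Adj x y) := by
    intro x y hx hy
    rw [G.adj_comm, G.adj_comm x]
    exact htwin y _ _ hy (hrep x hx).1 hx (hrep x hx).2.symm
  refine ⟨U, G.comap Subtype.val, redU, I, ?_, hωR _ (isMaxCliqueIn_sameClique hR hr₀),
    Cardinal.mk_le_aleph0, ⟨Equiv.ofBijective F ⟨F_inj, F_surj⟩, ?_⟩, ?_⟩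
  · rintro ⟨u, hu⟩ ⟨w, hw⟩ hur hwr (hadj : G.Adj u w)
    have : u = w := by rw [← hu hur, ← hw hwr, hrep_eq u hur w hwr (Or.inr hadj)]
    exact G.ne_of_adj hadj this
  · intro x y
    change (blowUp _ redU I).Adj (F x) (F y) ↔ _
    rw [blowUp, SimpleGraph.fromRel_adj, F_inj.ne_iff]
    by_cases hx : red x <;> by_cases hy : red y
    · rw [F_red x hx, F_red y hy]
      simp only [SimpleGraph.comap_adj, Subtype.mk.injEq, ne_eq]
      have hrr : ¬ G.Adj (rep x) (rep y) := by
        intro h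
        have h1 := hrep_eq _ (hrep x hx).1 _ (hrep y hy).1 (Or.inr h)
        rw [rep_rep x hx, rep_rep y hy] at h1
        exact G.ne_of_adj h h1
      have hrr' : ¬ G.Adj (rep y) (rep x) := fun h => hrr h.symm
      constructor
      · rintro ⟨hxy, h⟩
        have hre : rep x = rep y := by
          rcases h with (h | h) | (h | h)
          · exact absurd h hrr
          · exact congrArg Subtype.val h.1
          · exact absurd h hrr'
          · exact (congrArg Subtype.val h.1).symm
        have h1 : SameClique G x (rep y) := hre ▸ (hrep x hx).2
        exact (h1.trans hR hx (hrep y hy).1 hy (hrep y hy).2.symm).resolve_left hxy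
      · intro hadj
        have hne := G.ne_of_adj hadj
        have hre := hrep_eq x hx y hy (Or.inr hadj)
        refine ⟨hne, Or.inl (Or.inr ⟨Subtype.ext hre, fun h => ?_⟩)⟩
        have h2 : (φ (rep x)).symm x = (φ (rep y)).symm y := congrArg Subtype.val h
        rw [hre] at h2
        exact hne ((φ (rep y)).symm.injective h2)
    · rw [F_red x hx, F_blue y hy]
      simp only [SimpleGraph.comap_adj, ne_eq]
      rw [G.adj_comm y, or_self, cross x y hx hy]
      exact ⟨fun h => h.2, fun h => ⟨G.ne_of_adj h, h⟩⟩
    · rw [F_blue x hx, F_red y hy]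
      simp only [SimpleGraph.comap_adj, ne_eq]
      rw [G.adj_comm x (rep y), or_self, cross y x hy hx, G.adj_comm y x]
      exact ⟨fun h => h.2, fun h => ⟨G.ne_of_adj h, h⟩⟩
    · rw [F_blue x hx, F_blue y hy]
      simp only [SimpleGraph.comap_adj, ne_eq]
      rw [G.adj_comm y x, or_self]
      exact ⟨fun h => h.2, fun h => ⟨G.ne_of_adj h, h⟩⟩
  · intro x
    change red x ↔ blowUpRed U redU I (F x)
    by_cases hx : red x
    · rw [F_red x hx]
      simp [blowUpRed, hx]
    · rw [F_blue x hx]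
      simp [blowUpRed, hx]

end BlowUp

section Descent

variable {V : Type} {G : SimpleGraph V} {red : V → Prop} {J : Finset V} {v : V}

/-- Each blue vertex of the type of `v` over `J` is joined to all or to none of the vertices of
every red clique avoiding `J`, and both possibilities occur. -/
def IsUniformOver (G : SimpleGraph V) (red : V → Prop) (J : Finset V) (v : V) : Prop :=
  ∀ b ∈ blueType G red J v,
    (∀ r ∈ freeRed G red J, ∀ s ∈ freeRed G red J, SameClique G r s →
      (G.Adj b r ↔ G.Adj b s)) ∧
    ∀ p : Prop, ∃ r ∈ freeRed G red J, (G.Adj b r ↔ p)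

lemma mem_freeRed_insert [DecidableEq V] {j r : V} :
    r ∈ freeRed G red (insert j J) ↔ r ∈ freeRed G red J ∧ ¬ SameClique G j r := by
  simp only [freeRed, Set.mem_ofPred_eq, Finset.forall_mem_insert]
  tauto

lemma mem_blueType_insert [DecidableEq V] {j b : V} :
    b ∈ blueType G red (insert j J) v ↔ b ∈ blueType G red J v ∧ (G.Adj b j ↔ G.Adj v j) := by
  simp only [blueType, Set.mem_ofPred_eq, Finset.forall_mem_insert]
  tauto

lemma mem_blueType_self (hv : ¬ red v) : v ∈ blueType G red J v := ⟨hv, fun _ _ => Iff.rfl⟩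

lemma IsUniformOver.of_insert [DecidableEq V] (hU : Ultrahomogeneous G red)
    (hR : IsUnionOfCliques G {v | red v}) (hJ : ∀ j ∈ J, red j) (hv : ¬ red v) {j : V}
    (hj : j ∈ freeRed G red J) (h : IsUniformOver G red (insert j J) v) :
    IsUniformOver G red J v := by
  obtain ⟨hv1, hv2⟩ := h v (mem_blueType_self hv)
  have key : ∀ r ∈ freeRed G red J, ∀ s ∈ freeRed G red J, SameClique G r s →
      (G.Adj v r ↔ G.Adj v s) := by
    intro r hr s hs hrs
    by_cases hjr : SameClique G j r
    · obtain ⟨t, ht, htv⟩ := hv2 (G.Adj v j)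
      rw [mem_freeRed_insert] at ht
      obtain ⟨ψ, hψ, hψt, -⟩ := exists_fixing_red hU hJ ht.1 ht.1 hj hj (by simp)
        (by simp [SameClique])
      have hψv : ψ v ∈ blueType G red (insert j J) v := by
        refine mem_blueType_insert.2 ⟨hψ.mem_blueType (mem_blueType_self hv), ?_⟩
        rw [← htv, ← hψt, ψ.map_adj_iff]
      have away : ∀ x ∈ freeRed G red J, SameClique G j x →
          ψ x ∈ freeRed G red (insert j J) := by
        intro x hx hjx
        refine mem_freeRed_insert.2 ⟨hψ.mem_freeRed hx, ?_⟩
        rw [← hψt, sameClique_iso]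
        exact fun htx => ht.2 (hjx.trans hR hj.1 hx.1 ht.1.1 htx.symm)
      have := (h _ hψv).1 _ (away r hr hjr) _
        (away s hs (hjr.trans hR hj.1 hr.1 hs.1 hrs)) ((sameClique_iso ψ).2 hrs)
      rwa [ψ.map_adj_iff, ψ.map_adj_iff] at this
    · exact hv1 r (mem_freeRed_insert.2 ⟨hr, hjr⟩) s (mem_freeRed_insert.2
        ⟨hs, fun hjs => hjr (hjs.trans hR hj.1 hs.1 hr.1 hrs.symm)⟩) hrs
  intro b hb
  obtain ⟨ψ, hψ, hψv, -⟩ := exists_fixing_pair (v := v) hU hJ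
    (Or.inr ⟨mem_blueType_self hv, hb⟩) (Or.inr ⟨mem_blueType_self hv, hb⟩) (by simp) (by simp)
  refine ⟨fun r hr s hs hrs => ?_, fun p => ?_⟩
  · have := key _ (hψ.symm.mem_freeRed hr) _ (hψ.symm.mem_freeRed hs)
      ((sameClique_iso ψ.symm).2 hrs)
    rw [← ψ.map_adj_iff, ← ψ.map_adj_iff (w := ψ.symm s)] at this
    simpa [hψv] using this
  · obtain ⟨t, ht, htp⟩ := hv2 p
    refine ⟨ψ t, hψ.mem_freeRed (mem_freeRed_insert.1 ht).1, ?_⟩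
    rw [← hψv, ψ.map_adj_iff, htp]

lemma mem_freeRed_of_insert [DecidableEq V] {j : V} (hj : j ∉ J)
    (hJ : ∀ u ∈ insert j J, red u)
    (hind : ∀ u ∈ insert j J, ∀ w ∈ insert j J, ¬ G.Adj u w) : j ∈ freeRed G red J := by
  refine ⟨hJ j (Finset.mem_insert_self ..), fun u hu => ?_⟩
  rintro (rfl | h)
  · exact hj hu
  · exact hind u (Finset.mem_insert_of_mem hu) j (Finset.mem_insert_self ..) h

lemma IsUniformOver.to_empty (hU : Ultrahomogeneous G red)
    (hR : IsUnionOfCliques G {v | red v}) (hv : ¬ red v) (J : Finset V)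
    (hJ : ∀ j ∈ J, red j) (hind : ∀ u ∈ J, ∀ w ∈ J, ¬ G.Adj u w)
    (h : IsUniformOver G red J v) : IsUniformOver G red ∅ v := by
  classical
  induction J using Finset.induction_on with
  | empty => exact h
  | insert j J hjJ ih =>
    have hJ' : ∀ u ∈ J, red u := fun u hu => hJ u (Finset.mem_insert_of_mem hu)
    exact ih hJ' (fun u hu w hw => hind u (Finset.mem_insert_of_mem hu) w
      (Finset.mem_insert_of_mem hw))
      (h.of_insert hU hR hJ' hv (mem_freeRed_of_insert hjJ hJ hind))

end Descent

section Main

variable {V : Type} {G : SimpleGraph V} {red : V → Prop} {J : Finset V} {v j : V}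

/-- If some type over `insert j J` contains only finitely many pairwise nonadjacent vertices, but
the type over `J` below it contains infinitely many, and the red vertices outside of the cliques of
`J` do not form a single clique, then the type over `J` is uniform. -/
lemma isUniformOver_of_finite (hU : Ultrahomogeneous G red)
    (hR : IsUnionOfCliques G {v | red v}) (hB : IsUnionOfCliques G {v | ¬ red v})
    (hJ : ∀ j ∈ J, red j) (hv : ¬ red v) (hj : j ∈ freeRed G red J)
    (hinf : ∃ S ⊆ blueType G red J v, IsIndepIn G S ∧ S.Infinite)
    (hfin : ¬ ∃ S ⊆ {b | b ∈ blueType G red J v ∧ (G.Adj b j ↔ G.Adj v j)},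
      IsIndepIn G S ∧ S.Infinite)
    (hne : ∃ r ∈ freeRed G red J, ∃ s ∈ freeRed G red J, ¬ SameClique G r s) :
    IsUniformOver G red J v := by
  have := infinite_blueCliques hB hinf
  have hTj := finite_trace hB hfin
  have hT := isHomogeneousFamily_trace hB hU hJ hv hj Iff.rfl hTj
  have hequiv : Equivalence fun r s : freeRed G red J => SameClique G r.1 s.1 :=
    (cliqueSetoid (Q := freeRed G red J) hR fun _ h => h.1).iseqv
  obtain ⟨r₀, hr₀, s₀, hs₀, hrs₀⟩ := hne
  have htrace : ∀ r ∈ freeRed G red J, ∀ s ∈ freeRed G red J, SameClique G r s →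
      trace hB J v (G.Adj v j) r = trace hB J v (G.Adj v j) s := fun r hr s hs hrs =>
    hT.eq_of_rel hequiv ⟨⟨r₀, hr₀⟩, ⟨s₀, hs₀⟩, hrs₀⟩ (a := ⟨r, hr⟩) (a' := ⟨s, hs⟩) hrs
  have imp : ∀ b ∈ blueType G red J v, ∀ r ∈ freeRed G red J, ∀ s ∈ freeRed G red J,
      SameClique G r s → (G.Adj b r ↔ G.Adj v j) → (G.Adj b s ↔ G.Adj v j) := by
    intro b hb r hr s hs hrs hbr
    obtain ⟨c, hcb, hcs⟩ : Quotient.mk _ ⟨b, hb⟩ ∈ trace hB J v (G.Adj v j) s := by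
      rw [← htrace r hr s hs hrs]
      exact ⟨⟨b, hb⟩, rfl, hbr⟩
    exact adj_iff_of_sameClique hB hU hJ hs (hT.finite ⟨s, hs⟩) c.2 hb (Quotient.exact hcb) hcs
  intro b hb
  have move : ∀ c ∈ blueType G red J v, ∃ r ∈ freeRed G red J, (G.Adj b r ↔ G.Adj c j) := by
    intro c hc
    obtain ⟨ψ, hψ, hcb, -⟩ := exists_fixing_pair (v := v) hU hJ (Or.inr ⟨hc, hb⟩)
      (Or.inr ⟨hc, hb⟩) (by simp) (by simp)
    exact ⟨ψ j, hψ.mem_freeRed hj, by rw [← hcb, ψ.map_adj_iff]⟩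
  refine ⟨fun r hr s hs hrs => ?_, fun p => ?_⟩
  · have h1 := imp b hb r hr s hs hrs
    have h2 := imp b hb s hs r hr hrs.symm
    tauto
  · by_cases hp : p ↔ G.Adj v j
    · rw [hp]
      exact move v (mem_blueType_self hv)
    · obtain ⟨⟨d⟩, hd⟩ := hTj.exists_notMem
      obtain ⟨r, hr, hrd⟩ := move d d.2
      have hdj : ¬ (G.Adj d j ↔ G.Adj v j) := fun h => hd ⟨d, rfl, h⟩
      exact ⟨r, hr, by tauto⟩

/-- If the red vertices outside of the cliques of `J` form a single clique, then a failure of the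
conclusion at `j` matches this clique with the blue cliques of the type of `v` over `J`. -/
lemma matching_of_finite (hU : Ultrahomogeneous G red) (hB : IsUnionOfCliques G {v | ¬ red v})
    (hJ : ∀ j ∈ J, red j) (hv : ¬ red v) (hj : j ∈ freeRed G red J)
    (hinf : ∃ S ⊆ blueType G red J v, IsIndepIn G S ∧ S.Infinite)
    (hfin : ¬ ∃ S ⊆ {b | b ∈ blueType G red J v ∧ (G.Adj b j ↔ G.Adj v j)},
      IsIndepIn G S ∧ S.Infinite)
    (hall : ∀ r ∈ freeRed G red J, ∀ s ∈ freeRed G red J, SameClique G r s) :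
    (freeRed G red J).Infinite ∧
    ∀ b ∈ blueType G red J v,
      (∃ r ∈ freeRed G red J, (G.Adj b r ↔ G.Adj v j)) ∧
      (∀ r ∈ freeRed G red J, ∀ s ∈ freeRed G red J, (G.Adj b r ↔ G.Adj v j) →
        (G.Adj b s ↔ G.Adj v j) → r = s) ∧
      ∀ c ∈ blueType G red J v, ∀ r ∈ freeRed G red J, (G.Adj b r ↔ G.Adj v j) →
        ((G.Adj c r ↔ G.Adj v j) ↔ SameClique G b c) := by
  have := infinite_blueCliques hB hinf
  have hTj := finite_trace hB hfin
  have hT := isHomogeneousFamily_trace hB hU hJ hv hj Iff.rfl hTj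
  have : Nonempty (freeRed G red J) := ⟨⟨j, hj⟩⟩
  obtain ⟨hex, huniq, hsingle⟩ := hT.partition_of_total fun r s => hall r.1 r.2 s.1 s.2
  have closed : ∀ {b c r : V}, b ∈ blueType G red J v → c ∈ blueType G red J v →
      r ∈ freeRed G red J → SameClique G b c → (G.Adj b r ↔ G.Adj v j) →
      (G.Adj c r ↔ G.Adj v j) := fun {b c r} hb hc hr hbc hbr =>
    adj_iff_of_sameClique hB hU hJ hr (hT.finite ⟨r, hr⟩) hb hc hbc hbr
  refine ⟨fun hfr => ?_, fun b hb => ⟨?_, ?_, ?_⟩⟩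
  · have := hfr.to_subtype
    refine Set.infinite_univ (α := BlueCliques hB J v)
      ((Set.finite_iUnion hT.finite).subset fun x _ => ?_)
    obtain ⟨r, hr⟩ := hex x
    exact Set.mem_iUnion.2 ⟨r, hr⟩
  · obtain ⟨r, c, hcb, hcr⟩ := hex (Quotient.mk _ ⟨b, hb⟩)
    exact ⟨r, r.2, closed c.2 hb r.2 (Quotient.exact hcb) hcr⟩
  · intro r hr s hs hbr hbs
    exact congrArg Subtype.val (huniq (Quotient.mk _ ⟨b, hb⟩) ⟨r, hr⟩ ⟨s, hs⟩
      ⟨⟨b, hb⟩, rfl, hbr⟩ ⟨⟨b, hb⟩, rfl, hbs⟩)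
  · intro c hc r hr hbr
    refine ⟨fun hcr => ?_, fun hbc => closed hb hc hr hbc hbr⟩
    exact Quotient.exact (hsingle ⟨r, hr⟩ (Quotient.mk _ ⟨b, hb⟩) (Quotient.mk _ ⟨c, hc⟩)
      ⟨⟨b, hb⟩, rfl, hbr⟩ ⟨⟨c, hc⟩, rfl, hcr⟩)

/-- The matching configuration cannot occur with two red cliques outside of those of `J`. -/
lemma false_of_finite_of_total [DecidableEq V] (hU : Ultrahomogeneous G red)
    (hR : IsUnionOfCliques G {v | red v}) (hB : IsUnionOfCliques G {v | ¬ red v})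
    (hJ : ∀ j ∈ J, red j) (hv : ¬ red v) {i : V} (hi : i ∈ freeRed G red J)
    (hj : j ∈ freeRed G red (insert i J))
    (hinf : ∃ S ⊆ blueType G red (insert i J) v, IsIndepIn G S ∧ S.Infinite)
    (hfin : ¬ ∃ S ⊆ {b | b ∈ blueType G red (insert i J) v ∧ (G.Adj b j ↔ G.Adj v j)},
      IsIndepIn G S ∧ S.Infinite)
    (hall : ∀ r ∈ freeRed G red (insert i J), ∀ s ∈ freeRed G red (insert i J),
      SameClique G r s) : False := by
  have hJi : ∀ u ∈ insert i J, red u := by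
    simpa [Finset.forall_mem_insert] using ⟨hi.1, hJ⟩
  obtain ⟨hbig, hmatch⟩ := matching_of_finite hU hB hJi hv hj hinf hfin hall
  obtain ⟨hj, hij⟩ := mem_freeRed_insert.1 hj
  have transport : ∀ x ∈ freeRed G red J, ∃ ψ : G ≃g G, IsFixing red J ψ ∧ ψ x = i ∧
      (∀ r ∈ freeRed G red J, ¬ SameClique G x r → ψ r ∈ freeRed G red (insert i J)) ∧
      ∀ b ∈ blueType G red J v, (G.Adj b x ↔ G.Adj v i) →
        ψ b ∈ blueType G red (insert i J) v := by
    intro x hx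
    obtain ⟨ψ, hψ, hxi, -⟩ := exists_fixing_red hU hJ hx hx hi hi (by simp) (by simp [SameClique])
    refine ⟨ψ, hψ, hxi, fun r hr hxr => ?_, fun b hb hbx => ?_⟩
    · refine mem_freeRed_insert.2 ⟨hψ.mem_freeRed hr, ?_⟩
      rwa [← hxi, sameClique_iso]
    · refine mem_blueType_insert.2 ⟨hψ.mem_blueType hb, ?_⟩
      rw [← hbx, ← hxi, ψ.map_adj_iff]
  -- The properties of the matching hold with any vertex `x` in place of `i`.
  have big : ∀ x ∈ freeRed G red J, {r | r ∈ freeRed G red J ∧ ¬ SameClique G x r}.Infinite := by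
    intro x hx hfinite
    obtain ⟨ψ, hψ, hxi, -⟩ := transport x hx
    refine hbig ((hfinite.image ψ).subset fun r hr => ⟨ψ.symm r, ⟨?_, ?_⟩, by simp⟩)
    · exact hψ.symm.mem_freeRed (mem_freeRed_insert.1 hr).1
    · rw [← sameClique_iso ψ, hxi, RelIso.apply_symm_apply]
      exact (mem_freeRed_insert.1 hr).2
  have same : ∀ x ∈ freeRed G red J, ∀ r ∈ freeRed G red J, ∀ s ∈ freeRed G red J,
      ¬ SameClique G x r → ¬ SameClique G x s → SameClique G r s := by
    intro x hx r hr s hs hxr hxs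
    obtain ⟨ψ, -, -, h, -⟩ := transport x hx
    exact (sameClique_iso ψ).1 (hall _ (h r hr hxr) _ (h s hs hxs))
  have uniq : ∀ x ∈ freeRed G red J, ∀ r ∈ freeRed G red J, ∀ s ∈ freeRed G red J,
      ¬ SameClique G x r → ¬ SameClique G x s → ∀ b ∈ blueType G red J v,
      (G.Adj b x ↔ G.Adj v i) → (G.Adj b r ↔ G.Adj v j) → (G.Adj b s ↔ G.Adj v j) → r = s := by
    intro x hx r hr s hs hxr hxs b hb hbx hbr hbs
    obtain ⟨ψ, -, -, h, hb'⟩ := transport x hx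
    exact ψ.injective ((hmatch _ (hb' b hb hbx)).2.1 _ (h r hr hxr) _ (h s hs hxs)
      (by rwa [ψ.map_adj_iff]) (by rwa [ψ.map_adj_iff]))
  have exis : ∀ x ∈ freeRed G red J, ∀ b ∈ blueType G red J v, (G.Adj b x ↔ G.Adj v i) →
      ∃ r ∈ freeRed G red J, ¬ SameClique G x r ∧ (G.Adj b r ↔ G.Adj v j) := by
    intro x hx b hb hbx
    obtain ⟨ψ, hψ, hxi, h, hb'⟩ := transport x hx
    obtain ⟨r, hr, hbr⟩ := (hmatch _ (hb' b hb hbx)).1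
    rw [mem_freeRed_insert] at hr
    refine ⟨ψ.symm r, hψ.symm.mem_freeRed hr.1, ?_, ?_⟩
    · rw [← sameClique_iso ψ, hxi, RelIso.apply_symm_apply]
      exact hr.2
    · rw [← ψ.map_adj_iff, RelIso.apply_symm_apply]
      exact hbr
  have blue : ∀ x ∈ freeRed G red J, ∀ r ∈ freeRed G red J, ¬ SameClique G x r →
      ∀ b ∈ blueType G red J v, ∀ c ∈ blueType G red J v,
      (G.Adj b x ↔ G.Adj v i) → (G.Adj c x ↔ G.Adj v i) → (G.Adj b r ↔ G.Adj v j) →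
      ((G.Adj c r ↔ G.Adj v j) ↔ SameClique G b c) := by
    intro x hx r hr hxr b hb c hc hbx hcx hbr
    obtain ⟨ψ, -, -, h, hb'⟩ := transport x hx
    have := (hmatch _ (hb' b hb hbx)).2.2 _ (hb' c hc hcx) _ (h r hr hxr)
      (by rwa [ψ.map_adj_iff])
    rwa [ψ.map_adj_iff, sameClique_iso] at this
  have other : ∀ x ∈ freeRed G red J, ∀ a, ∀ b, ∃ r ∈ freeRed G red J,
      ¬ SameClique G x r ∧ r ≠ a ∧ r ≠ b := by
    intro x hx a b
    obtain ⟨r, hr, hrab⟩ := (big x hx).exists_notMem_finset {a, b}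
    exact ⟨r, hr.1, hr.2, by simpa using hrab⟩
  have hvJ : v ∈ blueType G red J v := mem_blueType_self hv
  have hji : ¬ SameClique G j i := fun h => hij h.symm
  -- Each pair of vertices in different cliques is the trace of some blue vertex.
  have pairs : ∀ r ∈ freeRed G red J, ∀ s ∈ freeRed G red J, ¬ SameClique G r s →
      ∃ b ∈ blueType G red J v, ∀ x ∈ freeRed G red J,
        ((G.Adj b x ↔ G.Adj v j) ↔ x = r ∨ x = s) := by
    obtain ⟨k, hk, hkj, hkv, t, ht, htk, htv⟩ : ∃ k ∈ freeRed G red J, ¬ SameClique G k j ∧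
        (G.Adj v k ↔ G.Adj v j) ∧ ∃ t ∈ freeRed G red J, ¬ SameClique G t k ∧
        (G.Adj v t ↔ G.Adj v i) := by
      by_cases hsign : G.Adj v i ↔ G.Adj v j
      · exact ⟨i, hi, hij, hsign, j, hj, hji, hsign.symm⟩
      · obtain ⟨t, ht, hit, htj, -⟩ := other i hi j j
        have htv : G.Adj v t ↔ G.Adj v i := by
          have : ¬ (G.Adj v t ↔ G.Adj v j) := fun h =>
            htj (uniq i hi t ht j hj hit hij v hvJ Iff.rfl h Iff.rfl)
          tauto
        obtain ⟨k, hk, htk, hkv⟩ := exis t ht v hvJ htv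
        refine ⟨k, hk, fun hkj => htk ?_, hkv, t, ht, htk, htv⟩
        exact (same i hi t ht j hj hit hij).trans hR ht.1 hj.1 hk.1 hkj.symm
    have hjk : ¬ SameClique G j k := fun h => hkj h.symm
    have trace_v : ∀ x ∈ freeRed G red J, ((G.Adj v x ↔ G.Adj v j) ↔ x = k ∨ x = j) := by
      intro x hx
      refine ⟨fun hxv => ?_, ?_⟩
      · by_cases hix : SameClique G i x
        · left
          have htj : SameClique G t j := same k hk t ht j hj (fun h => htk h.symm) hkj
          have hti : ¬ SameClique G t i := fun h => hij (h.symm.trans hR hi.1 ht.1 hj.1 htj)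
          exact uniq t ht x hx k hk (fun h => hti (h.trans hR ht.1 hx.1 hi.1 hix.symm)) htk
            v hvJ htv hxv hkv
        · right
          exact uniq i hi x hx j hj hix hij v hvJ Iff.rfl hxv Iff.rfl
      · rintro (rfl | rfl)
        · exact hkv
        · exact Iff.rfl
    intro r hr s hs hrs
    have hne : ∀ {a b : V}, ¬ SameClique G a b → a ≠ b := fun h e => h (Or.inl e)
    obtain ⟨ψ, hψ, hkr, hjs⟩ := exists_fixing_red hU hJ hk hj hr hs
      (by simp [hne hkj, hne hrs]) (by simp [hkj, hrs])
    refine ⟨ψ v, hψ.mem_blueType hvJ, fun x hx => ?_⟩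
    have := trace_v _ (hψ.symm.mem_freeRed hx)
    rw [← ψ.map_adj_iff, RelIso.apply_symm_apply] at this
    rw [this, RelIso.symm_apply_eq, RelIso.symm_apply_eq, hkr, hjs]
  obtain ⟨s, hs, his, hsj, -⟩ := other i hi j j
  obtain ⟨t, ht, hit, htj, hts⟩ := other i hi j s
  obtain ⟨u, hu, hju, hui, -⟩ := other j hj i i
  have hjs : SameClique G j s := same i hi j hj s hs hij his
  have hjt : SameClique G j t := same i hi j hj t ht hij hit
  have hut : ¬ SameClique G u t := fun h =>
    hju (hjt.trans hR hj.1 ht.1 hu.1 h.symm)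
  have hne : ∀ {a b : V}, ¬ SameClique G a b → a ≠ b := fun h e => h (Or.inl e)
  have huj : u ≠ j := fun h => hju (Or.inl h.symm)
  have hus : u ≠ s := fun h => hju (h ▸ hjs)
  obtain ⟨b, hb, hbtr⟩ := pairs i hi j hj hij
  obtain ⟨c, hc, hctr⟩ := pairs i hi s hs his
  by_cases hsign : G.Adj v i ↔ G.Adj v j
  · obtain ⟨d, hd, hdtr⟩ := pairs u hu t ht hut
    have hbc : ¬ SameClique G b c := by
      intro h
      have hbi := (hbtr i hi).2 (Or.inl rfl)
      have hci := (hctr i hi).2 (Or.inl rfl)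
      have h1 := (blue i hi j hj hij b hb c hc (hbi.trans hsign.symm) (hci.trans hsign.symm)
        ((hbtr j hj).2 (Or.inr rfl))).2 h
      rcases (hctr j hj).1 h1 with h | h
      · exact hne hij h.symm
      · exact hsj h.symm
    -- Nonadjacent blue vertices have a common vertex in their traces.
    have meet : ∀ e ∈ blueType G red J v, ∀ f ∈ blueType G red J v, ¬ SameClique G e f →
        ∃ x ∈ freeRed G red J, (G.Adj e x ↔ G.Adj v j) ∧ (G.Adj f x ↔ G.Adj v j) := by
      intro e he f hf hef
      obtain ⟨ψ, hψ, hbe, hcf⟩ := exists_fixing_pair (v := v) hU hJ (Or.inr ⟨hb, he⟩)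
        (Or.inr ⟨hc, hf⟩) (by simp [hne hbc, hne hef])
        (iff_of_false (fun h => hbc (Or.inr h)) fun h => hef (Or.inr h))
      refine ⟨ψ i, hψ.mem_freeRed hi, ?_, ?_⟩
      · rw [← hbe, ψ.map_adj_iff]
        exact (hbtr i hi).2 (Or.inl rfl)
      · rw [← hcf, ψ.map_adj_iff]
        exact (hctr i hi).2 (Or.inl rfl)
    have hbd : SameClique G b d := by
      by_contra h
      obtain ⟨x, hx, h1, h2⟩ := meet b hb d hd h
      rw [hbtr x hx] at h1
      rw [hdtr x hx] at h2
      rcases h1 with rfl | rfl <;> rcases h2 with rfl | rfl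
      · exact hui rfl
      · exact hne hit rfl
      · exact huj rfl
      · exact htj rfl
    have hcd : SameClique G c d := by
      by_contra h
      obtain ⟨x, hx, h1, h2⟩ := meet c hc d hd h
      rw [hctr x hx] at h1
      rw [hdtr x hx] at h2
      rcases h1 with rfl | rfl <;> rcases h2 with rfl | rfl
      · exact hui rfl
      · exact hne hit rfl
      · exact hus rfl
      · exact hts rfl
    exact hbc (hbd.trans hB hb.1 hd.1 hc.1 hcd.symm)
  · have away : ∀ e x, ¬ (G.Adj e x ↔ G.Adj v j) → (G.Adj e x ↔ G.Adj v i) := by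
      intro e x
      tauto
    have hbt := away b t fun h => ((hbtr t ht).1 h).elim (fun h => hne hit h.symm) htj
    have hct := away c t fun h => ((hctr t ht).1 h).elim (fun h => hne hit h.symm) hts
    have hbu := away b u fun h => ((hbtr u hu).1 h).elim hui huj
    have hcu := away c u fun h => ((hctr u hu).1 h).elim hui hus
    have hbc : SameClique G b c := (blue t ht i hi
      (fun h => hit h.symm) b hb c hc hbt hct ((hbtr i hi).2 (Or.inl rfl))).1
      ((hctr i hi).2 (Or.inl rfl))
    have h1 := (blue u hu j hj (fun h => hju h.symm) b hb c hc hbu hcu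
      ((hbtr j hj).2 (Or.inr rfl))).2 hbc
    rcases (hctr j hj).1 h1 with h | h
    · exact hne hij h.symm
    · exact hsj h.symm

end Main

/-- in a basic CUH graph omitting `D` with a non-independent color class,
with ω_R ≥ 2 and α_B = ℵ₀, for every finite red independent set `J` and blue vertex `v`,
the set of blue vertices with the same neighbors in `J` as `v` contains an infinite
independent set. -/
theorem stmt_15 {V : Type} (G : SimpleGraph V) (red : V → Prop)
    (hG : IsBasicCUH G red)
    (hOmD : ¬ Realizes G red Dgraph Dred)
    (hni : (∃ u v, red u ∧ red v ∧ G.Adj u v) ∨ (∃ u v, ¬ red u ∧ ¬ red v ∧ G.Adj u v))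
    (hωR : ∀ M : Set V, IsMaxCliqueIn G {v | red v} M → 2 ≤ Cardinal.mk M)
    (hαB : ∃ S : Set V, S ⊆ {v | ¬ red v} ∧ IsIndepIn G S ∧ S.Infinite)
    (J : Finset V) (hJred : ∀ v ∈ J, red v) (hJind : ∀ u ∈ J, ∀ v ∈ J, ¬ G.Adj u v)
    (v : V) (hv : ¬ red v) :
    ∃ S : Set V, S ⊆ {b | ¬ red b ∧ ∀ r ∈ J, (G.Adj b r ↔ G.Adj v r)} ∧
      IsIndepIn G S ∧ S.Infinite := by
  classical
  obtain ⟨⟨hcount, -, hU, hR, hB⟩, hnb, ⟨r₀, s₀, hr₀, hs₀, hrs₀, hadj₀⟩, -⟩ := hG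
  change ∃ S ⊆ blueType G red J v, _
  induction J using Finset.induction_on with
  | empty =>
    obtain ⟨S, hS, hind, hSinf⟩ := hαB
    exact ⟨S, fun b hb => ⟨hS hb, by simp⟩, hind, hSinf⟩
  | insert j J hjJ ih =>
    have hJ : ∀ u ∈ J, red u := fun u hu => hJred u (Finset.mem_insert_of_mem hu)
    have hind : ∀ u ∈ J, ∀ w ∈ J, ¬ G.Adj u w := fun u hu w hw =>
      hJind u (Finset.mem_insert_of_mem hu) w (Finset.mem_insert_of_mem hw)
    have hinf := ih hJ hind
    have hj := mem_freeRed_of_insert hjJ hJred hJind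
    by_contra hcon
    have hfin : ¬ ∃ S ⊆ {b | b ∈ blueType G red J v ∧ (G.Adj b j ↔ G.Adj v j)},
        IsIndepIn G S ∧ S.Infinite := by
      rintro ⟨S, hS, h⟩
      exact hcon ⟨S, fun b hb => mem_blueType_insert.2 (hS hb), h⟩
    by_cases hne : ∃ r ∈ freeRed G red J, ∃ s ∈ freeRed G red J, ¬ SameClique G r s
    · have huni := (isUniformOver_of_finite hU hR hB hJ hv hj hinf hfin hne).to_empty
        hU hR hv J hJ hind
      refine hnb (Or.inl (isBlowUpOf_of_twins hU hR hωR hr₀ ?_))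
      intro b r s hb hr hs hrs
      exact (huni b ⟨hb, by simp⟩).1 r ⟨hr, by simp⟩ s ⟨hs, by simp⟩ hrs
    · push Not at hne
      obtain rfl | ⟨i, hiJ⟩ := J.eq_empty_or_nonempty
      · rcases hne r₀ ⟨hr₀, by simp⟩ s₀ ⟨hs₀, by simp⟩ with h | h
        · exact hrs₀ h
        · exact hadj₀ h
      · rw [← Finset.insert_erase hiJ] at hj hinf hfin hne
        refine false_of_finite_of_total hU hR hB
          (fun u hu => hJ u (Finset.mem_of_mem_erase hu)) hv ?_ hj hinf hfin hne
        refine mem_freeRed_of_insert (Finset.notMem_erase i J) ?_ ?_ <;>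
          rw [Finset.insert_erase hiJ] <;> assumption
end

section
/- Let G be a basic CUH graph in which D or D̃ is omitted and in which at least one color class does not form an independent set. Then: (1) every non-monochromatic minimally omitted subgraph of G is isomorphic to one of T_r, T̃_r, T_b, T̃_b, D, D̃; (2) for every H ∈ {T_r, T̃_r, T_b, T̃_b, D, D̃}, H is minimally omitted in G if and only if its cross-edge complement H̃ is minimally omitted in G; and (3) G is isomorphic to its cross-edge complement G̃. -/
open SimpleGraph

/-! ### Two-colored graphs with a homogeneity property for finite partial maps -/

/-- A basic CUH graph, with the coloring Boolean-valued so that the two colors play symmetric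
roles, and with homogeneity stated for finite relations. -/
structure BasicCUH {V : Type} (G : SimpleGraph V) (col : V → Bool) : Prop where
  countable : Countable V
  infinite : Infinite V
  extend : ∀ p : Set (V × V), p.Finite → (∀ x ∈ p, col x.2 = col x.1) →
    (∀ x ∈ p, ∀ y ∈ p, (x.1 = y.1 ↔ x.2 = y.2) ∧ (G.Adj x.1 y.1 ↔ G.Adj x.2 y.2)) →
    ∃ ψ : G ≃g G, (∀ v, col (ψ v) = col v) ∧ ∀ x ∈ p, ψ x.1 = x.2
  adj_trans : ∀ u v w, col u = col v → col v = col w → G.Adj u v → G.Adj v w → u ≠ w →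
    G.Adj u w
  not_blowUp : ∀ k, ¬ IsBlowUpOf G (fun v => col v = k)
  exists_not_adj : ∀ k, ∃ u v, col u = k ∧ col v = k ∧ u ≠ v ∧ ¬ G.Adj u v

/-- The color class `k` contains an edge. -/
def HasEdge {V : Type} (G : SimpleGraph V) (col : V → Bool) (k : Bool) : Prop :=
  ∃ u v, col u = k ∧ col v = k ∧ G.Adj u v

/-- Every vertex of the other color is adjacent to exactly one end of every edge of color `k`. -/
def Splits {V : Type} (G : SimpleGraph V) (col : V → Bool) (k : Bool) : Prop :=
  ∀ u v w, col u = k → col v = k → col w = !k → G.Adj u v → (G.Adj u w ↔ ¬ G.Adj v w)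

/-- Between an edge of one color and an edge of the other there is an even number of cross
edges. -/
def EvenCross {V : Type} (G : SimpleGraph V) (col : V → Bool) : Prop :=
  ∀ k u v x y, col u = k → col v = k → col x = !k → col y = !k → G.Adj u v → G.Adj x y →
    ((G.Adj u x ↔ G.Adj u y) ↔ (G.Adj v x ↔ G.Adj v y))

/-- All cliques of color `k` are infinite. -/
def InfCliques {V : Type} (G : SimpleGraph V) (col : V → Bool) (k : Bool) : Prop :=
  ∀ c, col c = k → {x | col x = k ∧ G.Adj x c}.Infinite

/-- The vertices in the `k`-colored clique of `c` whose adjacency to `F` is given by `v`. -/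
def cell {V : Type} (G : SimpleGraph V) (col : V → Bool) (k : Bool) (F : Set V) (v : V → Prop)
    (c : V) : Set V :=
  {x | col x = k ∧ (x = c ∨ G.Adj x c) ∧ ∀ b ∈ F, (G.Adj x b ↔ v b)}

namespace BasicCUH

variable {V : Type} {G : SimpleGraph V} {col : V → Bool}

theorem extend_one (h : BasicCUH G col) {F : Set V} (hF : F.Finite) {a a' : V}
    (hc : col a' = col a) (he : ∀ f ∈ F, (a = f ↔ a' = f))
    (ha : ∀ f ∈ F, (G.Adj a f ↔ G.Adj a' f)) :
    ∃ ψ : G ≃g G, (∀ v, col (ψ v) = col v) ∧ (∀ f ∈ F, ψ f = f) ∧ ψ a = a' := by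
  obtain ⟨ψ, h1, h2⟩ := h.extend (insert (a, a') ((fun f => (f, f)) '' F))
    ((hF.image _).insert _) (by grind) (by
      have := G.adj_comm
      have := G.irrefl (v := a)
      have := G.irrefl (v := a')
      rintro x (rfl | ⟨f, hf, rfl⟩) y (rfl | ⟨g, hg, rfl⟩) <;> grind)
  refine ⟨ψ, h1, fun f hf => h2 (f, f) (by simp [hf]), h2 (a, a') (by simp)⟩

theorem extend_two (h : BasicCUH G col) {F : Set V} (hF : F.Finite) {a a' d d' : V}
    (hca : col a' = col a) (hcd : col d' = col d)
    (hea : ∀ f ∈ F, (a = f ↔ a' = f)) (hed : ∀ f ∈ F, (d = f ↔ d' = f)) (hee : a = d ↔ a' = d')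
    (ha : ∀ f ∈ F, (G.Adj a f ↔ G.Adj a' f)) (hd : ∀ f ∈ F, (G.Adj d f ↔ G.Adj d' f))
    (had : G.Adj a d ↔ G.Adj a' d') :
    ∃ ψ : G ≃g G, (∀ v, col (ψ v) = col v) ∧ (∀ f ∈ F, ψ f = f) ∧ ψ a = a' ∧ ψ d = d' := by
  obtain ⟨ψ, h1, h2⟩ := h.extend (insert (a, a') (insert (d, d') ((fun f => (f, f)) '' F)))
    (((hF.image _).insert _).insert _) (by grind) (by
      have := G.adj_comm
      have := G.irrefl (v := a)
      have := G.irrefl (v := a')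
      have := G.irrefl (v := d)
      have := G.irrefl (v := d')
      rintro x (rfl | rfl | ⟨f, hf, rfl⟩) y (rfl | rfl | ⟨g, hg, rfl⟩) <;> grind)
  exact ⟨ψ, h1, fun f hf => h2 (f, f) (by simp [hf]), h2 (a, a') (by simp),
    h2 (d, d') (by simp)⟩

theorem extend_pair (h : BasicCUH G col) {a a' d d' : V}
    (hca : col a' = col a) (hcd : col d' = col d) (hee : a = d ↔ a' = d')
    (had : G.Adj a d ↔ G.Adj a' d') :
    ∃ ψ : G ≃g G, (∀ v, col (ψ v) = col v) ∧ ψ a = a' ∧ ψ d = d' := by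
  obtain ⟨ψ, h1, -, h2⟩ := h.extend_two Set.finite_empty hca hcd (by simp) (by simp) hee
    (by simp) (by simp) had
  exact ⟨ψ, h1, h2⟩

/-- In the class `k`, every vertex has a nonneighbor. -/
theorem exists_not_adj_of (h : BasicCUH G col) {k : Bool} {c : V} (hc : col c = k) :
    ∃ d, col d = k ∧ d ≠ c ∧ ¬ G.Adj c d := by
  obtain ⟨u, v, hu, hv, huv, hn⟩ := h.exists_not_adj k
  obtain ⟨ψ, h1, -, h2⟩ := h.extend_one (F := ∅) Set.finite_empty (a := u) (a' := c)
    (by rw [hc, hu]) (by simp) (by simp)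
  refine ⟨ψ v, by rw [h1, hv], ?_, ?_⟩
  · rw [← h2]; exact fun he => huv (ψ.injective he).symm
  · rwa [← h2, ψ.map_adj_iff]

theorem exists_adj_of (h : BasicCUH G col) {k : Bool} (hk : HasEdge G col k) {c : V}
    (hc : col c = k) : ∃ d, col d = k ∧ G.Adj c d := by
  obtain ⟨u, v, hu, hv, hn⟩ := hk
  obtain ⟨ψ, h1, -, h2⟩ := h.extend_one (F := ∅) Set.finite_empty (a := u) (a' := c)
    (by rw [hc, hu]) (by simp) (by simp)
  refine ⟨ψ v, by rw [h1, hv], ?_⟩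
  rwa [← h2, ψ.map_adj_iff]

theorem exists_col (h : BasicCUH G col) (k : Bool) : ∃ v, col v = k := by
  obtain ⟨u, -, hu, -⟩ := h.exists_not_adj k
  exact ⟨u, hu⟩

/-- Since the graph is not a blow-up, some edge of color `k` is split by a vertex of the other
color. -/
theorem exists_split (h : BasicCUH G col) {k : Bool} (hk : HasEdge G col k) :
    ∃ u v b, col u = k ∧ col v = k ∧ col b = !k ∧ G.Adj u v ∧ G.Adj u b ∧ ¬ G.Adj v b := by
  classical
  by_contra hcon
  push Not at hcon
  have twin : ∀ u v b, col u = k → col v = k → col b = !k → G.Adj u v →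
      (G.Adj u b ↔ G.Adj v b) := fun u v b hu hv hb huv =>
    ⟨hcon u v b hu hv hb huv, hcon v u b hv hu hb huv.symm⟩
  have := h.countable
  obtain ⟨u₀, v₀, hu₀, hv₀, huv₀⟩ := hk
  let s : Setoid {v : V // col v = k} :=
    { r := fun x y => x = y ∨ G.Adj x.1 y.1
      iseqv := by
        refine ⟨fun x => .inl rfl, ?_, ?_⟩
        · rintro x y (rfl | hxy)
          · exact .inl rfl
          · exact .inr hxy.symm
        · rintro x y z (rfl | hxy) (rfl | hyz)
          · exact .inl rfl
          · exact .inr hyz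
          · exact .inr hxy
          · by_cases hxz : x = z
            · exact .inl hxz
            · exact .inr (h.adj_trans _ _ _ (by rw [x.2, y.2]) (by rw [y.2, z.2]) hxy hyz
                (fun he => hxz (Subtype.ext he))) }
  let rep : {v : V // col v = k} → {v : V // col v = k} := fun x => (Quotient.mk s x).out
  have rep_rel : ∀ x, rep x = x ∨ G.Adj (rep x).1 x.1 := fun x => Quotient.mk_out (s := s) x
  have rep_eq : ∀ x y : {v : V // col v = k}, (x = y ∨ G.Adj x.1 y.1) → rep x = rep y := by
    intro x y hxy
    exact congrArg Quotient.out (Quotient.sound (s := s) hxy)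
  have hσ : ∀ u : V, ∃ σ : G ≃g G, (∀ v, col (σ v) = col v) ∧ (col u = k → σ u₀ = u) := by
    intro u
    by_cases hu : col u = k
    · obtain ⟨ψ, h1, -, h2⟩ := h.extend_one (F := ∅) Set.finite_empty (a := u₀) (a' := u)
        (by rw [hu₀, hu]) (by simp) (by simp)
      exact ⟨ψ, h1, fun _ => h2⟩
    · exact ⟨RelIso.refl _, fun _ => rfl, fun hu' => absurd hu' hu⟩
  choose σ hσc hσu using hσ
  let U := {v : V // ∀ hv : col v = k, rep ⟨v, hv⟩ = ⟨v, hv⟩}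
  let H : SimpleGraph U := G.comap Subtype.val
  let redH : U → Prop := fun u => col u.1 = k
  let I := {x : V // col x = k ∧ (x = u₀ ∨ G.Adj x u₀)}
  let F : {v : U // redH v} × I ⊕ {v : U // ¬ redH v} → V :=
    Sum.elim (fun ui => σ ui.1.1.1 ui.2.1) (fun b => b.1.1)
  have Fcol : ∀ x, col (F x) = k ↔ blowUpRed U redH I x := by
    rintro (⟨u, i⟩ | b)
    · simp [F, blowUpRed, hσc, i.2.1]
    · simpa [F, blowUpRed] using b.2
  have Frel : ∀ (u : {v : U // redH v}) (i : I), σ u.1.1 i.1 = u.1.1 ∨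
      G.Adj (σ u.1.1 i.1) u.1.1 := by
    intro u i
    have hu := hσu u.1.1 u.2
    rcases i.2.2 with hi | hi
    · left; rw [hi, hu]
    · right
      have := (σ u.1.1).map_adj_iff.2 hi
      rwa [hu] at this
  have Frep : ∀ (u : {v : U // redH v}) (i : I) (hc : col (σ u.1.1 i.1) = k),
      rep ⟨σ u.1.1 i.1, hc⟩ = ⟨u.1.1, u.2⟩ := by
    intro u i hc
    rw [← u.1.2 u.2]
    apply rep_eq
    rcases Frel u i with hi | hi
    · exact .inl (Subtype.ext hi)
    · exact .inr hi
  have Finj : Function.Injective F := by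
    intro x y hxy
    have hc : blowUpRed U redH I x ↔ blowUpRed U redH I y := by rw [← Fcol, ← Fcol, hxy]
    rcases x with ⟨u, i⟩ | b <;> rcases y with ⟨u', i'⟩ | b'
    · have hci : col (σ u.1.1 i.1) = k := by rw [hσc, i.2.1]
      have hci' : col (σ u'.1.1 i'.1) = k := by rw [hσc, i'.2.1]
      have hxy' : σ u.1.1 i.1 = σ u'.1.1 i'.1 := hxy
      have huu : u = u' := by
        have h1 := Frep u i hci
        have h2 := Frep u' i' hci'
        have h3 : (⟨σ u.1.1 i.1, hci⟩ : {v : V // col v = k}) = ⟨σ u'.1.1 i'.1, hci'⟩ :=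
          Subtype.ext hxy'
        rw [h3, h2] at h1
        exact Subtype.ext (Subtype.ext (congrArg Subtype.val h1).symm)
      subst huu
      have : i = i' := Subtype.ext ((σ u.1.1).injective hxy')
      rw [this]
    · simp [blowUpRed] at hc
    · simp [blowUpRed] at hc
    · exact congrArg Sum.inr (Subtype.ext (Subtype.ext hxy))
  have Fsurj : Function.Surjective F := by
    intro v
    by_cases hv : col v = k
    · have hr : ∀ hc : col (rep ⟨v, hv⟩).1 = k,
          rep ⟨(rep ⟨v, hv⟩).1, hc⟩ = ⟨(rep ⟨v, hv⟩).1, hc⟩ := by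
        intro hc
        exact rep_eq _ _ (rep_rel ⟨v, hv⟩)
      have hrv := hσu (rep ⟨v, hv⟩).1 (rep ⟨v, hv⟩).2
      refine ⟨.inl (⟨⟨(rep ⟨v, hv⟩).1, hr⟩, (rep ⟨v, hv⟩).2⟩,
        ⟨(σ (rep ⟨v, hv⟩).1).symm v, ?_, ?_⟩), by simp [F]⟩
      · rw [← hσc (rep ⟨v, hv⟩).1]; simpa using hv
      · rcases rep_rel ⟨v, hv⟩ with hi | hi
        · left
          apply (σ (rep ⟨v, hv⟩).1).injective
          rw [hrv, hi]; simp
        · right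
          rw [← (σ (rep ⟨v, hv⟩).1).map_adj_iff, hrv]
          simpa using hi.symm
    · exact ⟨.inr ⟨⟨v, fun hv' => absurd hv' hv⟩, hv⟩, rfl⟩
  have Fadj : ∀ x y, G.Adj (F x) (F y) ↔ (blowUp H redH I).Adj x y := by
    have cross : ∀ (u : {v : U // redH v}) (i : I) (b : {v : U // ¬ redH v}),
        G.Adj (σ u.1.1 i.1) b.1.1 ↔ G.Adj u.1.1 b.1.1 := by
      intro u i b
      have hb : col b.1.1 = !k := by
        simpa using Bool.eq_not_of_ne b.2
      rcases Frel u i with hi | hi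
      · rw [hi]
      · exact twin _ _ _ (by rw [hσc, i.2.1]) u.2 hb hi
    rintro (⟨u, i⟩ | b) (⟨u', i'⟩ | b')
    · have hci : col (σ u.1.1 i.1) = k := by rw [hσc, i.2.1]
      have hci' : col (σ u'.1.1 i'.1) = k := by rw [hσc, i'.2.1]
      have hH : ∀ u u' : {v : U // redH v}, ¬ H.Adj u.1 u'.1 := by
        intro u u' hadj
        have h1 := rep_eq ⟨u.1.1, u.2⟩ ⟨u'.1.1, u'.2⟩ (.inr hadj)
        rw [u.1.2 u.2, u'.1.2 u'.2] at h1
        exact G.ne_of_adj hadj (Subtype.mk.inj h1)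
      have key : G.Adj (σ u.1.1 i.1) (σ u'.1.1 i'.1) ↔ u = u' ∧ i ≠ i' := by
        constructor
        · intro hadj
          have h1 := rep_eq ⟨_, hci⟩ ⟨_, hci'⟩ (.inr hadj)
          rw [Frep, Frep] at h1
          have huu : u = u' := Subtype.ext (Subtype.ext (Subtype.mk.inj h1))
          subst huu
          refine ⟨rfl, ?_⟩
          rintro rfl
          exact G.irrefl hadj
        · rintro ⟨rfl, hne⟩
          rw [(σ u.1.1).map_adj_iff]
          have hne' : i.1 ≠ i'.1 := fun he => hne (Subtype.ext he)
          rcases i.2.2 with hi | hi <;> rcases i'.2.2 with hi' | hi'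
          · exact absurd (hi.trans hi'.symm) hne'
          · rw [hi]; exact hi'.symm
          · rw [hi']; exact hi
          · exact h.adj_trans _ u₀ _ (by rw [i.2.1, hu₀]) (by rw [i'.2.1, hu₀]) hi hi'.symm hne'
      simp only [F, Sum.elim_inl, blowUp, SimpleGraph.fromRel_adj]
      rw [key]
      constructor
      · rintro ⟨rfl, hne⟩
        exact ⟨by simpa using hne, .inl (.inr ⟨rfl, hne⟩)⟩
      · rintro ⟨-, (hadj | hh) | (hadj | ⟨he, hne⟩)⟩
        · exact absurd hadj (hH _ _)
        · exact hh
        · exact absurd hadj (hH _ _)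
        · exact ⟨he.symm, hne.symm⟩
    · simp only [F, Sum.elim_inl, Sum.elim_inr, blowUp, SimpleGraph.fromRel_adj]
      rw [cross]
      simp [H, G.adj_comm b'.1.1]
    · simp only [F, Sum.elim_inl, Sum.elim_inr, blowUp, SimpleGraph.fromRel_adj]
      rw [G.adj_comm, cross]
      simp [H, G.adj_comm b.1.1]
    · simp only [F, Sum.elim_inr, blowUp, SimpleGraph.fromRel_adj]
      have : H.Adj b'.1 b.1 ↔ H.Adj b.1 b'.1 := H.adj_comm _ _
      rw [this, or_self]
      constructor
      · intro hadj
        refine ⟨?_, hadj⟩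
        intro he
        rw [Sum.inr.inj he] at hadj
        exact G.irrefl hadj
      · exact fun hadj => hadj.2
  let E : blowUp H redH I ≃g G :=
    { toEquiv := Equiv.ofBijective F ⟨Finj, Fsurj⟩
      map_rel_iff' := by intro x y; exact Fadj x y }
  refine h.not_blowUp k ⟨U, H, redH, I, ?_, ?_, ?_, E.symm, ?_⟩
  · intro u v hu hv hadj
    have h1 := rep_eq ⟨u.1, hu⟩ ⟨v.1, hv⟩ (.inr hadj)
    rw [u.2 hu, v.2 hv] at h1
    exact G.ne_of_adj hadj (Subtype.mk.inj h1)
  · rw [Cardinal.two_le_iff]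
    exact ⟨⟨u₀, hu₀, .inl rfl⟩, ⟨v₀, hv₀, .inr huv₀.symm⟩,
      fun he => huv₀.ne (congrArg Subtype.val he)⟩
  · exact Cardinal.mk_le_aleph0
  · intro v
    rw [← Fcol]
    have : F (E.symm v) = v := E.apply_symm_apply v
    rw [this]

/-- Every vertex has different adjacencies to the ends of some edge at any given vertex of the
other color. -/
theorem exists_mixed (h : BasicCUH G col) {k : Bool} (hk : HasEdge G col k) {c b : V}
    (hc : col c = k) (hb : col b = !k) :
    ∃ c', col c' = k ∧ G.Adj c c' ∧ (G.Adj c' b ↔ ¬ G.Adj c b) := by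
  obtain ⟨u, v, d, hu, hv, hd, huv, hud, hvd⟩ := h.exists_split hk
  have hne : ∀ {x y : V}, col x = k → col y = !k → x ≠ y := by
    rintro x _ hx hy rfl
    simp [hx] at hy
  by_cases hcb : G.Adj c b
  · obtain ⟨ψ, h1, h2, h3⟩ := h.extend_pair (a := u) (a' := c) (d := d) (d' := b)
      (by rw [hc, hu]) (by rw [hb, hd]) (by simp [hne hu hd, hne hc hb]) (by simp [hud, hcb])
    refine ⟨ψ v, by rw [h1, hv], ?_, ?_⟩
    · rw [← h2, ψ.map_adj_iff]; exact huv
    · rw [← h3, ψ.map_adj_iff, ← h2, ψ.map_adj_iff]; simp [hud, hvd]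
  · obtain ⟨ψ, h1, h2, h3⟩ := h.extend_pair (a := v) (a' := c) (d := d) (d' := b)
      (by rw [hc, hv]) (by rw [hb, hd]) (by simp [hne hv hd, hne hc hb]) (by simp [hvd, hcb])
    refine ⟨ψ u, by rw [h1, hu], ?_, ?_⟩
    · rw [← h2, ψ.map_adj_iff]; exact huv.symm
    · rw [← h3, ψ.map_adj_iff, ← h2, ψ.map_adj_iff]; simp [hud, hvd]

theorem col_symm {ψ : G ≃g G} (hψ : ∀ v, col (ψ v) = col v) (v : V) :
    col (ψ.symm v) = col v := by
  rw [← hψ (ψ.symm v), ψ.apply_symm_apply]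

theorem adj_symm_apply (ψ : G ≃g G) (u v : V) : G.Adj (ψ.symm u) v ↔ G.Adj u (ψ v) := by
  rw [← ψ.map_adj_iff, ψ.apply_symm_apply]

theorem class_infinite (h : BasicCUH G col) (hE : ∃ k, HasEdge G col k) (k : Bool) :
    {v | col v = k}.Infinite := by
  intro hfin
  have hinf : {v | col v = !k}.Infinite := by
    intro hfin'
    have := h.infinite
    refine Set.infinite_univ (α := V) ((hfin.union hfin').subset fun v _ => ?_)
    by_cases hv : col v = k
    · exact .inl hv
    · exact .inr (by simpa using Bool.eq_not_of_ne hv)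
  have : Finite {v // col v = k} := hfin
  have : Infinite {v // col v = !k} := hinf.to_subtype
  obtain ⟨u, v, huv, hf⟩ := Finite.exists_ne_map_eq_of_infinite
    (fun (u : {v // col v = !k}) (b : {v // col v = k}) => G.Adj u.1 b.1)
  have htwin : ∀ b, col b = k → (G.Adj u.1 b ↔ G.Adj v.1 b) := fun b hb =>
    iff_of_eq (congrFun hf ⟨b, hb⟩)
  have hne : u.1 ≠ v.1 := fun he => huv (Subtype.ext he)
  have twins : ∀ u' v', col u' = !k → col v' = !k → u' ≠ v' → (G.Adj u' v' ↔ G.Adj u.1 v.1) →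
      ∀ b, col b = k → (G.Adj u' b ↔ G.Adj v' b) := by
    intro u' v' hu' hv' hne' hadj b hb
    obtain ⟨ψ, h1, h2, h3⟩ := h.extend_pair (a := u.1) (a' := u') (d := v.1) (d' := v')
      (by rw [hu', u.2]) (by rw [hv', v.2]) (by simp [hne, hne']) hadj.symm
    rw [← h2, ← h3, G.adj_comm, ← adj_symm_apply, G.adj_comm, htwin _ (by rw [col_symm h1, hb]),
      G.adj_comm, adj_symm_apply, G.adj_comm]
  by_cases hE' : HasEdge G col (!k)
  · obtain ⟨c, d, hc, hd, hcd⟩ := hE'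
    have hall : ∀ c d, col c = !k → col d = !k → G.Adj c d → ∀ b, col b = k →
        (G.Adj c b ↔ G.Adj d b) := by
      intro c d hc hd hcd b hb
      by_cases huv : G.Adj u.1 v.1
      · exact twins c d hc hd hcd.ne (by simp [huv, hcd]) b hb
      · obtain ⟨e, he, hne, hce⟩ := h.exists_not_adj_of hc
        have hde : ¬ G.Adj e d := fun hde => hce
          (h.adj_trans _ _ _ (hc.trans hd.symm) (hd.trans he.symm) hcd hde.symm hne.symm)
        have hed : e ≠ d := by
          rintro rfl
          exact hce hcd
        exact (twins c e hc he hne.symm (by simp [hce, huv]) b hb).trans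
          (twins e d he hd hed (by simp [hde, huv]) b hb)
    obtain ⟨b, hb⟩ := h.exists_col k
    obtain ⟨c', hc', hcc', hm⟩ := h.exists_mixed ⟨c, d, hc, hd, hcd⟩ hc (b := b) (by simpa using hb)
    have := hall c c' hc hc' hcc' b hb
    tauto
  · have hEk : HasEdge G col k := by
      obtain ⟨j, hj⟩ := hE
      rcases Bool.eq_or_eq_not j k with rfl | rfl
      · exact hj
      · exact absurd hj hE'
    have hno : ∀ c d, col c = !k → col d = !k → ¬ G.Adj c d := fun c d hc hd hcd =>
      hE' ⟨c, d, hc, hd, hcd⟩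
    obtain ⟨b, b', r, hb, hb', hr, hbb', hbr, hb'r⟩ := h.exists_split hEk
    obtain ⟨ψ, h1, h2, h3⟩ := h.extend_pair (a := b) (a' := b') (d := b') (d' := b)
      (by rw [hb, hb']) (by rw [hb, hb']) (by simp [eq_comm]) (G.adj_comm _ _)
    have h4 : G.Adj b' (ψ r) := by rwa [← h2, ψ.map_adj_iff]
    have h5 : col (ψ r) = !k := by rw [h1, hr]
    have hne' : ψ r ≠ r := by
      intro he
      rw [he] at h4
      exact hb'r h4
    have := twins (ψ r) r h5 hr hne' (by simp [hno _ _ h5 hr, hno _ _ u.2 v.2]) b' hb'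
    exact hb'r ((G.adj_comm _ _).1 (this.1 h4.symm))

theorem cell_map (h : BasicCUH G col) {k : Bool} {F : Set V} {v : V → Prop} {c c' z w x : V}
    (hc : col c = k) (hc' : col c' = k) {ψ : G ≃g G} (hψ : ∀ v, col (ψ v) = col v)
    (hF : ∀ f ∈ F, ψ f = f) (hz : z ∈ cell G col k F v c) (hw : w ∈ cell G col k F v c')
    (hzw : ψ z = w) (hx : x ∈ cell G col k F v c) : ψ x ∈ cell G col k F v c' := by
  obtain ⟨hxk, hxc, hxF⟩ := hx
  obtain ⟨hzk, hzc, -⟩ := hz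
  obtain ⟨hwk, hwc, -⟩ := hw
  have hxz : x = z ∨ G.Adj x z := by
    have := h.adj_trans x c z (by grind) (by grind)
    have := G.adj_comm c z
    grind
  have hxw : ψ x = w ∨ G.Adj (ψ x) w := by
    rcases hxz with rfl | hxz
    · exact .inl hzw
    · right; rwa [← hzw, ψ.map_adj_iff]
  refine ⟨by rw [hψ, hxk], ?_, ?_⟩
  · have := h.adj_trans (ψ x) w c' (by grind) (by grind)
    grind
  · intro b hb
    rw [← hxF b hb, ← ψ.map_adj_iff (v := x), hF b hb]

/-- A vertex `y` cannot cut out a proper nonempty finite part of a cell (or of its complement)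
when the corresponding cell in another clique has at least three elements. -/
theorem not_finite_part (h : BasicCUH G col) {k : Bool} {F : Set V} (hFfin : F.Finite)
    (hF : ∀ b ∈ F, col b = !k) {v : V → Prop} {c c' : V} (hc : col c = k) (hc' : col c' = k)
    (hne : c ≠ c') (hcc' : ¬ G.Adj c c') {y : V} (hy : col y = !k) {e : Prop}
    (hfin : {x | x ∈ cell G col k F v c ∧ (G.Adj x y ↔ e)}.Finite)
    {s s' : V} (hs : s ∈ cell G col k F v c) (hse : G.Adj s y ↔ e)
    (hs' : s' ∈ cell G col k F v c) (hse' : ¬ (G.Adj s' y ↔ e))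
    {a a' a'' : V} (ha : a ∈ cell G col k F v c') (ha' : a' ∈ cell G col k F v c')
    (ha'' : a'' ∈ cell G col k F v c') (haa'' : a ≠ a'') (ha'a'' : a' ≠ a'')
    (hay : G.Adj a y) (hay' : ¬ G.Adj a' y) : False := by
  have hsame : ∀ {c x z}, col c = k → x ∈ cell G col k F v c → z ∈ cell G col k F v c →
      x ≠ z → G.Adj x z := by
    intro c x z hc hx hz hxz
    obtain ⟨hxk, hxc, -⟩ := hx
    obtain ⟨hzk, hzc, -⟩ := hz
    have := h.adj_trans x c z (by grind) (by grind)
    have := G.adj_comm c z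
    grind
  have hdiff : ∀ {x z}, x ∈ cell G col k F v c → z ∈ cell G col k F v c' →
      x ≠ z ∧ ¬ G.Adj z x := by
    intro x z hx hz
    obtain ⟨hxk, hxc, -⟩ := hx
    obtain ⟨hzk, hzc, -⟩ := hz
    have h1 := h.adj_trans c x c' (by grind) (by grind)
    have h2 := h.adj_trans c x z (by grind) (by grind)
    have h3 := h.adj_trans c z c' (by grind) (by grind)
    have h4 := G.adj_comm
    grind
  obtain ⟨ψ, hψc, hψF, hψa⟩ := h.extend_one (a := a) (a' := a')
    (F := (F ∪ {x | x ∈ cell G col k F v c ∧ (G.Adj x y ↔ e)}) ∪ {a''})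
    ((hFfin.union hfin).union (Set.finite_singleton _)) (by rw [ha.1, ha'.1])
    (by
      rintro f ((hf | ⟨hf, -⟩) | rfl)
      · have := hF f hf
        have := ha.1
        have := ha'.1
        grind
      · have := (hdiff hf ha).1
        have := (hdiff hf ha').1
        grind
      · simp [haa'', ha'a''])
    (by
      rintro f ((hf | ⟨hf, -⟩) | rfl)
      · rw [ha.2.2 f hf, ha'.2.2 f hf]
      · simp [(hdiff hf ha).2, (hdiff hf ha').2]
      · simp [hsame hc' ha ha'' haa'', hsame hc' ha' ha'' ha'a''])
  have hψF' : ∀ f ∈ F, ψ f = f := fun f hf => hψF f (.inl (.inl hf))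
  have hψs : ψ s = s := hψF s (.inl (.inr ⟨hs, hse⟩))
  have hsymF : ∀ f ∈ F, ψ.symm f = f := fun f hf => by
    rw [ψ.symm_apply_eq, hψF' f hf]
  have hagree : ∀ x ∈ cell G col k F v c, (G.Adj x (ψ y) ↔ G.Adj x y) := by
    intro x hx
    have hx' : ψ.symm x ∈ cell G col k F v c :=
      h.cell_map hc hc (col_symm hψc) hsymF hs hs (by rw [ψ.symm_apply_eq, hψs]) hx
    have hiff : (G.Adj x (ψ y) ↔ e) ↔ (G.Adj x y ↔ e) := by
      rw [← adj_symm_apply]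
      constructor
      · intro hx1
        have := hψF _ (.inl (.inr ⟨hx', hx1⟩))
        rw [ψ.apply_symm_apply] at this
        rwa [← this] at hx1
      · intro hx1
        have : ψ.symm x = x := by rw [ψ.symm_apply_eq, hψF _ (.inl (.inr ⟨hx, hx1⟩))]
        rwa [this]
    tauto
  have ha''y : G.Adj a'' (ψ y) ↔ G.Adj a'' y := by
    rw [← adj_symm_apply]
    have : ψ.symm a'' = a'' := by rw [ψ.symm_apply_eq, hψF _ (.inr rfl)]
    rw [this]
  obtain ⟨z, hz, hzy⟩ : ∃ z ∈ cell G col k F v c, (G.Adj z y ↔ G.Adj a'' y) := by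
    by_cases he : G.Adj a'' y ↔ e
    · exact ⟨s, hs, by tauto⟩
    · exact ⟨s', hs', by tauto⟩
  obtain ⟨φ, hφc, hφF, hφz⟩ := h.extend_one (a := z) (a' := a'') (F := F ∪ {y, ψ y})
    (hFfin.union (by simp)) (by rw [hz.1, ha''.1])
    (by
      have h1 := hz.1
      have h2 := ha''.1
      have h3 := hψc y
      rintro f (hf | rfl | rfl)
      · have := hF f hf
        grind
      · grind
      · grind)
    (by
      rintro f (hf | rfl | rfl)
      · rw [hz.2.2 f hf, ha''.2.2 f hf]
      · exact hzy
      · rw [hagree z hz, ha''y, hzy])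
  have hφF' : ∀ f ∈ F, φ.symm f = f := fun f hf => by
    rw [φ.symm_apply_eq, hφF f (.inl hf)]
  have hx : φ.symm a' ∈ cell G col k F v c :=
    h.cell_map hc' hc (col_symm hφc) hφF' ha'' hz (by rw [φ.symm_apply_eq, hφz]) ha'
  have := hagree _ hx
  rw [adj_symm_apply, adj_symm_apply, hφF y (by simp), hφF (ψ y) (by simp), ← hψa,
    ψ.map_adj_iff, hψa] at this
  exact hay' (this.1 hay)

/-- If some clique of color `k` has a finite nonempty part determined by a vertex of the other
color, then the class `k` is a union of edges each of which is split by every vertex of the other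
color. -/
theorem splits_of_finite_part (h : BasicCUH G col) {k : Bool} (hk : HasEdge G col k) {c y : V}
    (hc : col c = k) (hy : col y = !k)
    (hfin : {x | col x = k ∧ (x = c ∨ G.Adj x c) ∧ (G.Adj x y ↔ G.Adj c y)}.Finite) :
    Splits G col k := by
  obtain ⟨c', hc', hne, hcc'⟩ := h.exists_not_adj_of hc
  have mem : ∀ {c x : V}, x ∈ cell G col k ∅ (fun _ => True) c ↔
      col x = k ∧ (x = c ∨ G.Adj x c) := by
    intro c x
    simp [cell]
  obtain ⟨d, hd, hcd, hdy⟩ := h.exists_mixed hk hc hy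
  have third : ∀ a' a'', a' ∈ cell G col k ∅ (fun _ => True) c' →
      a'' ∈ cell G col k ∅ (fun _ => True) c' → c' ≠ a' → c' ≠ a'' → a' ≠ a'' →
      (G.Adj a' y ↔ ¬ G.Adj c' y) → False := by
    intro a' a'' ha' ha'' h1 h2 h3 h4
    have hself : c' ∈ cell G col k ∅ (fun _ => True) c' := mem.2 ⟨hc', .inl rfl⟩
    have hfin' : {x | x ∈ cell G col k ∅ (fun _ => True) c ∧ (G.Adj x y ↔ G.Adj c y)}.Finite := by
      refine hfin.subset ?_
      rintro x ⟨hx, hx'⟩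
      exact ⟨(mem.1 hx).1, (mem.1 hx).2, hx'⟩
    have key := fun a a' a'' => h.not_finite_part (F := ∅) (v := fun _ => True) Set.finite_empty
      (by simp) hc hc' hne.symm hcc' hy (e := G.Adj c y) hfin' (s := c) (s' := d)
      (mem.2 ⟨hc, .inl rfl⟩) Iff.rfl (mem.2 ⟨hd, .inr hcd.symm⟩) (by tauto) (a := a) (a' := a')
      (a'' := a'')
    by_cases h5 : G.Adj c' y
    · exact key c' a' a'' hself ha' ha'' h2 h3 h5 (by tauto)
    · exact key a' c' a'' ha' hself ha'' h3 h2 (by tauto) h5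
  have unique : ∀ x z, col x = k → col z = k → G.Adj c' x → G.Adj c' z → x = z := by
    intro x z hx hz hcx hcz
    obtain ⟨m, hm, hcm, hmy⟩ := h.exists_mixed hk hc' hy
    have : ∀ x, col x = k → G.Adj c' x → m = x := by
      intro x hx hcx
      by_contra hne
      exact third m x (mem.2 ⟨hm, .inr hcm.symm⟩) (mem.2 ⟨hx, .inr hcx.symm⟩) hcm.ne hcx.ne hne hmy
    rw [← this x hx hcx, ← this z hz hcz]
  intro u v w hu hv hw huv
  obtain ⟨m, hm, hum, hmw⟩ := h.exists_mixed hk hu hw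
  obtain ⟨ψ, h1, -, h2⟩ := h.extend_one (F := ∅) Set.finite_empty (a := u) (a' := c')
    (by rw [hc', hu]) (by simp) (by simp)
  have : ψ m = ψ v := unique _ _ (by rw [h1, hm]) (by rw [h1, hv])
    (by rwa [← h2, ψ.map_adj_iff]) (by rwa [← h2, ψ.map_adj_iff])
  rw [ψ.injective this] at hmw
  tauto

theorem splits_or_infCliques (h : BasicCUH G col) {k : Bool} (hk : HasEdge G col k) :
    Splits G col k ∨ InfCliques G col k := by
  by_cases hi : InfCliques G col k
  · exact .inr hi
  · left
    unfold InfCliques at hi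
    push Not at hi
    obtain ⟨c, hc, hfin⟩ := hi
    obtain ⟨y, hy⟩ := h.exists_col (!k)
    refine h.splits_of_finite_part hk hc hy ((hfin.union (Set.finite_singleton c)).subset ?_)
    rintro x ⟨hx, rfl | hx', -⟩
    · exact .inr rfl
    · exact .inl ⟨hx, hx'⟩

/-- If every three-edge pattern (for the adjacency, or dually for the non-adjacency) between
edges of different colors is omitted, then so is the dual pattern. -/
theorem evenCross_of_omits (h : BasicCUH G col) (e : Prop)
    (hom : ∀ k u v x y, col u = k → col v = k → col x = !k → col y = !k → G.Adj u v → G.Adj x y →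
      (G.Adj u x ↔ e) → (G.Adj u y ↔ e) → (G.Adj v x ↔ e) → (G.Adj v y ↔ e)) :
    EvenCross G col := by
  suffices hdual : ∀ k u v x y, col u = k → col v = k → col x = !k → col y = !k → G.Adj u v →
      G.Adj x y → ¬ (G.Adj u x ↔ e) → ¬ (G.Adj u y ↔ e) → ¬ (G.Adj v x ↔ e) →
      ¬ (G.Adj v y ↔ e) by
    intro k u v x y hu hv hx hy huv hxy
    have a1 := hom k u v x y hu hv hx hy huv hxy
    have a2 := hom k u v y x hu hv hy hx huv hxy.symm
    have a3 := hom k v u x y hv hu hx hy huv.symm hxy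
    have a4 := hom k v u y x hv hu hy hx huv.symm hxy.symm
    have b1 := hdual k u v x y hu hv hx hy huv hxy
    have b2 := hdual k u v y x hu hv hy hx huv hxy.symm
    have b3 := hdual k v u x y hv hu hx hy huv.symm hxy
    have b4 := hdual k v u y x hv hu hy hx huv.symm hxy.symm
    clear hom hdual
    by_cases he : e <;> grind
  intro k u v x y hu hv hx hy huv hxy hux huy hvx hvy
  by_cases hS : Splits G col k
  · have := hS u v x hu hv hx huv
    clear hom
    by_cases he : e <;> grind
  obtain ⟨c, d, z, hc, hd, hz, hcd, hcz, hdz⟩ : ∃ c d z, col c = k ∧ col d = k ∧ col z = !k ∧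
      G.Adj c d ∧ (G.Adj c z ↔ e) ∧ (G.Adj d z ↔ e) := by
    by_contra hcon
    refine hS (h.splits_of_finite_part ⟨u, v, hu, hv, huv⟩ hv hy
      ((Set.finite_singleton v).subset ?_))
    rintro w ⟨hw, rfl | hwv, hwy⟩
    · rfl
    · exact absurd ⟨v, w, y, hv, hw, hy, hwv.symm, hvy, hwy.trans hvy⟩ hcon
  obtain ⟨z', hz', hzz', hmix⟩ := h.exists_mixed (k := !k) ⟨x, y, hx, hy, hxy⟩ hz (b := c)
    (by simpa using hc)
  have hcz' : ¬ (G.Adj c z' ↔ e) := by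
    rw [G.adj_comm z', G.adj_comm z] at hmix
    clear hom
    by_cases he : e <;> grind
  have hdz' : ¬ (G.Adj d z' ↔ e) := fun hdz' => hcz' (hom k d c z z' hd hc hz hz' hcd.symm hzz'
    hdz hdz' hcz)
  have hne : ∀ {p q : V}, col p = k → col q = !k → p ≠ q := by
    rintro p _ hp hq rfl
    simp [hp] at hq
  have hcu : G.Adj c z' ↔ G.Adj u x := by
    clear hom
    by_cases he : e <;> grind
  have hdv : G.Adj d z' ↔ G.Adj v x := by
    clear hom
    by_cases he : e <;> grind
  obtain ⟨ψ, h1, h2⟩ := h.extend {(c, u), (d, v), (z', x)} (by simp) (by simp [*]) (by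
    have h0 := G.adj_comm
    have hi := fun v => G.irrefl (v := v)
    have n1 := hne hc hz'
    have n2 := hne hd hz'
    have n3 := hne hu hx
    have n4 := hne hv hx
    have n5 := hcd.ne
    have n6 := huv.ne
    clear hom hmix hux huy hvx hvy hcz hdz hcz' hdz'
    rintro p (rfl | rfl | rfl) q (rfl | rfl | rfl) <;> grind)
  have e1 : ψ c = u := h2 (c, u) (by simp)
  have e2 : ψ d = v := h2 (d, v) (by simp)
  have e3 : ψ z' = x := h2 (z', x) (by simp)
  have huz : G.Adj u (ψ z) ↔ e := by rwa [← e1, ψ.map_adj_iff]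
  have hvz : G.Adj v (ψ z) ↔ e := by rwa [← e2, ψ.map_adj_iff]
  have hxz : G.Adj x (ψ z) := by rw [← e3, ψ.map_adj_iff]; exact hzz'.symm
  have hyz : ψ z ≠ y := by
    intro he
    rw [he] at huz
    exact huy huz
  have hcz : col (ψ z) = !k := by rw [h1, hz]
  have hadj : G.Adj (ψ z) y := h.adj_trans _ x _ (by grind) (by grind) hxz.symm hxy hyz
  exact huy (hom k v u (ψ z) y hv hu hcz hy huv.symm hadj hvz hvy huz)

/-- If the cliques of color `k` are infinite, each of them realizes every adjacency pattern over
an independent set of the other color infinitely often. -/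
theorem cell_infinite (h : BasicCUH G col) (hev : EvenCross G col) {k : Bool}
    (hk : HasEdge G col k) (hinf : InfCliques G col k) (n : ℕ) :
    ∀ F : Finset V, F.card = n → (∀ b ∈ F, col b = !k) → (∀ b ∈ F, ∀ b' ∈ F, ¬ G.Adj b b') →
      ∀ (v : V → Prop) (c : V), col c = k → (cell G col k F v c).Infinite := by
  classical
  induction n with
  | zero =>
    intro F hF _ _ v c hc
    obtain rfl := Finset.card_eq_zero.1 hF
    refine (hinf c hc).mono ?_
    rintro x ⟨hx, hxc⟩
    exact ⟨hx, .inr hxc, by simp⟩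
  | succ n ih =>
    intro F' hF' hcol hind
    obtain ⟨b, F, hbF, rfl, hF⟩ := Finset.card_eq_succ.1 hF'
    have hb : col b = !k := hcol b (by simp)
    have hcolF : ∀ f ∈ F, col f = !k := fun f hf => hcol f (by simp [hf])
    have hindF : ∀ f ∈ F, ∀ f' ∈ F, ¬ G.Adj f f' := fun f hf f' hf' =>
      hind f (by simp [hf]) f' (by simp [hf'])
    have hbf : ∀ f ∈ F, ¬ G.Adj b f := fun f hf => hind b (by simp) f (by simp [hf])
    have ihF := ih F hF hcolF hindF
    have hclq : ∀ {F' : Set V} {v' : V → Prop} {c x z}, col c = k → x ∈ cell G col k F' v' c →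
        z ∈ cell G col k F' v' c → x ≠ z → G.Adj x z := by
      intro F' v' c x z hc hx hz hxz
      obtain ⟨hxk, hxc, -⟩ := hx
      obtain ⟨hzk, hzc, -⟩ := hz
      have := h.adj_trans x c z (by grind) (by grind)
      have := G.adj_comm c z
      grind
    have hne : ∀ {p q : V}, col p = k → col q = !k → p ≠ q := by
      rintro p _ hp hq rfl
      simp [hp] at hq
    have both : ∀ (v : V → Prop) (c : V), col c = k →
        ∃ x ∈ cell G col k F v c, ∃ x' ∈ cell G col k F v c, G.Adj x b ∧ ¬ G.Adj x' b := by
      intro v c hc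
      rcases F.eq_empty_or_nonempty with rfl | ⟨b₁, hb₁⟩
      · obtain ⟨c', hc', hcc', hm⟩ := h.exists_mixed hk hc hb
        have m1 : c ∈ cell G col k ((∅ : Finset V) : Set V) v c := ⟨hc, .inl rfl, by simp⟩
        have m2 : c' ∈ cell G col k ((∅ : Finset V) : Set V) v c :=
          ⟨hc', .inr hcc'.symm, by simp⟩
        by_cases hcb : G.Adj c b
        · exact ⟨c, m1, c', m2, hcb, by tauto⟩
        · exact ⟨c', m2, c, m1, by tauto, hcb⟩
      · obtain ⟨x, hx, x', hx', hxx'⟩ := (ihF v c hc).nontrivial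
        have hcard : (insert b (F.erase b₁)).card = n := by
          rw [Finset.card_insert_of_notMem (by simp [hbF]), Finset.card_erase_add_one hb₁, hF]
        have ih₁ := fun v' => ih (insert b (F.erase b₁)) hcard
          (fun f hf => hcol f (by simp at hf ⊢; tauto))
          (fun f hf f' hf' => hind f (by simp at hf ⊢; tauto) f' (by simp at hf' ⊢; tauto)) v' c hc
        obtain ⟨x₂, hx₂k, hx₂c, hx₂⟩ := (ih₁ (Function.update v b True)).nonempty
        obtain ⟨x₃, hx₃k, hx₃c, hx₃⟩ := (ih₁ (Function.update v b False)).nonempty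
        have hx₂b : G.Adj x₂ b := by
          rw [hx₂ b (by simp)]
          simp
        have hx₃b : ¬ G.Adj x₃ b := by
          rw [hx₃ b (by simp)]
          simp
        have hx₂₃ : x₂ ≠ x₃ := by
          rintro rfl
          exact hx₃b hx₂b
        have hadj₂₃ : G.Adj x₂ x₃ := by
          have := h.adj_trans x₂ c x₃ (by grind) (by grind)
          have := G.adj_comm c x₃
          grind
        have hfb : ∀ f ∈ F.erase b₁, f ≠ b := by
          rintro f hf rfl
          exact hbF (Finset.mem_of_mem_erase hf)
        have hfF : ∀ f ∈ F.erase b₁, f ∈ F := fun f hf => Finset.mem_of_mem_erase hf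
        have hf₂ : ∀ f ∈ F.erase b₁, (G.Adj x₂ f ↔ v f) := by
          intro f hf
          rw [hx₂ f (by simp at hf ⊢; tauto), Function.update_of_ne (hfb f hf)]
        have hf₃ : ∀ f ∈ F.erase b₁, (G.Adj x₃ f ↔ v f) := by
          intro f hf
          rw [hx₃ f (by simp at hf ⊢; tauto), Function.update_of_ne (hfb f hf)]
        obtain ⟨ψ, hψc, hψF, hψ₂, hψ₃⟩ := h.extend_two (F := (F.erase b₁ : Finset V))
          (a := x₂) (a' := x) (d := x₃) (d' := x') (Finset.finite_toSet _) (by rw [hx.1, hx₂k])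
          (by rw [hx'.1, hx₃k])
          (fun f hf => by simp [hne hx₂k (hcolF f (hfF f hf)), hne hx.1 (hcolF f (hfF f hf))])
          (fun f hf => by simp [hne hx₃k (hcolF f (hfF f hf)), hne hx'.1 (hcolF f (hfF f hf))])
          (by simp [hx₂₃, hxx'])
          (fun f hf => by rw [hf₂ f hf, hx.2.2 f (hfF f hf)])
          (fun f hf => by rw [hf₃ f hf, hx'.2.2 f (hfF f hf)])
          (by simp [hadj₂₃, hclq hc hx hx' hxx'])
        have hxψ : G.Adj x (ψ b) := by rwa [← hψ₂, ψ.map_adj_iff]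
        have hxψ' : ¬ G.Adj x' (ψ b) := by rwa [← hψ₃, ψ.map_adj_iff]
        have hψb : col (ψ b) = !k := by rw [hψc, hb]
        have hx₁ : G.Adj x b₁ ↔ G.Adj x' b₁ := by rw [hx.2.2 b₁ hb₁, hx'.2.2 b₁ hb₁]
        have hψne : ∀ f ∈ F, ψ b ≠ f ∧ ¬ G.Adj (ψ b) f := by
          intro f hf
          by_cases hf₁ : f = b₁
          · subst hf₁
            constructor
            · intro he
              rw [he] at hxψ hxψ'
              tauto
            · intro hadj
              have := hev k x x' (ψ b) f hx.1 hx'.1 hψb (hcolF f hf) (hclq hc hx hx' hxx') hadj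
              tauto
          · have hfe : f ∈ F.erase b₁ := by simp [hf, hf₁]
            rw [← hψF f hfe, ψ.map_adj_iff]
            refine ⟨fun he => ?_, hbf f hf⟩
            exact hfb f hfe (ψ.injective he).symm
        have move : ∀ w, w ∈ cell G col k F v c → (G.Adj (ψ b) w ↔ G.Adj b x) →
            ∃ φ : G ≃g G, φ (ψ b) = b ∧ ∀ z ∈ cell G col k F v c, φ z ∈ cell G col k F v c := by
          intro w hw hadj
          obtain ⟨φ, hφc, hφF, hφb, hφw⟩ := h.extend_two (F := (F : Set V)) (a := ψ b) (a' := b)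
            (d := w) (d' := x) F.finite_toSet (hψc b).symm (by rw [hx.1, hw.1])
            (fun f hf => by
              have := (hψne f hf).1
              have : b ≠ f := fun he => hbF (he ▸ hf)
              grind)
            (fun f hf => by simp [hne hw.1 (hcolF f hf), hne hx.1 (hcolF f hf)])
            (by simp [(hne hw.1 hψb).symm, (hne hx.1 hb).symm])
            (fun f hf => by simp [(hψne f hf).2, hbf f hf])
            (fun f hf => by rw [hw.2.2 f hf, hx.2.2 f hf]) hadj
          exact ⟨φ, hφb, fun z hz => h.cell_map hc hc hφc hφF hw hx hφw hz⟩
        by_cases hxb : G.Adj x b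
        · obtain ⟨φ, hφb, hφ⟩ := move x hx (by simp [hxψ.symm, hxb.symm])
          refine ⟨x, hx, φ x', hφ x' hx', hxb, ?_⟩
          rwa [← hφb, φ.map_adj_iff]
        · obtain ⟨φ, hφb, hφ⟩ := move x' hx' (by
            rw [G.adj_comm, G.adj_comm b]
            simp [hxψ', hxb])
          refine ⟨φ x, hφ x hx, x, hx, ?_, hxb⟩
          rwa [← hφb, φ.map_adj_iff]
    intro v c hc hfin
    obtain ⟨c', hc', hne', hcc'⟩ := h.exists_not_adj_of hc
    obtain ⟨s, hs, s', hs', hsb, hsb'⟩ := both v c hc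
    obtain ⟨a, ha, a', ha', hab, hab'⟩ := both v c' hc'
    obtain ⟨a'', ha'', hnot⟩ := (ihF v c' hc').exists_notMem_finset {a, a'}
    simp only [Finset.mem_insert, Finset.mem_singleton, not_or] at hnot
    have hfin' : {x | x ∈ cell G col k F v c ∧ (G.Adj x b ↔ v b)}.Finite := by
      refine hfin.subset ?_
      rintro x ⟨⟨hx1, hx2, hx3⟩, hxb⟩
      refine ⟨hx1, hx2, fun f hf => ?_⟩
      rcases Finset.mem_insert.1 hf with rfl | hf
      · exact hxb
      · exact hx3 f hf
    have key := fun s s' hs hse hs' hse' => h.not_finite_part (s := s) (s' := s') F.finite_toSet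
      hcolF hc hc' hne'.symm hcc' hb hfin' hs hse hs' hse' ha ha' ha'' (Ne.symm hnot.1)
      (Ne.symm hnot.2) hab hab'
    by_cases hvb : v b
    · exact key s s' hs (by tauto) hs' (by tauto)
    · exact key s' s hs' (by tauto) hs (by tauto)

/-- If the edges of color `k` are split, every adjacency pattern over an independent set of color
`k` is realized infinitely often. -/
theorem pattern_infinite (h : BasicCUH G col) {k : Bool} (hk : HasEdge G col k)
    (hS : Splits G col k) (v : V → Prop) (F : Finset V) :
    (∀ r ∈ F, col r = k) → (∀ r ∈ F, ∀ r' ∈ F, ¬ G.Adj r r') →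
      {b | col b = !k ∧ ∀ r ∈ F, (G.Adj b r ↔ v r)}.Infinite := by
  classical
  induction F using Finset.induction_on with
  | empty => simpa using h.class_infinite ⟨k, hk⟩ (!k)
  | insert r F hrF ih =>
    intro hcol hind
    have hr : col r = k := hcol r (by simp)
    have hX := ih (fun f hf => hcol f (by simp [hf]))
      (fun f hf f' hf' => hind f (by simp [hf]) f' (by simp [hf']))
    obtain ⟨r', hr', hrr'⟩ := h.exists_adj_of hk hr
    obtain ⟨ψ, hψc, hψF, hψr⟩ := h.extend_one (F := (F : Set V)) (a := r) (a' := r')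
      F.finite_toSet (by rw [hr, hr'])
      (fun f hf => by
        have := hind r (by simp) f (by simp [Finset.mem_coe.1 hf])
        have : r ≠ f := fun he => hrF (he ▸ hf)
        grind)
      (fun f hf => by
        have h1 := hind r (by simp) f (by simp [Finset.mem_coe.1 hf])
        have h2 := h.adj_trans r r' f (by grind) (by
          rw [hr', hcol f (by simp [Finset.mem_coe.1 hf])]) hrr'
        have h3 : r ≠ f := fun he => hrF (he ▸ hf)
        grind)
    have flip : ∀ e : Prop, {b | col b = !k ∧ (∀ f ∈ F, (G.Adj b f ↔ v f)) ∧
        (G.Adj b r ↔ e)}.Infinite → {b | col b = !k ∧ (∀ f ∈ F, (G.Adj b f ↔ v f)) ∧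
        (G.Adj b r ↔ ¬ e)}.Infinite := by
      intro e he
      refine (he.image ψ.injective.injOn).mono ?_
      rintro _ ⟨b, ⟨hb, hbF, hbr⟩, rfl⟩
      have hψb : col (ψ b) = !k := by rw [hψc, hb]
      refine ⟨hψb, fun f hf => ?_, ?_⟩
      · rw [← hbF f hf, ← ψ.map_adj_iff (v := b), hψF f hf]
      · have h1 := hS r r' (ψ b) hr hr' hψb hrr'
        have h2 : G.Adj (ψ b) r' ↔ G.Adj b r := by rw [← hψr, ψ.map_adj_iff]
        rw [G.adj_comm (ψ b) r]
        rw [G.adj_comm (ψ b) r'] at h2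
        tauto
    have hsplit : {b | col b = !k ∧ ∀ f ∈ F, (G.Adj b f ↔ v f)} =
        {b | col b = !k ∧ (∀ f ∈ F, (G.Adj b f ↔ v f)) ∧ (G.Adj b r ↔ v r)} ∪
        {b | col b = !k ∧ (∀ f ∈ F, (G.Adj b f ↔ v f)) ∧ (G.Adj b r ↔ ¬ v r)} := by
      ext b
      simp only [Set.mem_ofPred_eq, Set.mem_union]
      tauto
    have hset : {b | col b = !k ∧ ∀ f ∈ insert r F, (G.Adj b f ↔ v f)} =
        {b | col b = !k ∧ (∀ f ∈ F, (G.Adj b f ↔ v f)) ∧ (G.Adj b r ↔ v r)} := by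
      ext b
      simp only [Set.mem_ofPred_eq, Finset.forall_mem_insert]
      tauto
    rw [hset]
    rw [hsplit, Set.infinite_union] at hX
    rcases hX with hX | hX
    · exact hX
    · simpa only [not_not] using flip _ hX

theorem eq_of_splits (h : BasicCUH G col) {k : Bool} (hS : Splits G col k) {c x z : V}
    (hc : col c = k) (hx : col x = k) (hz : col z = k) (hcx : G.Adj c x) (hcz : G.Adj c z) :
    x = z := by
  by_contra hne
  obtain ⟨w, hw⟩ := h.exists_col (!k)
  have h1 := hS c x w hc hx hw hcx
  have h2 := hS c z w hc hz hw hcz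
  have h3 := hS x z w hx hz hw (h.adj_trans x c z (by grind) (by grind) hcx.symm hcz hne)
  tauto

end BasicCUH

/-! ### Embeddings of finite parts of a two-colored graph -/

/-- `f` is an embedding of the two-colored graph `(H, colH)` into `(G, col)` on the set `S`. -/
structure EmbedsOn {V W : Type} (G : SimpleGraph V) (col : V → Bool) (H : SimpleGraph W)
    (colH : W → Bool) (S : Set W) (f : W → V) : Prop where
  col_eq : ∀ w ∈ S, col (f w) = colH w
  inj : ∀ u ∈ S, ∀ w ∈ S, f u = f w → u = w
  adj_iff : ∀ u ∈ S, ∀ w ∈ S, (G.Adj (f u) (f w) ↔ H.Adj u w)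

/-- The color classes of `(H, colH)` embed into those of `(G, col)`, and `H` satisfies the
restrictions on cross edges that hold in `G`. -/
structure Admissible {V W : Type} (G : SimpleGraph V) (col : V → Bool) (H : SimpleGraph W)
    (colH : W → Bool) : Prop where
  classes : ∃ g : W → V, (∀ w, col (g w) = colH w) ∧ ∀ u w, colH u = colH w →
    (g u = g w → u = w) ∧ (G.Adj (g u) (g w) ↔ H.Adj u w)
  evenCross : EvenCross H colH
  splits : ∀ k, Splits G col k → Splits H colH k

/-- Elements of infinitely many candidates can be chosen so that no two of them are related, if
every element is related to only finitely many others. -/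
theorem exists_choice_not_rel {V W : Type} (T : Finset W) (A : W → Set V) (R : V → V → Prop)
    [Nonempty V] (hA : ∀ w ∈ T, (A w).Infinite) (hR : ∀ w ∈ T, ∀ c ∈ A w, {x | R c x}.Finite)
    (hsymm : ∀ x y, R x y → R y x) :
    ∃ f : W → V, ∀ w ∈ T, f w ∈ A w ∧ ∀ u ∈ T, u ≠ w → ¬ R (f u) (f w) := by
  classical
  induction T using Finset.induction_on with
  | empty => exact ⟨fun _ => Classical.arbitrary V, by simp⟩
  | insert a T haT ih =>
    obtain ⟨f, hf⟩ := ih (fun w hw => hA w (by simp [hw])) (fun w hw => hR w (by simp [hw]))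
    have hfin : (⋃ w ∈ T, {x | R (f w) x}).Finite :=
      T.finite_toSet.biUnion fun w hw => hR w (Finset.mem_insert_of_mem hw) _ (hf w hw).1
    obtain ⟨z, hzA, hz⟩ := ((hA a (by simp)).sdiff hfin).nonempty
    have hz' : ∀ w ∈ T, ¬ R (f w) z := fun w hw hr => hz (by
      simp only [Set.mem_iUnion]
      exact ⟨w, hw, hr⟩)
    have hne : ∀ w ∈ T, w ≠ a := fun w hw he => haT (he ▸ hw)
    refine ⟨Function.update f a z, fun w hw => ?_⟩
    rcases Finset.mem_insert.1 hw with rfl | hwT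
    · refine ⟨by simpa using hzA, fun u hu hua => ?_⟩
      have hu' : u ∈ T := (Finset.mem_insert.1 hu).resolve_left hua
      simpa [Function.update_of_ne hua] using hz' u hu'
    · rw [Function.update_of_ne (hne w hwT)]
      refine ⟨(hf w hwT).1, fun u hu huw => ?_⟩
      rcases Finset.mem_insert.1 hu with rfl | huT
      · simpa using fun hr => hz' w hwT (hsymm _ _ hr)
      · rw [Function.update_of_ne (hne u huT)]
        exact (hf w hwT).2 u huT huw

namespace BasicCUH

variable {V W : Type} {G : SimpleGraph V} {col : V → Bool} {H : SimpleGraph W} {colH : W → Bool}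

/-- Embeddings of `S \ {x}` and `S \ {y}` can be glued to a map that is an embedding except
possibly at the pair `x, y`. -/
theorem amalgamate (h : BasicCUH G col) {S : Set W} (hS : S.Finite) {x y : W}
    (hy : y ∈ S) (hx : x ∈ S) (hxy : colH x ≠ colH y) {f₁ f₂ : W → V}
    (h₁ : EmbedsOn G col H colH (S \ {x}) f₁) (h₂ : EmbedsOn G col H colH (S \ {y}) f₂) :
    ∃ f : W → V, (∀ u ∈ S, ∀ w ∈ S, colH u = colH w ∨ (G.Adj (f x) (f y) ↔ H.Adj x y) ∨
        (u ≠ x ∧ w ≠ x) ∨ (u ≠ y ∧ w ≠ y) → (G.Adj (f u) (f w) ↔ H.Adj u w)) ∧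
      (∀ w ∈ S, col (f w) = colH w) ∧ ∀ u ∈ S, ∀ w ∈ S, f u = f w → u = w := by
  classical
  have hne : x ≠ y := fun he => hxy (congrArg colH he)
  obtain ⟨ψ, hψc, hψ⟩ := h.extend ((fun w => (f₂ w, f₁ w)) '' (S \ {x, y}))
    ((hS.subset Set.sdiff_subset).image _)
    (by
      rintro _ ⟨w, ⟨hw, hw'⟩, rfl⟩
      simp only [Set.mem_insert_iff, Set.mem_singleton_iff, not_or] at hw'
      rw [h₁.col_eq w ⟨hw, hw'.1⟩, h₂.col_eq w ⟨hw, hw'.2⟩])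
    (by
      rintro _ ⟨u, ⟨hu, hu'⟩, rfl⟩ _ ⟨w, ⟨hw, hw'⟩, rfl⟩
      simp only [Set.mem_insert_iff, Set.mem_singleton_iff, not_or] at hu' hw'
      refine ⟨⟨fun he => ?_, fun he => ?_⟩, ?_⟩
      · rw [h₂.inj u ⟨hu, hu'.2⟩ w ⟨hw, hw'.2⟩ he]
      · rw [h₁.inj u ⟨hu, hu'.1⟩ w ⟨hw, hw'.1⟩ he]
      · rw [h₁.adj_iff u ⟨hu, hu'.1⟩ w ⟨hw, hw'.1⟩, h₂.adj_iff u ⟨hu, hu'.2⟩ w ⟨hw, hw'.2⟩])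
  have hψ' : ∀ w ∈ S, w ≠ x → w ≠ y → f₁ w = ψ (f₂ w) := fun w hw hwx hwy =>
    (hψ (f₂ w, f₁ w) ⟨w, ⟨hw, by simp [hwx, hwy]⟩, rfl⟩).symm
  have key : ∀ w ∈ S, w ≠ x → w ≠ y → ψ (f₂ x) ≠ f₁ w ∧
      (G.Adj (ψ (f₂ x)) (f₁ w) ↔ H.Adj x w) := by
    intro w hw hwx hwy
    rw [hψ' w hw hwx hwy, ψ.map_adj_iff, ← h₂.adj_iff x ⟨hx, hne⟩ w ⟨hw, hwy⟩]
    exact ⟨fun he => hwx (h₂.inj x ⟨hx, hne⟩ w ⟨hw, hwy⟩ (ψ.injective he)).symm, Iff.rfl⟩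
  have hcx : col (ψ (f₂ x)) = colH x := by rw [hψc, h₂.col_eq x ⟨hx, hne⟩]
  have hcy : col (f₁ y) = colH y := h₁.col_eq y ⟨hy, hne.symm⟩
  have hxy' : ψ (f₂ x) ≠ f₁ y := fun he => hxy (by rw [← hcx, ← hcy, he])
  refine ⟨fun w => if w = x then ψ (f₂ x) else f₁ w, ?_, ?_, ?_⟩
  · intro u hu w hw hcase
    by_cases hux : u = x
    · subst hux
      by_cases hwx : w = u
      · simp [hwx]
      by_cases hwy : w = y
      · subst hwy
        simp only [if_true, if_neg hwx] at hcase ⊢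
        tauto
      · simpa [hwx] using (key w hw hwx hwy).2
    · by_cases hwx : w = x
      · subst hwx
        by_cases huy : u = y
        · subst huy
          simp only [if_true, if_neg hux] at hcase ⊢
          rw [G.adj_comm, H.adj_comm]
          have := eq_comm (a := colH u) (b := colH w)
          tauto
        · rw [G.adj_comm, H.adj_comm]
          simpa [hux] using (key u hu hux huy).2
      · simpa [hux, hwx] using h₁.adj_iff u ⟨hu, hux⟩ w ⟨hw, hwx⟩
  · intro w hw
    by_cases hwx : w = x
    · simp [hwx, hcx]
    · simpa [hwx] using h₁.col_eq w ⟨hw, hwx⟩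
  · intro u hu w hw he
    have hx1 : ∀ w ∈ S, w ≠ x → ψ (f₂ x) ≠ f₁ w := by
      intro w hw hwx
      by_cases hwy : w = y
      · rwa [hwy]
      · exact (key w hw hwx hwy).1
    by_cases hux : u = x <;> by_cases hwx : w = x
    · rw [hux, hwx]
    · simp only [hux, if_true, if_neg hwx] at he
      exact absurd he (hx1 w hw hwx)
    · simp only [hwx, if_true, if_neg hux] at he
      exact absurd he.symm (hx1 u hu hux)
    · simp only [if_neg hux, if_neg hwx] at he
      exact h₁.inj u ⟨hu, hux⟩ w ⟨hw, hwx⟩ he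

/-- If a wrong adjacency between `x` and `y` is impossible, then gluing gives an embedding. -/
theorem exists_embedsOn_of_amalgamate (h : BasicCUH G col) {S : Set W} (hS : S.Finite) {x y : W}
    (hx : x ∈ S) (hy : y ∈ S) (hxy : colH x ≠ colH y)
    (h₁ : ∃ f, EmbedsOn G col H colH (S \ {x}) f) (h₂ : ∃ f, EmbedsOn G col H colH (S \ {y}) f)
    (hf : ∀ f : W → V, (∀ w ∈ S, col (f w) = colH w) →
      (∀ u ∈ S, ∀ w ∈ S, colH u = colH w ∨ (u ≠ x ∧ w ≠ x) ∨ (u ≠ y ∧ w ≠ y) →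
        (G.Adj (f u) (f w) ↔ H.Adj u w)) → (G.Adj (f x) (f y) ↔ H.Adj x y)) :
    ∃ f, EmbedsOn G col H colH S f := by
  obtain ⟨f₁, h₁⟩ := h₁
  obtain ⟨f₂, h₂⟩ := h₂
  obtain ⟨f, ha, hc, hi⟩ := h.amalgamate hS hy hx hxy h₁ h₂
  have := hf f hc fun u hu w hw hcase => ha u hu w hw (by tauto)
  exact ⟨f, hc, hi, fun u hu w hw => ha u hu w hw (.inr (.inl this))⟩

/-- A graph with no edges of color `!k` embeds if the cliques of color `k` are infinite. -/
theorem exists_embedsOn_of_infCliques (h : BasicCUH G col) (hev : EvenCross G col) {k : Bool}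
    (hk : HasEdge G col k) (hinf : InfCliques G col k) (hH : Admissible G col H colH)
    (S : Finset W) (hno : ∀ u ∈ S, ∀ w ∈ S, colH u = !k → colH w = !k → ¬ H.Adj u w) :
    ∃ f, EmbedsOn G col H colH S f := by
  classical
  have := h.infinite
  obtain ⟨g, hgc, hg⟩ := hH.classes
  let F : Finset V := (S.filter fun w => colH w = !k).image g
  have hF : ∀ b ∈ F, ∃ w ∈ S, colH w = (!k) ∧ g w = b := by
    intro b hb
    obtain ⟨w, hw, rfl⟩ := Finset.mem_image.1 hb
    obtain ⟨hw, hwc⟩ := Finset.mem_filter.1 hw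
    exact ⟨w, hw, hwc, rfl⟩
  have hcell : ∀ v c, col c = k → (cell G col k F v c).Infinite := by
    refine h.cell_infinite hev hk hinf F.card F rfl ?_ ?_
    · intro b hb
      obtain ⟨w, -, hwc, rfl⟩ := hF b hb
      rw [hgc, hwc]
    · intro b hb b' hb'
      obtain ⟨w, hw, hwc, rfl⟩ := hF b hb
      obtain ⟨w', hw', hwc', rfl⟩ := hF b' hb'
      rw [(hg w w' (by rw [hwc, hwc'])).2]
      exact hno w hw w' hw' hwc hwc'
  obtain ⟨f, hf⟩ := exists_choice_not_rel (S.filter fun w => colH w = k)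
    (fun x => cell G col k F (fun b => ∃ w, colH w = (!k) ∧ g w = b ∧ H.Adj x w) (g x))
    (fun x y => x = y)
    (fun w hw => hcell _ _ (by rw [hgc, (Finset.mem_filter.1 hw).2]))
    (fun w _ c _ => (Set.finite_singleton c).subset fun x hx => hx.symm)
    (fun _ _ => Eq.symm)
  have hfk : ∀ w ∈ S, colH w = k → f w ∈ cell G col k F
      (fun b => ∃ w', colH w' = (!k) ∧ g w' = b ∧ H.Adj w w') (g w) := fun w hw hwc =>
    (hf w (Finset.mem_filter.2 ⟨hw, hwc⟩)).1
  have hfi : ∀ u ∈ S, ∀ w ∈ S, colH u = k → colH w = k → u ≠ w → f u ≠ f w :=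
    fun u hu w hw huc hwc =>
      (hf w (Finset.mem_filter.2 ⟨hw, hwc⟩)).2 u (Finset.mem_filter.2 ⟨hu, huc⟩)
  have hkk : ∀ u ∈ S, ∀ w ∈ S, colH u = k → colH w = k → u ≠ w →
      (G.Adj (f u) (f w) ↔ H.Adj u w) := by
    intro u hu w hw huc hwc huw
    obtain ⟨c1, m1, -⟩ := hfk u hu huc
    obtain ⟨c2, m2, -⟩ := hfk w hw hwc
    have hn := hfi u hu w hw huc hwc huw
    have hgn : g u ≠ g w := fun he => huw ((hg u w (by rw [huc, hwc])).1 he)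
    rw [← (hg u w (by rw [huc, hwc])).2]
    have c3 : col (g u) = k := by rw [hgc, huc]
    have c4 : col (g w) = k := by rw [hgc, hwc]
    have t : ∀ p q r, col p = k → col q = k → col r = k → (p = q ∨ G.Adj p q) →
        (q = r ∨ G.Adj q r) → (p = r ∨ G.Adj p r) := by
      intro p q r hp hq hr h1 h2
      have := h.adj_trans p q r (by grind) (by grind)
      grind
    have s : ∀ p q, (p = q ∨ G.Adj p q) → (q = p ∨ G.Adj q p) := fun p q hpq =>
      hpq.imp Eq.symm fun hadj => hadj.symm
    constructor
    · intro hadj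
      exact (t _ _ _ c3 c2 c4 (t _ _ _ c3 c1 c2 (s _ _ m1) (.inr hadj)) m2).resolve_left hgn
    · intro hadj
      exact (t _ _ _ c1 c4 c2 (t _ _ _ c1 c3 c4 m1 (.inr hadj)) (s _ _ m2)).resolve_left hn
  have hcross : ∀ u ∈ S, ∀ w ∈ S, colH u = k → colH w = (!k) →
      (G.Adj (f u) (g w) ↔ H.Adj u w) := by
    intro u hu w hw huc hwc
    rw [(hfk u hu huc).2.2 (g w)
      (Finset.mem_coe.2 (Finset.mem_image_of_mem g (Finset.mem_filter.2 ⟨hw, hwc⟩)))]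
    constructor
    · rintro ⟨w', hw'c, he, hadj⟩
      rwa [← (hg w' w (by rw [hw'c, hwc])).1 he]
    · exact fun hadj => ⟨w, hwc, rfl, hadj⟩
  have hcol : ∀ w ∈ S, col (if colH w = k then f w else g w) = colH w := by
    intro w hw
    split
    next hwc => rw [(hfk w hw hwc).1, hwc]
    next => rw [hgc]
  refine ⟨fun w => if colH w = k then f w else g w, hcol, ?_, ?_⟩
  · intro u hu w hw he
    have hc : colH u = colH w := by rw [← hcol u hu, ← hcol w hw]; exact congrArg col he
    by_contra huw
    by_cases huc : colH u = k
    · have hwc := hc.symm.trans huc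
      simp only [huc, hwc, if_true] at he
      exact hfi u hu w hw huc hwc huw he
    · have hwc : ¬ colH w = k := fun hw' => huc (hc.trans hw')
      simp only [huc, hwc, if_false] at he
      exact huw ((hg u w hc).1 he)
  · intro u hu w hw
    by_cases huc : colH u = k <;> by_cases hwc : colH w = k
    · simp only [huc, hwc, if_true]
      by_cases huw : u = w
      · simp [huw]
      · exact hkk u hu w hw huc hwc huw
    · simp only [huc, hwc, if_true, if_false]
      exact hcross u hu w hw huc (Bool.eq_not_of_ne hwc)
    · simp only [huc, hwc, if_true, if_false]
      rw [G.adj_comm, H.adj_comm]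
      exact hcross w hw u hu hwc (Bool.eq_not_of_ne huc)
    · simp only [huc, hwc, if_false]
      exact (hg u w (by rw [Bool.eq_not_of_ne huc, Bool.eq_not_of_ne hwc])).2

/-- A graph with no edges inside the color classes embeds if the edges of color `k` are split and
neighborhoods inside the other color class are finite. -/
theorem exists_embedsOn_of_splits (h : BasicCUH G col) {k : Bool}
    (hk : HasEdge G col k) (hS : Splits G col k)
    (hfin : ∀ c, col c = (!k) → {x | col x = (!k) ∧ G.Adj c x}.Finite)
    (hH : Admissible G col H colH) (S : Finset W)
    (hno : ∀ u ∈ S, ∀ w ∈ S, colH u = colH w → ¬ H.Adj u w) :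
    ∃ f, EmbedsOn G col H colH S f := by
  classical
  have := h.infinite
  obtain ⟨g, hgc, hg⟩ := hH.classes
  let F : Finset V := (S.filter fun w => colH w = k).image g
  have hF : ∀ b ∈ F, ∃ w ∈ S, colH w = k ∧ g w = b := by
    intro b hb
    obtain ⟨w, hw, rfl⟩ := Finset.mem_image.1 hb
    obtain ⟨hw, hwc⟩ := Finset.mem_filter.1 hw
    exact ⟨w, hw, hwc, rfl⟩
  have hpat : ∀ v : V → Prop, {b | col b = (!k) ∧ ∀ r ∈ F, (G.Adj b r ↔ v r)}.Infinite := by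
    intro v
    refine h.pattern_infinite hk hS v F ?_ ?_
    · intro b hb
      obtain ⟨w, -, hwc, rfl⟩ := hF b hb
      rw [hgc, hwc]
    · intro b hb b' hb'
      obtain ⟨w, hw, hwc, rfl⟩ := hF b hb
      obtain ⟨w', hw', hwc', rfl⟩ := hF b' hb'
      rw [(hg w w' (by rw [hwc, hwc'])).2]
      exact hno w hw w' hw' (hwc.trans hwc'.symm)
  obtain ⟨f, hf⟩ := exists_choice_not_rel (S.filter fun w => colH w = !k)
    (fun x => {b | col b = (!k) ∧ ∀ r ∈ F, (G.Adj b r ↔ ∃ w, colH w = k ∧ g w = r ∧ H.Adj x w)})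
    (fun x y => x = y ∨ (col x = col y ∧ G.Adj x y))
    (fun w hw => hpat _)
    (fun w _ c hc => ((Set.finite_singleton c).union (hfin c hc.1)).subset (by
      rintro x (rfl | ⟨hx, hx'⟩)
      · exact .inl rfl
      · exact .inr ⟨by rw [← hx, hc.1], hx'⟩))
    (fun x y hxy => hxy.imp Eq.symm fun h => ⟨h.1.symm, h.2.symm⟩)
  have hfk : ∀ w ∈ S, colH w = (!k) → col (f w) = (!k) ∧ ∀ r ∈ F,
      (G.Adj (f w) r ↔ ∃ w', colH w' = k ∧ g w' = r ∧ H.Adj w w') := fun w hw hwc =>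
    (hf w (Finset.mem_filter.2 ⟨hw, hwc⟩)).1
  have hfi : ∀ u ∈ S, ∀ w ∈ S, colH u = (!k) → colH w = (!k) → u ≠ w →
      f u ≠ f w ∧ ¬ G.Adj (f u) (f w) := by
    intro u hu w hw huc hwc huw
    have h1 := (hf w (Finset.mem_filter.2 ⟨hw, hwc⟩)).2 u (Finset.mem_filter.2 ⟨hu, huc⟩) huw
    exact ⟨fun he => h1 (.inl he), fun he => h1 (.inr ⟨by
      rw [(hfk u hu huc).1, (hfk w hw hwc).1], he⟩)⟩
  have hcross : ∀ u ∈ S, ∀ w ∈ S, colH u = (!k) → colH w = k →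
      (G.Adj (f u) (g w) ↔ H.Adj u w) := by
    intro u hu w hw huc hwc
    rw [(hfk u hu huc).2 (g w) (Finset.mem_image_of_mem g (Finset.mem_filter.2 ⟨hw, hwc⟩))]
    constructor
    · rintro ⟨w', hw'c, he, hadj⟩
      rwa [← (hg w' w (by rw [hw'c, hwc])).1 he]
    · exact fun hadj => ⟨w, hwc, rfl, hadj⟩
  have hcol : ∀ w ∈ S, col (if colH w = k then g w else f w) = colH w := by
    intro w hw
    split
    next => rw [hgc]
    next hwc => rw [(hfk w hw (Bool.eq_not_of_ne hwc)).1, Bool.eq_not_of_ne hwc]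
  refine ⟨fun w => if colH w = k then g w else f w, hcol, ?_, ?_⟩
  · intro u hu w hw he
    have hc : colH u = colH w := by rw [← hcol u hu, ← hcol w hw]; exact congrArg col he
    by_contra huw
    by_cases huc : colH u = k
    · have hwc := hc.symm.trans huc
      simp only [huc, hwc, if_true] at he
      exact huw ((hg u w hc).1 he)
    · have hwc : ¬ colH w = k := fun hw' => huc (hc.trans hw')
      simp only [huc, hwc, if_false] at he
      exact (hfi u hu w hw (Bool.eq_not_of_ne huc) (Bool.eq_not_of_ne hwc) huw).1 he
  · intro u hu w hw
    by_cases huc : colH u = k <;> by_cases hwc : colH w = k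
    · simp only [huc, hwc, if_true]
      exact (hg u w (by rw [huc, hwc])).2
    · simp only [huc, hwc, if_true, if_false]
      rw [G.adj_comm, H.adj_comm]
      exact hcross w hw u hu (Bool.eq_not_of_ne hwc) huc
    · simp only [huc, hwc, if_true, if_false]
      exact hcross u hu w hw (Bool.eq_not_of_ne huc) hwc
    · simp only [huc, hwc, if_false]
      have huc' := Bool.eq_not_of_ne huc
      have hwc' := Bool.eq_not_of_ne hwc
      by_cases huw : u = w
      · simp [huw]
      · exact iff_of_false (hfi u hu w hw huc' hwc' huw).2 (hno u hu w hw (by rw [huc', hwc']))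

theorem even_cancel {a b c d e : Prop} (h₁ : (a ↔ b) ↔ (c ↔ d)) (h₂ : (e ↔ b) ↔ (c ↔ d)) :
    a ↔ e := by
  tauto

/-- Admissible graphs are realized. -/
theorem exists_embedsOn (h : BasicCUH G col) (hE : ∃ k, HasEdge G col k) (hev : EvenCross G col)
    (hH : Admissible G col H colH) (S : Finset W) : ∃ f, EmbedsOn G col H colH S f := by
  classical
  induction S using Finset.strongInduction with
  | H S ih =>
  have sub : ∀ x ∈ S, ∃ f, EmbedsOn G col H colH ((S : Set W) \ {x}) f := by
    intro x hx
    simpa using ih _ (Finset.erase_ssubset hx)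
  have hcolne : ∀ {k : Bool} {x y : W}, colH x = k → colH y = (!k) → colH x ≠ colH y := by
    intro k x y hx hy he
    simp [hx, hy] at he
  by_cases hmono : ∃ k, ∀ w ∈ S, colH w = k
  · obtain ⟨k, hk⟩ := hmono
    obtain ⟨g, hgc, hg⟩ := hH.classes
    have hc : ∀ u ∈ (S : Set W), ∀ w ∈ (S : Set W), colH u = colH w := fun u hu w hw => by
      rw [hk u hu, hk w hw]
    exact ⟨g, fun w _ => hgc w, fun u hu w hw => (hg u w (hc u hu w hw)).1,
      fun u hu w hw => (hg u w (hc u hu w hw)).2⟩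
  have hexists : ∀ k, ∃ y ∈ S, colH y = (!k) := by
    intro k
    by_contra hcon
    push Not at hcon
    exact hmono ⟨k, fun w hw => by simpa using Bool.eq_not_of_ne (hcon w hw)⟩
  by_cases hedge : ∃ k, ∃ x ∈ S, ∃ x' ∈ S, colH x = k ∧ colH x' = k ∧ H.Adj x x'
  · obtain ⟨k, x, hx, x', hx', hxc, hxc', hxx'⟩ := hedge
    by_cases hedge' : ∃ y ∈ S, ∃ y' ∈ S, colH y = (!k) ∧ colH y' = (!k) ∧ H.Adj y y'
    · obtain ⟨y, hy, y', hy', hyc, hyc', hyy'⟩ := hedge'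
      refine h.exists_embedsOn_of_amalgamate S.finite_toSet hx hy (hcolne hxc hyc) (sub x hx)
        (sub y hy) fun f hf hadj => ?_
      have hxy := hcolne hxc hyc
      have n1 : x' ≠ y := fun he => hcolne hxc' hyc (congrArg colH he)
      have n2 : y' ≠ x := fun he => hcolne hxc hyc' (congrArg colH he.symm)
      have n3 : x ≠ y := fun he => hxy (congrArg colH he)
      have e1 := hH.evenCross k x x' y y' hxc hxc' hyc hyc' hxx' hyy'
      have e2 := hev k (f x) (f x') (f y) (f y') (by rw [hf x hx, hxc]) (by rw [hf x' hx', hxc'])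
        (by rw [hf y hy, hyc]) (by rw [hf y' hy', hyc'])
        ((hadj x hx x' hx' (.inl (hxc.trans hxc'.symm))).2 hxx')
        ((hadj y hy y' hy' (.inl (hyc.trans hyc'.symm))).2 hyy')
      have a1 := hadj x hx y' hy' (.inr (.inr ⟨n3, hyy'.ne.symm⟩))
      have a2 := hadj x' hx' y hy (.inr (.inl ⟨hxx'.ne.symm, n3.symm⟩))
      have a3 := hadj x' hx' y' hy' (.inr (.inl ⟨hxx'.ne.symm, n2⟩))
      rw [a1, a2, a3] at e2
      exact even_cancel e2 e1
    by_cases hsp : Splits G col k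
    · obtain ⟨y, hy, hyc⟩ := hexists k
      refine h.exists_embedsOn_of_amalgamate S.finite_toSet hx hy (hcolne hxc hyc) (sub x hx)
        (sub y hy) fun f hf hadj => ?_
      have n3 : x ≠ y := fun he => hcolne hxc hyc (congrArg colH he)
      have e1 := hH.splits k hsp x x' y hxc hxc' hyc hxx'
      have e2 := hsp (f x) (f x') (f y) (by rw [hf x hx, hxc]) (by rw [hf x' hx', hxc'])
        (by rw [hf y hy, hyc]) ((hadj x hx x' hx' (.inl (hxc.trans hxc'.symm))).2 hxx')
      have a2 := hadj x' hx' y hy (.inr (.inl ⟨hxx'.ne.symm, n3.symm⟩))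
      rw [a2] at e2
      exact e2.trans e1.symm
    · obtain ⟨g, hgc, hg⟩ := hH.classes
      have hk : HasEdge G col k := ⟨g x, g x', by rw [hgc, hxc], by rw [hgc, hxc'],
        (hg x x' (hxc.trans hxc'.symm)).2.2 hxx'⟩
      exact h.exists_embedsOn_of_infCliques hev hk
        ((h.splits_or_infCliques hk).resolve_left hsp) hH S
        fun u hu w hw huc hwc huw => hedge' ⟨u, hu, w, hw, huc, hwc, huw⟩
  · have hno : ∀ u ∈ S, ∀ w ∈ S, colH u = colH w → ¬ H.Adj u w := fun u hu w hw huw hadj =>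
      hedge ⟨colH w, u, hu, w, hw, huw, rfl, hadj⟩
    by_cases hinf : ∃ k, HasEdge G col k ∧ InfCliques G col k
    · obtain ⟨k, hk, hinf⟩ := hinf
      exact h.exists_embedsOn_of_infCliques hev hk hinf hH S
        fun u hu w hw huc hwc => hno u hu w hw (huc.trans hwc.symm)
    · have hsp : ∀ k, HasEdge G col k → Splits G col k := fun k hk =>
        (h.splits_or_infCliques hk).resolve_right fun hi => hinf ⟨k, hk, hi⟩
      obtain ⟨k, hk⟩ := hE
      refine h.exists_embedsOn_of_splits hk (hsp k hk) (fun c hc => ?_) hH S hno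
      refine Set.Subsingleton.finite fun x hx y hy => ?_
      exact h.eq_of_splits (hsp (!k) ⟨c, x, hc, hx.1, hx.2⟩) hc hx.1 hy.1 hx.2 hy.2

end BasicCUH

/-! ### Complementing the cross edges -/

theorem crossComp_adj {W : Type} {H : SimpleGraph W} {redH : W → Prop} {colH : W → Bool}
    (hc : ∀ w, redH w ↔ colH w = true) (u v : W) :
    (crossComp H redH).Adj u v ↔ (H.Adj u v ↔ colH u = colH v) := by
  have hiff : (redH u ↔ redH v) ↔ colH u = colH v := by
    rw [hc, hc]
    exact Bool.eq_iff_iff.symm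
  rw [crossComp, SimpleGraph.fromRel_adj, H.adj_comm v u, iff_comm (a := redH v), hiff]
  by_cases huv : u = v
  · simp [huv]
  · tauto

theorem crossComp_crossComp {W : Type} (H : SimpleGraph W) (redH : W → Prop) :
    crossComp (crossComp H redH) redH = H := by
  classical
  have hc : ∀ w, redH w ↔ decide (redH w) = true := by simp
  ext u v
  rw [crossComp_adj hc, crossComp_adj hc]
  tauto

theorem crossComp_induce {W : Type} (H : SimpleGraph W) (redH : W → Prop) (S : Set W) :
    crossComp (H.induce S) (fun x => redH x.1) = (crossComp H redH).induce S := by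
  classical
  ext u v
  rw [SimpleGraph.induce_adj, crossComp_adj (colH := fun w => decide (redH w)) (by simp),
    crossComp_adj (colH := fun w : S => decide (redH w.1)) (by simp), SimpleGraph.induce_adj]

theorem Admissible.crossComp {V W : Type} {G : SimpleGraph V} {col : V → Bool}
    {H : SimpleGraph W} {colH : W → Bool} {redH : W → Prop} (hc : ∀ w, redH w ↔ colH w = true)
    (hH : Admissible G col H colH) : Admissible G col (crossComp H redH) colH := by
  have same : ∀ {k u v}, colH u = k → colH v = k →
      ((_root_.crossComp H redH).Adj u v ↔ H.Adj u v) := by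
    intro k u v hu hv
    rw [crossComp_adj hc, hu, hv]
    simp
  have diff : ∀ {k u v}, colH u = k → colH v = (!k) →
      ((_root_.crossComp H redH).Adj u v ↔ ¬ H.Adj u v) := by
    intro k u v hu hv
    rw [crossComp_adj hc, hu, hv]
    simp
  refine ⟨?_, ?_, ?_⟩
  · obtain ⟨g, hgc, hg⟩ := hH.classes
    refine ⟨g, hgc, fun u w huw => ⟨(hg u w huw).1, ?_⟩⟩
    rw [same huw rfl, (hg u w huw).2]
  · intro k u v x y hu hv hx hy huv hxy
    rw [same hu hv] at huv
    rw [same hx hy] at hxy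
    have := hH.evenCross k u v x y hu hv hx hy huv hxy
    rw [diff hu hx, diff hu hy, diff hv hx, diff hv hy, not_iff_not, not_iff_not, this]
  · intro k hk u v w hu hv hw huv
    rw [same hu hv] at huv
    rw [diff hu hw, diff hv hw, hH.splits k hk u v w hu hv hw huv]

theorem EmbedsOn.admissible {V W : Type} {G : SimpleGraph V} {col : V → Bool}
    {H : SimpleGraph W} {colH : W → Bool} {f : W → V} (hf : EmbedsOn G col H colH Set.univ f)
    (hev : EvenCross G col) : Admissible G col H colH := by
  have hadj := fun u w => (hf.adj_iff u trivial w trivial).symm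
  have hcol := fun w => hf.col_eq w trivial
  refine ⟨⟨f, hcol, fun u w _ => ⟨hf.inj u trivial w trivial, (hadj u w).symm⟩⟩, ?_, ?_⟩
  · intro k u v x y hu hv hx hy huv hxy
    simp only [hadj] at huv hxy ⊢
    exact hev k _ _ _ _ (by rw [hcol, hu]) (by rw [hcol, hv]) (by rw [hcol, hx])
      (by rw [hcol, hy]) huv hxy
  · intro k hk u v w hu hv hw huv
    simp only [hadj] at huv ⊢
    exact hk _ _ _ (by rw [hcol, hu]) (by rw [hcol, hv]) (by rw [hcol, hw]) huv

theorem realizes_iff_embedsOn {V W : Type} {G : SimpleGraph V} {col : V → Bool} {red : V → Prop}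
    {H : SimpleGraph W} {colH : W → Bool} {redH : W → Prop} (hr : ∀ v, red v ↔ col v = true)
    (hc : ∀ w, redH w ↔ colH w = true) :
    Realizes G red H redH ↔ ∃ f, EmbedsOn G col H colH Set.univ f := by
  refine exists_congr fun f => ⟨fun ⟨h1, h2, h3⟩ => ⟨fun w _ => ?_, fun u _ w _ he => h1 he,
    fun u _ w _ => h3 u w⟩, fun hf => ⟨fun u w he => hf.inj u trivial w trivial he, fun w => ?_,
    fun u w => hf.adj_iff u trivial w trivial⟩⟩
  · have := h2 w
    rw [hr, hc] at this
    exact Bool.eq_iff_iff.2 this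
  · rw [hr, hc, hf.col_eq w trivial]

/-- Back-and-forth construction of a bijection of a countable type. -/
theorem exists_equiv_of_back_forth {V : Type} [Countable V] (C : V × V → V × V → Prop)
    (hC : ∀ x y, C x y → (x.1 = y.1 ↔ x.2 = y.2))
    (forth : ∀ p : Finset (V × V), (∀ x ∈ p, ∀ y ∈ p, C x y) → ∀ v, ∃ q : Finset (V × V),
      p ⊆ q ∧ (∀ x ∈ q, ∀ y ∈ q, C x y) ∧ ∃ w, (v, w) ∈ q)
    (back : ∀ p : Finset (V × V), (∀ x ∈ p, ∀ y ∈ p, C x y) → ∀ w, ∃ q : Finset (V × V),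
      p ⊆ q ∧ (∀ x ∈ q, ∀ y ∈ q, C x y) ∧ ∃ v, (v, w) ∈ q) :
    ∃ e : V ≃ V, ∀ a b, C (a, e a) (b, e b) := by
  classical
  let P := {p : Finset (V × V) // ∀ x ∈ p, ∀ y ∈ p, C x y}
  have := Encodable.ofCountable V
  let D : V ⊕ V → Order.Cofinal P := Sum.elim
    (fun v =>
      { carrier := {p | ∃ w, (v, w) ∈ p.1}
        isCofinal := fun p => by
          obtain ⟨q, hpq, hq, hw⟩ := forth p.1 p.2 v
          exact ⟨⟨q, hq⟩, hw, hpq⟩ })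
    (fun w =>
      { carrier := {p | ∃ v, (v, w) ∈ p.1}
        isCofinal := fun p => by
          obtain ⟨q, hpq, hq, hv⟩ := back p.1 p.2 w
          exact ⟨⟨q, hq⟩, hv, hpq⟩ })
  let I : Order.Ideal P := Order.idealOfCofinals ⟨∅, by simp⟩ D
  have compat : ∀ p ∈ I, ∀ q ∈ I, ∀ x ∈ p.1, ∀ y ∈ q.1, C x y := by
    intro p hp q hq x hx y hy
    obtain ⟨r, -, hpr, hqr⟩ := I.directed p hp q hq
    exact r.2 x (hpr hx) y (hqr hy)
  have hf : ∀ v, ∃ w, ∃ p ∈ I, (v, w) ∈ p.1 := by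
    intro v
    obtain ⟨p, ⟨w, hw⟩, hp⟩ := Order.cofinal_meets_idealOfCofinals ⟨∅, by simp⟩ D (.inl v)
    exact ⟨w, p, hp, hw⟩
  have hb : ∀ w, ∃ v, ∃ p ∈ I, (v, w) ∈ p.1 := by
    intro w
    obtain ⟨p, ⟨v, hv⟩, hp⟩ := Order.cofinal_meets_idealOfCofinals ⟨∅, by simp⟩ D (.inr w)
    exact ⟨v, p, hp, hv⟩
  choose f p hp hfp using hf
  choose g q hq hgq using hb
  refine ⟨⟨f, g, fun v => ?_, fun w => ?_⟩, fun a b => ?_⟩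
  · exact (hC _ _ (compat _ (hq (f v)) _ (hp v) _ (hgq (f v)) _ (hfp v))).2 rfl
  · exact (hC _ _ (compat _ (hp (g w)) _ (hq w) _ (hfp (g w)) _ (hgq w))).1 rfl
  · exact compat _ (hp a) _ (hp b) _ (hfp a) _ (hfp b)

namespace BasicCUH

variable {V W : Type} {G : SimpleGraph V} {col : V → Bool} {H : SimpleGraph W} {colH : W → Bool}
  {red : V → Prop} {redH : W → Prop}

theorem realizes_iff_admissible [Finite W] (h : BasicCUH G col) (hE : ∃ k, HasEdge G col k)
    (hev : EvenCross G col) (hr : ∀ v, red v ↔ col v = true) (hc : ∀ w, redH w ↔ colH w = true) :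
    Realizes G red H redH ↔ Admissible G col H colH := by
  have := Fintype.ofFinite W
  rw [realizes_iff_embedsOn hr hc]
  refine ⟨fun ⟨f, hf⟩ => hf.admissible hev, fun hH => ?_⟩
  simpa using h.exists_embedsOn hE hev hH Finset.univ

theorem realizes_crossComp_iff [Finite W] (h : BasicCUH G col) (hE : ∃ k, HasEdge G col k)
    (hev : EvenCross G col) (hr : ∀ v, red v ↔ col v = true) :
    Realizes G red (crossComp H redH) redH ↔ Realizes G red H redH := by
  classical
  have hc : ∀ w, redH w ↔ decide (redH w) = true := by simp
  rw [h.realizes_iff_admissible hE hev hr hc, h.realizes_iff_admissible hE hev hr hc]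
  refine ⟨fun hH => ?_, fun hH => hH.crossComp hc⟩
  have := hH.crossComp hc
  rwa [crossComp_crossComp] at this

theorem minOmitted_crossComp_iff [Finite W] (h : BasicCUH G col) (hE : ∃ k, HasEdge G col k)
    (hev : EvenCross G col) (hr : ∀ v, red v ↔ col v = true) :
    MinOmitted G red (crossComp H redH) redH ↔ MinOmitted G red H redH := by
  simp only [MinOmitted, h.realizes_crossComp_iff hE hev hr, ← crossComp_induce]

theorem coloredIso_crossComp (h : BasicCUH G col) (hE : ∃ k, HasEdge G col k)
    (hev : EvenCross G col) (hr : ∀ v, red v ↔ col v = true) :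
    ColoredIso G red (crossComp G red) red := by
  classical
  have := h.countable
  let C : V × V → V × V → Prop := fun x y => col x.2 = col x.1 ∧ col y.2 = col y.1 ∧
    (x.1 = y.1 ↔ x.2 = y.2) ∧ (G.Adj x.1 y.1 ↔ (G.Adj x.2 y.2 ↔ col x.2 = col y.2))
  have hsymm : ∀ x y, C x y → C y x := by
    rintro x y ⟨h1, h2, h3, h4⟩
    refine ⟨h2, h1, ?_, ?_⟩
    · rw [eq_comm, h3, eq_comm]
    · rw [G.adj_comm, h4, G.adj_comm, eq_comm (a := col x.2)]
  have hswap : ∀ x y, C x y → C x.swap y.swap := by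
    rintro x y ⟨h1, h2, h3, h4⟩
    refine ⟨h1.symm, h2.symm, h3.symm, ?_⟩
    rw [h1, h2] at h4
    simp only [Prod.fst_swap, Prod.snd_swap]
    tauto
  have hadm : Admissible G col (crossComp G red) col :=
    Admissible.crossComp hr (EmbedsOn.admissible (f := id)
      ⟨fun _ _ => rfl, fun _ _ _ _ he => he, fun _ _ _ _ => Iff.rfl⟩ hev)
  have forth : ∀ p : Finset (V × V), (∀ x ∈ p, ∀ y ∈ p, C x y) → ∀ v, ∃ q : Finset (V × V),
      p ⊆ q ∧ (∀ x ∈ q, ∀ y ∈ q, C x y) ∧ ∃ w, (v, w) ∈ q := by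
    intro p hp v
    obtain ⟨f, hf⟩ := h.exists_embedsOn hE hev hadm (insert v (p.image Prod.fst))
    have hv : v ∈ ((insert v (p.image Prod.fst) : Finset V) : Set V) := by simp
    have hm : ∀ x ∈ p, x.1 ∈ ((insert v (p.image Prod.fst) : Finset V) : Set V) := by
      intro x hx
      simp only [Finset.coe_insert, Set.mem_insert_iff, Finset.mem_coe]
      exact .inr (Finset.mem_image_of_mem _ hx)
    obtain ⟨ψ, hψc, hψ⟩ := h.extend ((fun x : V × V => (f x.1, x.2)) '' p)
      (p.finite_toSet.image _)
      (by
        rintro _ ⟨x, hx, rfl⟩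
        rw [hf.col_eq _ (hm x hx), (hp x hx x hx).1])
      (by
        rintro _ ⟨x, hx, rfl⟩ _ ⟨y, hy, rfl⟩
        obtain ⟨h1, h2, h3, h4⟩ := hp x hx y hy
        refine ⟨⟨fun he => h3.1 (hf.inj _ (hm x hx) _ (hm y hy) he), fun he => ?_⟩, ?_⟩
        · exact congrArg f (h3.2 he)
        · rw [hf.adj_iff _ (hm x hx) _ (hm y hy), crossComp_adj hr, h4, h1, h2]
          tauto)
    have hcol : col (ψ (f v)) = col v := by rw [hψc, hf.col_eq v hv]
    have hnew : ∀ x ∈ p, C (v, ψ (f v)) x := by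
      intro x hx
      have hx2 : ψ (f x.1) = x.2 := hψ (f x.1, x.2) ⟨x, hx, rfl⟩
      have hx1 := (hp x hx x hx).1
      refine ⟨hcol, hx1, ⟨fun he => ?_, fun he => ?_⟩, ?_⟩
      · rw [← hx2, ← he]
      · exact hf.inj _ hv _ (hm x hx) (ψ.injective (he.trans hx2.symm))
      · simp only [hcol, hx1]
        rw [← hx2, ψ.map_adj_iff, hf.adj_iff _ hv _ (hm x hx), crossComp_adj hr]
        tauto
    refine ⟨insert (v, ψ (f v)) p, Finset.subset_insert _ _, ?_, ψ (f v),
      Finset.mem_insert_self _ _⟩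
    intro x hx y hy
    rcases Finset.mem_insert.1 hx with rfl | hxp <;> rcases Finset.mem_insert.1 hy with rfl | hyp
    · exact ⟨hcol, hcol, by simp, by simp⟩
    · exact hnew y hyp
    · exact hsymm _ _ (hnew x hxp)
    · exact hp x hxp y hyp
  obtain ⟨e, he⟩ := exists_equiv_of_back_forth C (fun x y hxy => hxy.2.2.1) forth (by
    intro p hp w
    obtain ⟨q, hpq, hq, v, hv⟩ := forth (p.image Prod.swap) (by
      intro x hx y hy
      obtain ⟨x, hxp, rfl⟩ := Finset.mem_image.1 hx
      obtain ⟨y, hyp, rfl⟩ := Finset.mem_image.1 hy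
      exact hswap x y (hp x hxp y hyp)) w
    refine ⟨q.image Prod.swap, fun x hx => ?_, ?_, v, ?_⟩
    · exact Finset.mem_image.2 ⟨x.swap, hpq (Finset.mem_image_of_mem _ hx), by simp⟩
    · intro x hx y hy
      obtain ⟨x, hxp, rfl⟩ := Finset.mem_image.1 hx
      obtain ⟨y, hyp, rfl⟩ := Finset.mem_image.1 hy
      exact hswap x y (hq x hxp y hyp)
    · exact Finset.mem_image.2 ⟨(w, v), hv, rfl⟩)
  refine ⟨⟨e, fun {a b} => ?_⟩, fun v => ?_⟩
  · rw [crossComp_adj hr, (he a b).2.2.2]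
  · have : col (e v) = col v := (he v v).1
    change red v ↔ red (e v)
    rw [hr, hr, this]

end BasicCUH

/-! ### Minimally omitted subgraphs -/

theorem crossComp_Tr : crossComp Tr TrRed = TrTilde := by
  ext u v
  fin_cases u <;> fin_cases v <;> simp [crossComp, Tr, TrRed, TrTilde]

theorem crossComp_Tb : crossComp Tb TbRed = TbTilde := by
  ext u v
  fin_cases u <;> fin_cases v <;> simp [crossComp, Tb, TbRed, TbTilde]

theorem crossComp_Dgraph : crossComp Dgraph Dred = Dtilde := by
  ext u v
  fin_cases u <;> fin_cases v <;> simp [crossComp, Dgraph, Dred, Dtilde]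

theorem Realizes.trans {U V W : Type} {F : SimpleGraph U} {G : SimpleGraph V} {H : SimpleGraph W}
    {redF : U → Prop} {redG : V → Prop} {redH : W → Prop} (hFG : Realizes F redF G redG)
    (hGH : Realizes G redG H redH) : Realizes F redF H redH := by
  obtain ⟨f, hf1, hf2, hf3⟩ := hFG
  obtain ⟨g, hg1, hg2, hg3⟩ := hGH
  exact ⟨f ∘ g, hf1.comp hg1, fun w => (hf2 _).trans (hg2 w), fun u w => (hf3 _ _).trans (hg3 u w)⟩

theorem MinOmitted.coloredIso {U V W : Type} {G : SimpleGraph V} {H : SimpleGraph W}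
    {K : SimpleGraph U} {red : V → Prop} {redH : W → Prop} {redK : U → Prop}
    (hH : MinOmitted G red H redH) (hK : ¬ Realizes G red K redK)
    (hHK : Realizes H redH K redK) : ColoredIso H redH K redK := by
  obtain ⟨f, hf1, hf2, hf3⟩ := hHK
  have hsurj : Function.Surjective f := by
    rw [← Set.range_eq_univ]
    by_contra hne
    refine hK ((hH.2 _ hne).trans ⟨fun u => ⟨f u, u, rfl⟩, fun u w he => ?_, hf2, hf3⟩)
    exact hf1 (congrArg Subtype.val he)
  let e : K ≃g H := ⟨Equiv.ofBijective f ⟨hf1, hsurj⟩, fun {a b} => hf3 a b⟩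
  refine ⟨e.symm, fun w => ?_⟩
  obtain ⟨u, rfl⟩ := hsurj w
  rw [hf2, show e.symm (f u) = u from e.symm_apply_apply u]

section Patterns

variable {W : Type} {H : SimpleGraph W} {redH : W → Prop}

theorem realizes_of_lt {n : ℕ} {K : SimpleGraph (Fin n)} {redK : Fin n → Prop} (f : Fin n → W)
    (hf : ∀ i, redH (f i) ↔ redK i)
    (hlt : ∀ i j, i < j → f i ≠ f j ∧ (H.Adj (f i) (f j) ↔ K.Adj i j)) :
    Realizes H redH K redK := by
  refine ⟨f, fun i j he => ?_, hf, fun i j => ?_⟩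
  · by_contra hne
    rcases lt_or_gt_of_ne hne with hij | hij
    exacts [(hlt _ _ hij).1 he, (hlt _ _ hij).1 he.symm]
  · rcases lt_trichotomy i j with hij | rfl | hij
    · exact (hlt _ _ hij).2
    · simp
    · rw [H.adj_comm, K.adj_comm, (hlt _ _ hij).2]

theorem ne_of_red {u w : W} (hu : redH u) (hw : ¬ redH w) : u ≠ w := by
  rintro rfl
  exact hw hu

theorem realizes_Tr {u v w : W} (hu : redH u) (hv : redH v) (hw : ¬ redH w) (huv : H.Adj u v)
    (huw : H.Adj u w) (hvw : H.Adj v w) : Realizes H redH Tr TrRed := by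
  refine realizes_of_lt ![u, v, w] ?_ ?_ <;>
    simp [Fin.forall_fin_succ, Tr, TrRed, hu, hv, hw, huv, huw, hvw, huv.ne, huw.ne, hvw.ne]

theorem realizes_TrTilde {u v w : W} (hu : redH u) (hv : redH v) (hw : ¬ redH w)
    (huv : H.Adj u v) (huw : ¬ H.Adj u w) (hvw : ¬ H.Adj v w) :
    Realizes H redH TrTilde TrRed := by
  refine realizes_of_lt ![u, v, w] ?_ ?_ <;>
    simp [Fin.forall_fin_succ, TrTilde, TrRed, hu, hv, hw, huv, huw, hvw, huv.ne,
      ne_of_red hu hw, ne_of_red hv hw]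

theorem realizes_Tb {u v w : W} (hu : ¬ redH u) (hv : ¬ redH v) (hw : redH w) (huv : H.Adj u v)
    (hwu : H.Adj w u) (hwv : H.Adj w v) : Realizes H redH Tb TbRed := by
  refine realizes_of_lt ![w, u, v] ?_ ?_ <;>
    simp [Fin.forall_fin_succ, Tb, TbRed, hu, hv, hw, huv, hwu, hwv, huv.ne, hwu.ne, hwv.ne]

theorem realizes_TbTilde {u v w : W} (hu : ¬ redH u) (hv : ¬ redH v) (hw : redH w)
    (huv : H.Adj u v) (hwu : ¬ H.Adj w u) (hwv : ¬ H.Adj w v) :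
    Realizes H redH TbTilde TbRed := by
  refine realizes_of_lt ![w, u, v] ?_ ?_ <;>
    simp [Fin.forall_fin_succ, TbTilde, TbRed, hu, hv, hw, huv, hwu, hwv, huv.ne,
      ne_of_red hw hu, ne_of_red hw hv]

theorem realizes_Dgraph {u v x y : W} (hu : redH u) (hv : redH v) (hx : ¬ redH x)
    (hy : ¬ redH y) (huv : H.Adj u v) (hxy : H.Adj x y) (hux : H.Adj u x) (huy : H.Adj u y)
    (hvx : H.Adj v x) (hvy : ¬ H.Adj v y) : Realizes H redH Dgraph Dred := by
  refine realizes_of_lt ![u, v, x, y] ?_ ?_ <;>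
    simp [Fin.forall_fin_succ, Dgraph, Dred, hu, hv, hx, hy, huv, hxy, hux, huy, hvx, hvy, huv.ne,
      hxy.ne, hux.ne, huy.ne, hvx.ne, ne_of_red hv hy]

theorem realizes_Dtilde {u v x y : W} (hu : redH u) (hv : redH v) (hx : ¬ redH x)
    (hy : ¬ redH y) (huv : H.Adj u v) (hxy : H.Adj x y) (hux : ¬ H.Adj u x) (huy : ¬ H.Adj u y)
    (hvx : ¬ H.Adj v x) (hvy : H.Adj v y) : Realizes H redH Dtilde Dred := by
  refine realizes_of_lt ![u, v, x, y] ?_ ?_ <;>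
    simp [Fin.forall_fin_succ, Dtilde, Dred, hu, hv, hx, hy, huv, hxy, hux, huy, hvx, hvy, huv.ne,
      hxy.ne, hvy.ne, ne_of_red hu hx, ne_of_red hu hy, ne_of_red hv hx]

theorem realizes_Dgraph_or_Dtilde {u v x y : W} (hu : redH u) (hv : redH v) (hx : ¬ redH x)
    (hy : ¬ redH y) (huv : H.Adj u v) (hxy : H.Adj x y)
    (hodd : ¬ ((H.Adj u x ↔ H.Adj u y) ↔ (H.Adj v x ↔ H.Adj v y))) :
    Realizes H redH Dgraph Dred ∨ Realizes H redH Dtilde Dred := by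
  have d1 := realizes_Dgraph hu hv hx hy huv hxy
  have d2 := realizes_Dgraph hu hv hy hx huv hxy.symm
  have d3 := realizes_Dgraph hv hu hx hy huv.symm hxy
  have d4 := realizes_Dgraph hv hu hy hx huv.symm hxy.symm
  have e1 := realizes_Dtilde hu hv hx hy huv hxy
  have e2 := realizes_Dtilde hu hv hy hx huv hxy.symm
  have e3 := realizes_Dtilde hv hu hx hy huv.symm hxy
  have e4 := realizes_Dtilde hv hu hy hx huv.symm hxy.symm
  by_cases a : H.Adj u x <;> by_cases b : H.Adj u y <;> by_cases c : H.Adj v x <;>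
    by_cases d : H.Adj v y <;> simp_all

variable {colH : W → Bool}

theorem not_evenCross_of_realizes (hc : ∀ w, redH w ↔ colH w = true)
    (hr : Realizes H redH Dgraph Dred ∨ Realizes H redH Dtilde Dred) : ¬ EvenCross H colH := by
  intro hev
  rcases hr with ⟨f, -, hf, ha⟩ | ⟨f, -, hf, ha⟩ <;>
  · have := hev true (f 0) (f 1) (f 2) (f 3) (by simp [← hc, hf, Dred])
      (by simp [← hc, hf, Dred]) (by simp [← Bool.not_eq_true, ← hc, hf, Dred])
      (by simp [← Bool.not_eq_true, ← hc, hf, Dred]) (by simp [ha, Dgraph, Dtilde])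
      (by simp [ha, Dgraph, Dtilde])
    simp [ha, Dgraph, Dtilde] at this

theorem realizes_of_not_evenCross (hc : ∀ w, redH w ↔ colH w = true)
    (hn : ¬ EvenCross H colH) : Realizes H redH Dgraph Dred ∨ Realizes H redH Dtilde Dred := by
  simp only [EvenCross, not_forall] at hn
  obtain ⟨k, u, v, x, y, hu, hv, hx, hy, huv, hxy, hn⟩ := hn
  cases k
  · refine realizes_Dgraph_or_Dtilde ((hc x).2 hx) ((hc y).2 hy) (by simp [hc, hu])
      (by simp [hc, hv]) hxy huv ?_
    rw [H.adj_comm x u, H.adj_comm x v, H.adj_comm y u, H.adj_comm y v]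
    tauto
  · exact realizes_Dgraph_or_Dtilde ((hc u).2 hu) ((hc v).2 hv) (by simp [hc, hx])
      (by simp [hc, hy]) huv hxy hn

theorem not_splits_true_of_realizes (hc : ∀ w, redH w ↔ colH w = true)
    (hr : Realizes H redH Tr TrRed ∨ Realizes H redH TrTilde TrRed) : ¬ Splits H colH true := by
  intro hs
  rcases hr with ⟨f, -, hf, ha⟩ | ⟨f, -, hf, ha⟩ <;>
  · have := hs (f 0) (f 1) (f 2) (by simp [← hc, hf, TrRed]) (by simp [← hc, hf, TrRed])
      (by simp [← Bool.not_eq_true, ← hc, hf, TrRed]) (by simp [ha, Tr, TrTilde])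
    simp [ha, Tr, TrTilde] at this

theorem not_splits_false_of_realizes (hc : ∀ w, redH w ↔ colH w = true)
    (hr : Realizes H redH Tb TbRed ∨ Realizes H redH TbTilde TbRed) : ¬ Splits H colH false := by
  intro hs
  rcases hr with ⟨f, -, hf, ha⟩ | ⟨f, -, hf, ha⟩ <;>
  · have := hs (f 1) (f 2) (f 0) (by simp [← Bool.not_eq_true, ← hc, hf, TbRed])
      (by simp [← Bool.not_eq_true, ← hc, hf, TbRed]) (by simp [← hc, hf, TbRed])
      (by simp [ha, Tb, TbTilde])
    simp [ha, Tb, TbTilde] at this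

theorem realizes_of_not_splits_true (hc : ∀ w, redH w ↔ colH w = true)
    (hn : ¬ Splits H colH true) : Realizes H redH Tr TrRed ∨ Realizes H redH TrTilde TrRed := by
  simp only [Splits, not_forall] at hn
  obtain ⟨u, v, w, hu, hv, hw, huv, hn⟩ := hn
  have d := realizes_Tr (w := w) ((hc u).2 hu) ((hc v).2 hv) (by simp [hc, hw]) huv
  have e := realizes_TrTilde (w := w) ((hc u).2 hu) ((hc v).2 hv) (by simp [hc, hw]) huv
  clear hc
  tauto

theorem realizes_of_not_splits_false (hc : ∀ w, redH w ↔ colH w = true)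
    (hn : ¬ Splits H colH false) : Realizes H redH Tb TbRed ∨ Realizes H redH TbTilde TbRed := by
  simp only [Splits, not_forall] at hn
  obtain ⟨u, v, w, hu, hv, hw, huv, hn⟩ := hn
  have d := realizes_Tb (w := w) (by simp [hc, hu]) (by simp [hc, hv]) ((hc w).2 hw) huv
  have e := realizes_TbTilde (w := w) (by simp [hc, hu]) (by simp [hc, hv]) ((hc w).2 hw) huv
  rw [H.adj_comm u w, H.adj_comm v w] at hn
  clear hc
  tauto

end Patterns

theorem MinOmitted.exists_classes {V W : Type} {G : SimpleGraph V} {H : SimpleGraph W}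
    {red : V → Prop} {redH : W → Prop} {col : V → Bool} {colH : W → Bool}
    (hr : ∀ v, red v ↔ col v = true) (hc : ∀ w, redH w ↔ colH w = true)
    (hH : MinOmitted G red H redH) (hred : ∃ w, redH w) (hblue : ∃ w, ¬ redH w) :
    ∃ g : W → V, (∀ w, col (g w) = colH w) ∧
      ∀ u w, colH u = colH w → (g u = g w → u = w) ∧ (G.Adj (g u) (g w) ↔ H.Adj u w) := by
  have hk : ∀ k, ∃ f : {w | colH w = k} → V, Function.Injective f ∧ (∀ w, col (f w) = k) ∧
      ∀ u w, G.Adj (f u) (f w) ↔ H.Adj u.1 w.1 := by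
    intro k
    obtain ⟨f, hf1, hf2, hf3⟩ := hH.2 {w | colH w = k} (by
      obtain ⟨w, hw⟩ := hred
      obtain ⟨b, hb⟩ := hblue
      rw [hc] at hw hb
      intro he
      have hw' := Set.eq_univ_iff_forall.1 he w
      have hb' := Set.eq_univ_iff_forall.1 he b
      simp only [Set.mem_ofPred_eq] at hw' hb'
      exact hb (hb'.trans (hw'.symm.trans hw)))
    refine ⟨f, hf1, fun w => ?_, hf3⟩
    have : red (f w) ↔ redH w.1 := hf2 w
    rw [hr, hc, show colH w.1 = k from w.2] at this
    exact Bool.eq_iff_iff.2 this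
  choose f hf1 hf2 hf3 using hk
  refine ⟨fun w => f (colH w) ⟨w, rfl⟩, fun w => hf2 _ _, fun u w huw => ?_⟩
  have hu : ∀ k (hk : colH u = k), f (colH u) ⟨u, rfl⟩ = f k ⟨u, hk⟩ := by
    rintro _ rfl
    rfl
  dsimp only
  rw [hu _ huw, hf3]
  exact ⟨fun he => congrArg Subtype.val (hf1 _ he), Iff.rfl⟩

namespace BasicCUH

variable {V W : Type} {G : SimpleGraph V} {col : V → Bool} {H : SimpleGraph W}
  {red : V → Prop} {redH : W → Prop}

theorem coloredIso_of_minOmitted [Finite W] (h : BasicCUH G col) (hE : ∃ k, HasEdge G col k)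
    (hev : EvenCross G col) (hr : ∀ v, red v ↔ col v = true) (hH : MinOmitted G red H redH)
    (hred : ∃ w, redH w) (hblue : ∃ w, ¬ redH w) :
    ColoredIso H redH Tr TrRed ∨ ColoredIso H redH TrTilde TrRed ∨
      ColoredIso H redH Tb TbRed ∨ ColoredIso H redH TbTilde TbRed ∨
      ColoredIso H redH Dgraph Dred ∨ ColoredIso H redH Dtilde Dred := by
  classical
  have hc : ∀ w, redH w ↔ decide (redH w) = true := by simp
  by_cases hHev : EvenCross H fun w => decide (redH w)
  · obtain ⟨k, hk, hn⟩ : ∃ k, Splits G col k ∧ ¬ Splits H (fun w => decide (redH w)) k := by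
      by_contra! hs
      exact hH.1 ((h.realizes_iff_admissible hE hev hr hc).2
        ⟨hH.exists_classes hr hc hred hblue, hHev, hs⟩)
    cases k
    · have hom : ¬ (Realizes G red Tb TbRed ∨ Realizes G red TbTilde TbRed) :=
        fun hT => not_splits_false_of_realizes hr hT hk
      rw [not_or] at hom
      rcases realizes_of_not_splits_false hc hn with hT | hT
      · exact .inr (.inr (.inl (hH.coloredIso hom.1 hT)))
      · exact .inr (.inr (.inr (.inl (hH.coloredIso hom.2 hT))))
    · have hom : ¬ (Realizes G red Tr TrRed ∨ Realizes G red TrTilde TrRed) :=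
        fun hT => not_splits_true_of_realizes hr hT hk
      rw [not_or] at hom
      rcases realizes_of_not_splits_true hc hn with hT | hT
      · exact .inl (hH.coloredIso hom.1 hT)
      · exact .inr (.inl (hH.coloredIso hom.2 hT))
  · have hom : ¬ (Realizes G red Dgraph Dred ∨ Realizes G red Dtilde Dred) :=
      fun hD => not_evenCross_of_realizes hr hD hev
    rw [not_or] at hom
    rcases realizes_of_not_evenCross hc hHev with hD | hD
    · exact .inr (.inr (.inr (.inr (.inl (hH.coloredIso hom.1 hD)))))
    · exact .inr (.inr (.inr (.inr (.inr (hH.coloredIso hom.2 hD)))))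

theorem of_isBasicCUH (hG : IsBasicCUH G red) (hr : ∀ v, red v ↔ col v = true) :
    BasicCUH G col := by
  obtain ⟨⟨hcount, hinf, huh, hR, hB⟩, hblow, hnr, hnb⟩ := hG
  have hr' : ∀ v, ¬ red v ↔ col v = false := by simp [hr]
  rw [IsBlowUp, not_or] at hblow
  refine ⟨hcount, hinf, fun p hp hcol hadj => ?_, fun u v w huv hvw a b c => ?_, ?_, ?_⟩
  · have hf : ∀ v, ∃ w, v ∈ Prod.fst '' p → (v, w) ∈ p := by
      intro v
      by_cases hv : v ∈ Prod.fst '' p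
      · obtain ⟨x, hx, rfl⟩ := hv
        exact ⟨x.2, fun _ => hx⟩
      · exact ⟨v, fun hv' => absurd hv' hv⟩
    choose f hf using hf
    obtain ⟨ψ, h1, h2⟩ := huh (Prod.fst '' p) (hp.image _) f
      ⟨fun u hu v hv he => (hadj _ (hf u hu) _ (hf v hv)).1.2 he,
        fun v hv => by rw [hr, hr, hcol _ (hf v hv)],
        fun u hu v hv => (hadj _ (hf u hu) _ (hf v hv)).2.symm⟩
    refine ⟨ψ, fun v => Bool.eq_iff_iff.2 (by rw [← hr, ← hr, h1]), fun x hx => ?_⟩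
    have hx1 : x.1 ∈ Prod.fst '' p := ⟨x, hx, rfl⟩
    rw [h2 _ hx1]
    exact (hadj _ (hf _ hx1) _ hx).1.1 rfl
  · by_cases hu : red u
    · have hv : red v := by rwa [hr, ← huv, ← hr]
      exact hR u hu v hv w (by rwa [Set.mem_ofPred_eq, hr, ← hvw, ← hr]) a b c
    · have hv : ¬ red v := by rwa [hr, ← huv, ← hr]
      exact hB u hu v hv w (by rwa [Set.mem_ofPred_eq, hr, ← hvw, ← hr]) a b c
  · rintro (_ | _)
    · simpa only [hr'] using hblow.2
    · rw [← funext fun v => propext (hr v)]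
      exact hblow.1
  · rintro (_ | _)
    · simpa only [hr'] using hnb
    · simpa only [hr] using hnr

theorem evenCross (h : BasicCUH G col) (hr : ∀ v, red v ↔ col v = true)
    (hOm : ¬ Realizes G red Dgraph Dred ∨ ¬ Realizes G red Dtilde Dred) : EvenCross G col := by
  have hb : ∀ {v}, col v = false → ¬ red v := by simp [hr]
  rcases hOm with hOm | hOm
  · refine h.evenCross_of_omits True fun k u v x y hu hv hx hy huv hxy a b c => ?_
    simp only [iff_true] at a b c ⊢
    by_contra d
    cases k
    · exact hOm (realizes_Dgraph ((hr x).2 hx) ((hr y).2 hy) (hb hu) (hb hv) hxy huv a.symm c.symm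
        b.symm fun hd => d hd.symm)
    · exact hOm (realizes_Dgraph ((hr u).2 hu) ((hr v).2 hv) (hb hx) (hb hy) huv hxy a b c d)
  · refine h.evenCross_of_omits False fun k u v x y hu hv hx hy huv hxy a b c => ?_
    simp only [iff_false] at a b c ⊢
    intro d
    cases k
    · exact hOm (realizes_Dtilde ((hr x).2 hx) ((hr y).2 hy) (hb hu) (hb hv) hxy huv
        (fun ha => a ha.symm) (fun hc => c hc.symm) (fun hb => b hb.symm) d.symm)
    · exact hOm (realizes_Dtilde ((hr u).2 hu) ((hr v).2 hv) (hb hx) (hb hy) huv hxy a b c d)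

end BasicCUH

/-- a basic CUH graph omitting `D` or `D̃`, with a non-independent color
class: (1) every non-monochromatic minimally omitted subgraph is one of the six graphs
`T_r, T̃_r, T_b, T̃_b, D, D̃`; (2) each of these is minimally omitted iff its cross-edge
complement is; (3) `G` is isomorphic to its cross-edge complement. -/
theorem stmt_16 {V : Type} (G : SimpleGraph V) (red : V → Prop)
    (hG : IsBasicCUH G red)
    (hOm : ¬ Realizes G red Dgraph Dred ∨ ¬ Realizes G red Dtilde Dred)
    (hni : (∃ u v, red u ∧ red v ∧ G.Adj u v) ∨ (∃ u v, ¬ red u ∧ ¬ red v ∧ G.Adj u v)) :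
    (∀ (W : Type) (H : SimpleGraph W) (redH : W → Prop), Finite W →
      MinOmitted G red H redH → (∃ w, redH w) → (∃ w, ¬ redH w) →
      (ColoredIso H redH Tr TrRed ∨ ColoredIso H redH TrTilde TrRed ∨
       ColoredIso H redH Tb TbRed ∨ ColoredIso H redH TbTilde TbRed ∨
       ColoredIso H redH Dgraph Dred ∨ ColoredIso H redH Dtilde Dred)) ∧
    ((MinOmitted G red Tr TrRed ↔ MinOmitted G red TrTilde TrRed) ∧
     (MinOmitted G red Tb TbRed ↔ MinOmitted G red TbTilde TbRed) ∧
     (MinOmitted G red Dgraph Dred ↔ MinOmitted G red Dtilde Dred)) ∧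
    ColoredIso G red (crossComp G red) red := by
  classical
  have hr : ∀ v, red v ↔ decide (red v) = true := by simp
  have h := BasicCUH.of_isBasicCUH hG hr
  have hev := h.evenCross hr hOm
  have hE : ∃ k, HasEdge G (fun v => decide (red v)) k := by
    rcases hni with ⟨u, v, hu, hv, huv⟩ | ⟨u, v, hu, hv, huv⟩
    · exact ⟨true, u, v, by simpa using hu, by simpa using hv, huv⟩
    · exact ⟨false, u, v, by simpa using hu, by simpa using hv, huv⟩
  refine ⟨fun W H redH _ hH hred hblue => h.coloredIso_of_minOmitted hE hev hr hH hred hblue,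
    ⟨?_, ?_, ?_⟩, h.coloredIso_crossComp hE hev hr⟩
  · rw [← crossComp_Tr, h.minOmitted_crossComp_iff hE hev hr]
  · rw [← crossComp_Tb, h.minOmitted_crossComp_iff hE hev hr]
  · rw [← crossComp_Dgraph, h.minOmitted_crossComp_iff hE hev hr]
end
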